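/- Logarithmic scaling of the block entropy of the critical XX chain (Jin–Korepin): For each n ≥ 1 let T_n be the real symmetric n×n Toeplitz matrix with entries (T_n)_{jk} = (2/(π(j−k)))·sin(π(j−k)/2) for j ≠ k and (T_n)_{jj} = 0. All eigenvalues λ₁(T_n), …, λ_n(T_n) lie in [−1, 1], and there exists a constant C > 0 such that for all n ≥ 2, |∑_{k=1}^{n} f(λ_k(T_n)) − (1/3)·log₂ n| ≤ C. The quantity S_n = ∑_k f(λ_k(T_n)) is the entanglement entropy (in bits) of a block of n contiguous spins in the ground state of the infinite critical XX spin chain, so S_n = (1/3)log₂ n + O(1). -/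

import Mathlib

open scoped BigOperators
open Matrix

/-- The fermionic entropy function
`f(x) = −((1−x)/2)·log₂((1−x)/2) − ((1+x)/2)·log₂((1+x)/2)` (convention `0·log₂0 = 0`). -/
noncomputable def fermiEntropy (x : ℝ) : ℝ :=
  -((1 - x) / 2 * Real.logb 2 ((1 - x) / 2)) - (1 + x) / 2 * Real.logb 2 ((1 + x) / 2)

/-- The `n×n` Toeplitz ground-state covariance matrix of a block of `n` sites of the
half-filled critical XX chain: `(T_n)_{jk} = (2/(π(j−k)))·sin(π(j−k)/2)` for `j ≠ k`,
and `0` on the diagonal. -/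
noncomputable def xxToeplitz (n : ℕ) : Matrix (Fin n) (Fin n) ℝ :=
  Matrix.of fun j k =>
    if j = k then 0
    else (2 / (Real.pi * ((j : ℝ) - (k : ℝ)))) * Real.sin (Real.pi * ((j : ℝ) - (k : ℝ)) / 2)

namespace XXAux

/-- Spectral data of a real symmetric matrix. -/
structure SD {ι : Type*} [Fintype ι] [DecidableEq ι] (X : Matrix ι ι ℝ) (x : ι → ℝ)
    (e : ι → ι → ℝ) : Prop where
  orth : ∀ i j, ∑ a, e i a * e j a = if i = j then 1 else 0
  comp : ∀ a b, ∑ i, e i a * e i b = if a = b then 1 else 0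
  eq : ∀ a b, X a b = ∑ i, x i * (e i a * e i b)

/-- Quadratic form. -/
def qf {ι : Type*} [Fintype ι] (X : Matrix ι ι ℝ) (v : ι → ℝ) : ℝ :=
  ∑ a, ∑ b, v a * v b * X a b

/-- Supergradient property: an abstract form of `F` concave, nondecreasing with `F 0 = 0`. -/
structure Sup (F : ℝ → ℝ) : Prop where
  zero : F 0 = 0
  tan : ∀ x, 0 < x → ∃ m, 0 ≤ m ∧ ∀ z, 0 ≤ z → F z ≤ F x + m * (z - x)

theorem Sup.mono {F : ℝ → ℝ} (hF : Sup F) {x y : ℝ} (hx : 0 ≤ x) (hxy : x ≤ y) : F x ≤ F y := by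
  rcases eq_or_lt_of_le (hx.trans hxy) with h | h
  · have : x = y := by linarith
    rw [this]
  · obtain ⟨m, hm, ht⟩ := hF.tan y h
    have := ht x hx
    nlinarith

theorem Sup.nonneg {F : ℝ → ℝ} (hF : Sup F) {x : ℝ} (hx : 0 ≤ x) : 0 ≤ F x := by
  have := hF.mono le_rfl hx
  rwa [hF.zero] at this

theorem Sup.jensen {F : ℝ → ℝ} (hF : Sup F) {ι : Type*} [Fintype ι] (q x : ι → ℝ)
    (hq : ∀ i, 0 ≤ q i) (hx : ∀ i, 0 ≤ x i) (h1 : ∑ i, q i = 1) :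
    ∑ i, q i * F (x i) ≤ F (∑ i, q i * x i) := by
  have h0 : 0 ≤ ∑ i, q i * x i := Finset.sum_nonneg fun i _ => mul_nonneg (hq i) (hx i)
  rcases eq_or_lt_of_le h0 with h | h
  · rw [← h, hF.zero]
    have h2 := (Finset.sum_eq_zero_iff_of_nonneg
      (fun i _ => mul_nonneg (hq i) (hx i))).1 h.symm
    apply le_of_eq
    apply Finset.sum_eq_zero
    intro i hi
    rcases mul_eq_zero.1 (h2 i hi) with h3 | h3
    · simp [h3]
    · simp [h3, hF.zero]
  · obtain ⟨m, hm, ht⟩ := hF.tan _ h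
    obtain ⟨X, hX⟩ : ∃ X, X = ∑ i, q i * x i := ⟨_, rfl⟩
    rw [← hX] at ht h ⊢
    calc ∑ i, q i * F (x i) ≤ ∑ i, q i * (F X + m * (x i - X)) :=
          Finset.sum_le_sum fun i _ => mul_le_mul_of_nonneg_left (ht _ (hx i)) (hq i)
      _ = (F X - m * X) * ∑ i, q i + m * ∑ i, q i * x i := by
          rw [Finset.mul_sum, Finset.mul_sum, ← Finset.sum_add_distrib]
          exact Finset.sum_congr rfl fun i _ => by ring
      _ = F X := by rw [h1, ← hX]; ring

section
variable {ι : Type*} [Fintype ι] [DecidableEq ι]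

theorem SD.qf_eq {X : Matrix ι ι ℝ} {x : ι → ℝ} {e : ι → ι → ℝ} (h : SD X x e) (v : ι → ℝ) :
    qf X v = ∑ i, x i * (∑ a, e i a * v a) ^ 2 := by
  unfold qf
  simp_rw [h.eq, sq, Finset.sum_mul_sum, Finset.mul_sum]
  rw [Finset.sum_comm' (t' := Finset.univ) (s' := fun _ => Finset.univ) (by simp)]
  rw [Finset.sum_comm]
  simp_rw [fun a : ι => Finset.sum_comm (s := (Finset.univ : Finset ι)) (t := (Finset.univ : Finset ι)) (f := fun b i => v a * v b * (x i * (e i a * e i b)))]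
  rw [Finset.sum_comm]
  refine Finset.sum_congr rfl fun i _ => Finset.sum_congr rfl fun a _ =>
    Finset.sum_congr rfl fun b _ => by ring

theorem SD.parseval {X : Matrix ι ι ℝ} {x : ι → ℝ} {e : ι → ι → ℝ} (h : SD X x e) (v : ι → ℝ) :
    ∑ i, (∑ a, e i a * v a) ^ 2 = ∑ a, v a ^ 2 := by
  have h1 : SD (1 : Matrix ι ι ℝ) (fun _ => 1) e :=
    ⟨h.orth, h.comp, fun a b => by simp [h.comp, Matrix.one_apply]⟩
  have := h1.qf_eq v
  simp only [one_mul] at this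
  rw [← this]
  unfold qf
  refine Finset.sum_congr rfl fun a _ => ?_
  simp [Matrix.one_apply, sq]

theorem SD.eig {X : Matrix ι ι ℝ} {x : ι → ℝ} {e : ι → ι → ℝ} (h : SD X x e) (j : ι) :
    qf X (e j) = x j := by
  rw [h.qf_eq]
  simp [h.orth]

theorem SD.eig_nonneg {X : Matrix ι ι ℝ} {x : ι → ℝ} {e : ι → ι → ℝ} (h : SD X x e)
    (hX : ∀ v, 0 ≤ qf X v) (j : ι) : 0 ≤ x j := by
  rw [← h.eig j]; exact hX _

theorem SD.norm {X : Matrix ι ι ℝ} {x : ι → ℝ} {e : ι → ι → ℝ} (h : SD X x e) (j : ι) :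
    ∑ a, e j a ^ 2 = 1 := by
  have := h.orth j j
  simpa [sq] using this

theorem SD.norm' {X : Matrix ι ι ℝ} {x : ι → ℝ} {e : ι → ι → ℝ} (h : SD X x e) (a : ι) :
    ∑ j, e j a ^ 2 = 1 := by
  have := h.comp a a
  simpa [sq] using this

theorem exists_SD (X : Matrix ι ι ℝ) (hX : X.IsHermitian) :
    SD X hX.eigenvalues (fun i a => hX.eigenvectorBasis i a) := by
  have hU := hX.eigenvectorUnitary.2
  rw [Matrix.mem_unitaryGroup_iff] at hU
  have hU' := hX.eigenvectorUnitary.2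
  rw [Matrix.mem_unitaryGroup_iff'] at hU'
  refine ⟨fun i j => ?_, fun a b => ?_, fun a b => ?_⟩
  · have := congrFun (congrFun hU' i) j
    simpa [Matrix.mul_apply, Matrix.one_apply, Matrix.star_apply] using this
  · have := congrFun (congrFun hU a) b
    simpa [Matrix.mul_apply, Matrix.one_apply, Matrix.star_apply] using this
  · have := congrFun (congrFun hX.spectral_theorem a) b
    rw [this]
    simp [Unitary.conjStarAlgAut_apply, Matrix.mul_apply, Matrix.diagonal_apply, Matrix.star_apply]
    refine Finset.sum_congr rfl fun i _ => by ring

/-- Peierls inequality. -/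
theorem peierls {F : ℝ → ℝ} (hF : Sup F) {Z : Matrix ι ι ℝ} {z : ι → ℝ} {u : ι → ι → ℝ}
    (h : SD Z z u) (hz : ∀ i, 0 ≤ z i) {W : Matrix ι ι ℝ} {y : ι → ℝ} {w : ι → ι → ℝ}
    (hw : SD W y w) : ∑ i, F (z i) ≤ ∑ j, F (qf Z (w j)) := by
  have key : ∀ j, ∑ i, (∑ a, u i a * w j a) ^ 2 * F (z i) ≤ F (qf Z (w j)) := by
    intro j
    have := hF.jensen (fun i => (∑ a, u i a * w j a) ^ 2) z (fun i => sq_nonneg _) hz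
      (by rw [h.parseval, hw.norm])
    rw [h.qf_eq]
    simpa [mul_comm] using this
  calc ∑ i, F (z i) = ∑ i, (∑ j, (∑ a, w j a * u i a) ^ 2) * F (z i) := by
        refine Finset.sum_congr rfl fun i _ => ?_
        rw [hw.parseval, h.norm, one_mul]
    _ = ∑ j, ∑ i, (∑ a, u i a * w j a) ^ 2 * F (z i) := by
        simp_rw [Finset.sum_mul]
        rw [Finset.sum_comm]
        simp_rw [mul_comm]
    _ ≤ _ := Finset.sum_le_sum fun j _ => key j

theorem trF_mono {F : ℝ → ℝ} (hF : Sup F) {Z : Matrix ι ι ℝ} {z : ι → ℝ} {u : ι → ι → ℝ}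
    (h : SD Z z u) (hZ : ∀ v, 0 ≤ qf Z v) {W : Matrix ι ι ℝ} {y : ι → ℝ} {w : ι → ι → ℝ}
    (hw : SD W y w) (hle : ∀ v, qf Z v ≤ qf W v) : ∑ i, F (z i) ≤ ∑ j, F (y j) := by
  refine (peierls hF h (h.eig_nonneg hZ) hw).trans (Finset.sum_le_sum fun j _ => ?_)
  rw [← hw.eig j]
  exact hF.mono (hZ _) (hle _)

theorem trF_diag {F : ℝ → ℝ} (hF : Sup F) {Z : Matrix ι ι ℝ} {z : ι → ℝ} {u : ι → ι → ℝ}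
    (h : SD Z z u) (hz : ∀ i, 0 ≤ z i) : ∑ i, F (z i) ≤ ∑ a, F (Z a a) := by
  have h1 : SD (1 : Matrix ι ι ℝ) (fun _ => 1) (fun i a => if i = a then 1 else 0) :=
    ⟨fun i j => by simp [eq_comm], fun a b => by simp; grind,
      fun a b => by simp [Matrix.one_apply]; grind⟩
  have := peierls hF h hz h1
  simpa [qf] using this

/-- Key lemma: for `0 ≤ X ≤ Z`, `tr (F(Z)/Z) X ≤ tr F(X)`. -/
theorem trF_key {F : ℝ → ℝ} (hF : Sup F) {Z : Matrix ι ι ℝ} {z : ι → ℝ} {u : ι → ι → ℝ}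
    (h : SD Z z u) {X : Matrix ι ι ℝ} {x : ι → ℝ} {e : ι → ι → ℝ} (hx : SD X x e)
    (hX : ∀ v, 0 ≤ qf X v) (hle : ∀ v, qf X v ≤ qf Z v) :
    ∑ i, F (z i) / z i * qf X (u i) ≤ ∑ k, F (x k) := by
  have hx0 := hx.eig_nonneg hX
  have hz0 := h.eig_nonneg (fun v => (hX v).trans (hle v))
  have key : ∀ k, x k * ∑ i, F (z i) / z i * (∑ a, e k a * u i a) ^ 2 ≤ F (x k) := by
    intro k
    rcases eq_or_lt_of_le (hx0 k) with hk | hk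
    · rw [← hk, hF.zero]; simp
    obtain ⟨m, hm, ht⟩ := hF.tan _ hk
    set c : ι → ℝ := fun i => ∑ a, e k a * u i a with hc
    have hc1 : ∑ i, c i ^ 2 = 1 := by
      have := h.parseval (e k)
      rw [hx.norm] at this
      simpa [hc, mul_comm] using this
    set s := ∑ i, c i ^ 2 / z i with hs
    have hs0 : 0 ≤ s := Finset.sum_nonneg fun i _ => div_nonneg (sq_nonneg _) (hz0 i)
    have hsx : x k * s ≤ 1 := by
      -- test vector
      set w : ι → ℝ := fun a => ∑ i, c i / z i * u i a with hw
      have hwi : ∀ i, ∑ a, u i a * w a = c i / z i := by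
        intro i
        simp only [hw, Finset.mul_sum]
        rw [Finset.sum_comm]
        have : ∀ j, ∑ a, u i a * (c j / z j * u j a) = c j / z j * if i = j then 1 else 0 := by
          intro j
          rw [← h.orth, Finset.mul_sum]
          exact Finset.sum_congr rfl fun a _ => by ring
        simp [this]
      have hek : ∑ a, e k a * w a = s := by
        simp only [hw, Finset.mul_sum]
        rw [Finset.sum_comm]
        refine Finset.sum_congr rfl fun i _ => ?_
        have : ∑ a, e k a * (c i / z i * u i a) = c i / z i * ∑ a, e k a * u i a := by
          rw [Finset.mul_sum]
          exact Finset.sum_congr rfl fun a _ => by ring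
        rw [this]
        show c i / z i * c i = _
        ring
      have h1 : qf Z w = s := by
        rw [h.qf_eq]
        refine Finset.sum_congr rfl fun i _ => ?_
        rw [hwi]
        rcases eq_or_ne (z i) 0 with hi | hi
        · simp [hi]
        · field_simp
      have h2 : x k * s ^ 2 ≤ qf X w := by
        rw [hx.qf_eq, ← hek]
        exact Finset.single_le_sum (f := fun i => x i * (∑ a, e i a * w a) ^ 2)
          (fun i _ => mul_nonneg (hx0 i) (sq_nonneg _)) (Finset.mem_univ k)
      have h3 := (h2.trans (hle w)).trans h1.le
      rcases eq_or_lt_of_le hs0 with h4 | h4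
      · rw [← h4]; simp
      · nlinarith
    have hInt : 0 ≤ F (x k) - m * x k := by
      have := ht 0 le_rfl
      rw [hF.zero] at this; linarith
    have h5 : ∑ i, F (z i) / z i * c i ^ 2 ≤ (F (x k) - m * x k) * s + m := by
      calc ∑ i, F (z i) / z i * c i ^ 2
          ≤ ∑ i, ((F (x k) - m * x k) * (c i ^ 2 / z i) + m * c i ^ 2) := by
            refine Finset.sum_le_sum fun i _ => ?_
            rcases eq_or_lt_of_le (hz0 i) with hi | hi
            · rw [← hi]; simp; positivity
            · have := ht _ (hz0 i)
              have h6 : F (z i) / z i ≤ (F (x k) - m * x k) / z i + m := by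
                rw [div_add' _ _ _ hi.ne', div_le_div_iff_of_pos_right hi]; linarith
              calc F (z i) / z i * c i ^ 2 ≤ ((F (x k) - m * x k) / z i + m) * c i ^ 2 :=
                    mul_le_mul_of_nonneg_right h6 (sq_nonneg _)
                _ = _ := by ring
        _ = _ := by rw [Finset.sum_add_distrib, ← Finset.mul_sum, ← Finset.mul_sum, hc1, mul_one]
    calc x k * ∑ i, F (z i) / z i * c i ^ 2 ≤ x k * ((F (x k) - m * x k) * s + m) :=
          mul_le_mul_of_nonneg_left h5 hk.le
      _ = (F (x k) - m * x k) * (x k * s) + m * x k := by ring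
      _ ≤ (F (x k) - m * x k) * 1 + m * x k := by
          gcongr
      _ = F (x k) := by ring
  calc ∑ i, F (z i) / z i * qf X (u i)
      = ∑ k, x k * ∑ i, F (z i) / z i * (∑ a, e k a * u i a) ^ 2 := by
        simp_rw [hx.qf_eq, Finset.mul_sum]
        rw [Finset.sum_comm]
        exact Finset.sum_congr rfl fun i _ => Finset.sum_congr rfl fun a _ => by ring
    _ ≤ _ := Finset.sum_le_sum fun k _ => key k

theorem qf_add (X D : Matrix ι ι ℝ) (v : ι → ℝ) : qf (X + D) v = qf X v + qf D v := by
  simp [qf, mul_add, Finset.sum_add_distrib]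

theorem isHerm_of_symm (X : Matrix ι ι ℝ) (h : ∀ a b, X a b = X b a) : X.IsHermitian := by
  ext a b
  simp [Matrix.conjTranspose_apply, h a b]

theorem trF_diag_key {F : ℝ → ℝ} (hF : Sup F) {Z : Matrix ι ι ℝ} {z : ι → ℝ} {u : ι → ι → ℝ}
    (h : SD Z z u) {X : Matrix ι ι ℝ} (hsym : ∀ a b, X a b = X b a)
    (hX : ∀ v, 0 ≤ qf X v) (hle : ∀ v, qf X v ≤ qf Z v) :
    ∑ i, F (z i) / z i * qf X (u i) ≤ ∑ a, F (X a a) := by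
  have hx := exists_SD X (isHerm_of_symm X hsym)
  exact (trF_key hF h hx hX hle).trans (trF_diag hF hx (hx.eig_nonneg hX))

/-- Comparison with subadditivity. -/
theorem trF_compare {F : ℝ → ℝ} (hF : Sup F) {Z : Matrix ι ι ℝ} {z : ι → ℝ} {u : ι → ι → ℝ}
    (h : SD Z z u) (hZ : ∀ v, 0 ≤ qf Z v) {X : Matrix ι ι ℝ} {x : ι → ℝ} {e : ι → ι → ℝ}
    (hx : SD X x e) (hX : ∀ v, 0 ≤ qf X v) {D : Matrix ι ι ℝ} (hsym : ∀ a b, D a b = D b a)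
    (hD : ∀ v, 0 ≤ qf D v) (hle : ∀ v, qf Z v ≤ qf X v + qf D v) :
    ∑ i, F (z i) ≤ ∑ i, F (x i) + ∑ a, F (D a a) := by
  have hXs : ∀ a b, X a b = X b a := fun a b => by
    rw [hx.eq, hx.eq]; exact Finset.sum_congr rfl fun i _ => by ring
  have hs := exists_SD (X + D) (isHerm_of_symm (X + D) (fun a b => by
    simp [hXs a b, hsym a b]))
  set y := (isHerm_of_symm (X + D) (fun a b => by
    simp [hXs a b, hsym a b])).eigenvalues
  set w : ι → ι → ℝ := fun i a => (isHerm_of_symm (X + D) (fun a b => by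
    simp [hXs a b, hsym a b])).eigenvectorBasis i a
  have h1 := trF_mono hF h hZ hs (fun v => by rw [qf_add]; exact hle v)
  have h2 := trF_key hF hs hx hX (fun v => by rw [qf_add]; linarith [hD v])
  have h3 := trF_diag_key hF hs hsym hD (fun v => by rw [qf_add]; linarith [hX v])
  have h4 : ∀ i, F (y i) = F (y i) / y i * qf X (w i) + F (y i) / y i * qf D (w i) := by
    intro i
    rw [← mul_add, ← qf_add, hs.eig]
    rcases eq_or_ne (y i) 0 with hi | hi
    · rw [hi, hF.zero]; simp
    · field_simp
  have h5 : ∑ i, F (y i) = ∑ i, F (y i) / y i * qf X (w i) + ∑ i, F (y i) / y i * qf D (w i) := by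
    rw [← Finset.sum_add_distrib]
    exact Finset.sum_congr rfl fun i _ => h4 i
  linarith

/-- Independence of the spectral data. -/
theorem trF_unique {F : ℝ → ℝ} (hF : Sup F) {Z : Matrix ι ι ℝ} {z : ι → ℝ} {u : ι → ι → ℝ}
    (h : SD Z z u) (hZ : ∀ v, 0 ≤ qf Z v) {x : ι → ℝ} {e : ι → ι → ℝ}
    (hx : SD Z x e) : ∑ i, F (z i) = ∑ i, F (x i) :=
  le_antisymm (trF_mono hF h hZ hx fun _ => le_rfl) (trF_mono hF hx hZ h fun _ => le_rfl)

end

end XXAux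

namespace XXAux

/-- Entropy (nats) as a function of `x = 1 - λ²`. -/
noncomputable def Fn (x : ℝ) : ℝ := Real.binEntropy ((1 - √(1 - x)) / 2)

noncomputable def sg (z : ℝ) : ℝ := 1 / Real.cosh z ^ 2

noncomputable def En (z : ℝ) : ℝ := Real.log (2 * Real.cosh z) - z * Real.tanh z

noncomputable def qc (z : ℝ) : ℝ := z / Real.tanh z

theorem Fn_zero : Fn 0 = 0 := by simp [Fn]

theorem Fn_continuous : Continuous Fn := by
  unfold Fn
  have := Real.binEntropy_continuous
  fun_prop

theorem Fn_le_log_two (x : ℝ) : Fn x ≤ Real.log 2 := Real.binEntropy_le_log_two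

theorem Fn_of_one_le {x : ℝ} (hx : 1 ≤ x) : Fn x = Real.log 2 := by
  unfold Fn
  rw [Real.sqrt_eq_zero_of_nonpos (by linarith), sub_zero, one_div]
  exact Real.binEntropy_two_inv

theorem sg_eq (z : ℝ) : 1 - sg z = Real.tanh z ^ 2 := by
  unfold sg
  rw [Real.tanh_eq_sinh_div_cosh]
  have := Real.cosh_pos z
  have h2 := Real.cosh_sq z
  field_simp
  linarith

theorem sg_pos (z : ℝ) : 0 < sg z := by
  unfold sg
  have := Real.cosh_pos z
  positivity

theorem sg_le_one (z : ℝ) : sg z ≤ 1 := by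
  have := sg_eq z
  nlinarith [sq_nonneg (Real.tanh z)]

theorem Fn_sq {t : ℝ} : Fn (1 - t ^ 2) = Real.binEntropy ((1 - t) / 2) := by
  unfold Fn
  rw [sub_sub_cancel, Real.sqrt_sq_eq_abs]
  rcases abs_cases t with ⟨h, _⟩ | ⟨h, _⟩
  · rw [h]
  · rw [h, ← Real.binEntropy_one_sub]
    congr 1
    ring

theorem Fn_sg (z : ℝ) : Fn (sg z) = En z := by
  have h : sg z = 1 - Real.tanh z ^ 2 := by linarith [sg_eq z]
  rw [h, Fn_sq]
  have hc := Real.cosh_pos z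
  have h1 : (1 - Real.tanh z) / 2 = Real.exp (-z) / (2 * Real.cosh z) := by
    rw [Real.tanh_eq_sinh_div_cosh, ← Real.cosh_sub_sinh]; field_simp
  have h2 : 1 - (1 - Real.tanh z) / 2 = Real.exp z / (2 * Real.cosh z) := by
    rw [Real.tanh_eq_sinh_div_cosh, ← Real.cosh_add_sinh]; field_simp; ring
  unfold Real.binEntropy
  rw [h2, h1, Real.log_inv, Real.log_inv, Real.log_div (by positivity) (by positivity),
    Real.log_div (by positivity) (by positivity), Real.log_exp, Real.log_exp]
  have h3 : Real.exp z + Real.exp (-z) = 2 * Real.cosh z := by rw [Real.cosh_eq]; ring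
  have h4 : Real.exp z - Real.exp (-z) = 2 * Real.sinh z := by rw [Real.sinh_eq]; ring
  unfold En
  rw [Real.tanh_eq_sinh_div_cosh]
  field_simp
  linear_combination (Real.log (2 * Real.cosh z)) * h3 - z * h4

theorem hasDerivAt_tanh (z : ℝ) : HasDerivAt Real.tanh (sg z) z := by
  have h := (Real.hasDerivAt_sinh z).div (Real.hasDerivAt_cosh z) (Real.cosh_pos z).ne'
  have h2 : Real.tanh = Real.sinh / Real.cosh := by
    ext x; simp [Real.tanh_eq_sinh_div_cosh]
  rw [h2]
  convert! h using 1
  unfold sg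
  rw [← Real.cosh_sq_sub_sinh_sq z]
  ring

theorem tanh_pos {z : ℝ} (hz : 0 < z) : 0 < Real.tanh z := by
  rw [Real.tanh_eq_sinh_div_cosh]
  exact div_pos (Real.sinh_pos_iff.2 hz) (Real.cosh_pos z)

theorem hasDerivAt_qc {z : ℝ} (hz : 0 < z) :
    HasDerivAt qc ((Real.sinh z * Real.cosh z - z) / Real.sinh z ^ 2) z := by
  have h := (hasDerivAt_id z).div (hasDerivAt_tanh z) (tanh_pos hz).ne'
  have h2 : qc = id / Real.tanh := by ext x; simp [qc]
  rw [h2]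
  convert! h using 1
  unfold sg
  have := Real.sinh_pos_iff.2 hz
  have := Real.cosh_pos z
  simp only [Real.tanh_eq_sinh_div_cosh, id]
  field_simp

theorem qc_deriv_nonneg {z : ℝ} (hz : 0 < z) :
    0 ≤ (Real.sinh z * Real.cosh z - z) / Real.sinh z ^ 2 := by
  apply div_nonneg _ (sq_nonneg _)
  have := Real.self_le_sinh_iff.2 (by linarith : 0 ≤ 2 * z)
  rw [Real.sinh_two_mul] at this
  linarith

theorem qc_deriv_le {z : ℝ} (hz : 0 < z) :
    (Real.sinh z * Real.cosh z - z) / Real.sinh z ^ 2 ≤ 1 := by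
  have h1 := Real.sinh_pos_iff.2 hz
  rw [div_le_one (by positivity)]
  have h2 : Real.sinh z * Real.cosh z - Real.sinh z ^ 2 = (1 - Real.exp (-(2 * z))) / 2 := by
    have : Real.exp (-(2 * z)) = Real.exp (-z) * Real.exp (-z) := by rw [← Real.exp_add]; ring_nf
    rw [this, ← Real.cosh_sub_sinh]
    nlinarith [Real.cosh_sq_sub_sinh_sq z]
  have := Real.add_one_le_exp (-(2 * z))
  linarith

theorem qc_mono {w z : ℝ} (hw : 0 < w) (h : w ≤ z) : qc w ≤ qc z := by
  have := monotoneOn_of_hasDerivWithinAt_nonneg (convex_Ioi (0 : ℝ)) (f := qc)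
    (f' := fun z => (Real.sinh z * Real.cosh z - z) / Real.sinh z ^ 2)
    (fun x hx => (hasDerivAt_qc hx).continuousAt.continuousWithinAt)
    (fun x hx => (hasDerivAt_qc (by simpa using hx)).hasDerivWithinAt)
    (fun x hx => qc_deriv_nonneg (by simpa using hx))
  exact this (Set.mem_Ioi.2 hw) (Set.mem_Ioi.2 (hw.trans_le h)) h

theorem qc_neg (z : ℝ) : qc (-z) = qc z := by simp [qc, Real.tanh_neg]

theorem qc_abs (z : ℝ) : qc |z| = qc z := by
  rcases abs_cases z with ⟨h, _⟩ | ⟨h, _⟩ <;> rw [h]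
  exact qc_neg z

theorem qc_lip {w z : ℝ} (hw : w ≠ 0) (hz : z ≠ 0) : |qc z - qc w| ≤ |z - w| := by
  have := Convex.norm_image_sub_le_of_norm_hasDerivWithin_le (f := qc)
    (f' := fun z => (Real.sinh z * Real.cosh z - z) / Real.sinh z ^ 2) (C := 1)
    (fun x hx => (hasDerivAt_qc (by simpa using hx)).hasDerivWithinAt)
    (fun x hx => by
      rw [Real.norm_of_nonneg (qc_deriv_nonneg hx)]; exact qc_deriv_le hx)
    (convex_Ioi (0 : ℝ)) (Set.mem_Ioi.2 (abs_pos.2 hw)) (Set.mem_Ioi.2 (abs_pos.2 hz))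
  rw [qc_abs, qc_abs, Real.norm_eq_abs, Real.norm_eq_abs, one_mul] at this
  exact this.trans (abs_abs_sub_abs_le z w)

theorem qc_nonneg (z : ℝ) : 0 ≤ qc z := by
  rw [← qc_abs]
  rcases eq_or_lt_of_le (abs_nonneg z) with h | h
  · rw [← h]; simp [qc]
  · exact div_nonneg h.le (tanh_pos h).le

theorem hasDerivAt_En (w : ℝ) : HasDerivAt En (-(w * sg w)) w := by
  have hc := Real.cosh_pos w
  have h1 := (((Real.hasDerivAt_cosh w).const_mul 2).log (by positivity)).sub
    ((hasDerivAt_id w).mul (hasDerivAt_tanh w))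
  refine h1.congr_deriv ?_
  simp only [id, Real.tanh_eq_sinh_div_cosh]
  field_simp
  ring

theorem En_neg (z : ℝ) : En (-z) = En z := by simp [En, Real.tanh_neg]

theorem En_abs (z : ℝ) : En |z| = En z := by
  rcases abs_cases z with ⟨h, _⟩ | ⟨h, _⟩ <;> rw [h]
  exact En_neg z

theorem sg_neg (z : ℝ) : sg (-z) = sg z := by simp [sg]

theorem sg_abs (z : ℝ) : sg |z| = sg z := by
  rcases abs_cases z with ⟨h, _⟩ | ⟨h, _⟩ <;> rw [h]
  exact sg_neg z

theorem tangent_pos {w z : ℝ} (hw : 0 ≤ w) (hz : 0 < z) :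
    En w ≤ En z + qc z / 2 * (sg w - sg z) := by
  have hd : ∀ w, HasDerivAt (fun w => En w + qc z / 2 * Real.tanh w ^ 2)
      (sg w * (qc z * Real.tanh w - w)) w := by
    intro w
    have := (hasDerivAt_En w).add (((hasDerivAt_tanh w).pow 2).const_mul (qc z / 2))
    refine this.congr_deriv ?_
    simp only [Nat.cast_ofNat]
    ring
  have hcont : Continuous (fun w => En w + qc z / 2 * Real.tanh w ^ 2) :=
    continuous_iff_continuousAt.2 fun w => (hd w).continuousAt
  suffices En w + qc z / 2 * Real.tanh w ^ 2 ≤ En z + qc z / 2 * Real.tanh z ^ 2 by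
    rw [← sg_eq, ← sg_eq] at this
    nlinarith
  rcases le_total w z with h | h
  · have := monotoneOn_of_hasDerivWithinAt_nonneg (convex_Icc (0 : ℝ) z) (f' := fun w =>
      (sg w * (qc z * Real.tanh w - w))) hcont.continuousOn
      (fun x hx => (hd x).hasDerivWithinAt)
      (fun x hx => by
        rw [interior_Icc] at hx
        apply mul_nonneg (sg_pos _).le
        have h1 := qc_mono hx.1 hx.2.le
        have h2 : qc x * Real.tanh x = x := by
          unfold qc; exact div_mul_cancel₀ _ (tanh_pos hx.1).ne'
        nlinarith [tanh_pos hx.1])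
    exact this ⟨hw, h⟩ ⟨hz.le, le_rfl⟩ h
  · have := antitoneOn_of_hasDerivWithinAt_nonpos (convex_Ici z) (f' := fun w =>
      (sg w * (qc z * Real.tanh w - w))) hcont.continuousOn
      (fun x hx => (hd x).hasDerivWithinAt)
      (fun x hx => by
        rw [interior_Ici] at hx
        have hx0 : 0 < x := hz.trans hx
        apply mul_nonpos_of_nonneg_of_nonpos (sg_pos _).le
        have h1 := qc_mono hz (le_of_lt hx)
        have h2 : qc x * Real.tanh x = x := by
          unfold qc; exact div_mul_cancel₀ _ (tanh_pos hx0).ne'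
        nlinarith [tanh_pos hx0])
    exact this (Set.mem_Ici.2 le_rfl) (Set.mem_Ici.2 h) h

theorem exists_sg {x : ℝ} (h0 : 0 < x) (h1 : x ≤ 1) : ∃ w, 0 ≤ w ∧ sg w = x := by
  have h : 1 ≤ 1 / √x := by
    rw [le_div_iff₀ (Real.sqrt_pos.2 h0), one_mul]
    exact Real.sqrt_le_one.2 h1
  refine ⟨Real.arcosh (1 / √x), Real.arcosh_nonneg h, ?_⟩
  unfold sg
  rw [Real.cosh_arcosh h, div_pow, Real.sq_sqrt h0.le]
  simp

/-- Tangent inequality at `sg z`. -/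
theorem tangent {z x : ℝ} (hz : z ≠ 0) (hx : 0 ≤ x) :
    Fn x ≤ En z + qc z / 2 * (x - sg z) := by
  rw [← En_abs, ← qc_abs, ← sg_abs]
  have hz' := abs_pos.2 hz
  generalize |z| = z at hz'
  have main : ∀ x, 0 < x → Fn x ≤ En z + qc z / 2 * (x - sg z) := by
    intro x hx
    rcases le_total x 1 with h | h
    · obtain ⟨w, hw, rfl⟩ := exists_sg hx h
      rw [Fn_sg]
      exact tangent_pos hw hz'
    · obtain ⟨w, hw, hw'⟩ := exists_sg one_pos le_rfl
      have := tangent_pos hw hz'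
      rw [← Fn_sg, hw', Fn_of_one_le le_rfl] at this
      rw [Fn_of_one_le h]
      have h3 := qc_nonneg z
      nlinarith
  rcases eq_or_lt_of_le hx with h | h
  · rw [← h]
    have hc : Continuous (fun x => En z + qc z / 2 * (x - sg z)) := by fun_prop
    have h1 : Filter.Tendsto Fn (nhdsWithin 0 (Set.Ioi 0)) (nhds (Fn 0)) :=
      Fn_continuous.continuousAt.tendsto.mono_left nhdsWithin_le_nhds
    have h2 := (hc.tendsto 0).mono_left (nhdsWithin_le_nhds (s := Set.Ioi 0))
    refine le_of_tendsto_of_tendsto h1 h2 ?_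
    filter_upwards [self_mem_nhdsWithin] with x hx using main x hx
  · exact main x h

theorem qcsg_le {z : ℝ} : qc z / 2 * sg z ≤ En z := by
  rcases eq_or_ne z 0 with rfl | hz
  · simp [qc, En]; exact Real.log_nonneg (by norm_num)
  · have := tangent hz le_rfl
    rw [Fn_zero] at this
    linarith

theorem Fn_sup : Sup Fn := by
  refine ⟨Fn_zero, fun x hx => ?_⟩
  rcases lt_or_ge x 1 with h | h
  · obtain ⟨w, hw, rfl⟩ := exists_sg hx h.le
    have hw0 : w ≠ 0 := by
      rintro rfl
      simp [sg] at h
    exact ⟨qc w / 2, by have := qc_nonneg w; positivity, fun z hz => by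
      rw [Fn_sg]; exact tangent hw0 hz⟩
  · exact ⟨0, le_rfl, fun z _ => by rw [Fn_of_one_le h]; linarith [Fn_le_log_two z]⟩

theorem En_nonneg (z : ℝ) : 0 ≤ En z := by
  rw [← Fn_sg]; exact Fn_sup.nonneg (sg_pos z).le

theorem En_eq (z : ℝ) :
    En z = Real.log (1 + Real.exp (-(2 * z))) + 2 * z / (Real.exp (2 * z) + 1) := by
  have h1 : 2 * Real.cosh z = Real.exp z * (1 + Real.exp (-(2 * z))) := by
    rw [Real.cosh_eq, mul_add, ← Real.exp_add]; ring_nf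
  unfold En
  rw [h1, Real.log_mul (by positivity) (by positivity), Real.log_exp, Real.tanh_eq]
  have e2 : Real.exp (2 * z) = Real.exp z ^ 2 := by rw [← Real.exp_nat_mul]; norm_num
  rw [Real.exp_neg z, e2]
  have := Real.exp_pos z
  field_simp
  ring

theorem En_le (z : ℝ) : En z ≤ 4 * Real.exp (-(3 / 2 * |z|)) := by
  rw [← En_abs]
  have hz := abs_nonneg z
  generalize |z| = z at hz
  rw [En_eq]
  have h1 : Real.log (1 + Real.exp (-(2 * z))) ≤ Real.exp (-(2 * z)) := by
    have := Real.log_le_sub_one_of_pos (show 0 < 1 + Real.exp (-(2 * z)) by positivity)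
    linarith
  have h2 : 2 * z / (Real.exp (2 * z) + 1) ≤ 2 * z * Real.exp (-(2 * z)) := by
    rw [Real.exp_neg, ← div_eq_mul_inv]
    gcongr
    linarith
  have h3 : Real.exp (-(2 * z)) = Real.exp (-(3 / 2 * z)) * Real.exp (-(z / 2)) := by
    rw [← Real.exp_add]; ring_nf
  have h4 : (1 + 2 * z) * Real.exp (-(z / 2)) ≤ 4 := by
    rw [Real.exp_neg, ← div_eq_mul_inv, div_le_iff₀ (Real.exp_pos _)]
    linarith [Real.add_one_le_exp (z / 2)]
  have := Real.exp_pos (-(3 / 2 * z))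
  nlinarith

theorem Fn_rpow {x : ℝ} (hx : 0 ≤ x) : Fn x ≤ 4 * x ^ (3 / 4 : ℝ) := by
  rcases eq_or_lt_of_le hx with h | h
  · rw [← h, Fn_zero]; positivity
  rcases le_total x 1 with h1 | h1
  · obtain ⟨w, hw, rfl⟩ := exists_sg h h1
    rw [Fn_sg]
    refine (En_le w).trans ?_
    rw [abs_of_nonneg hw]
    have h2 : Real.exp (-(2 * w)) ≤ sg w := by
      unfold sg
      have : Real.cosh w ≤ Real.exp w := by
        rw [Real.cosh_eq]
        have := Real.exp_le_exp.2 (by linarith : -w ≤ w)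
        linarith
      rw [Real.exp_neg, ← one_div, two_mul, Real.exp_add, ← sq]
      have := Real.cosh_pos w
      gcongr
    have h3 := Real.rpow_le_rpow (Real.exp_pos _).le h2 (show (0 : ℝ) ≤ 3 / 4 by norm_num)
    rw [← Real.exp_mul] at h3
    refine mul_le_mul_of_nonneg_left (le_trans (le_of_eq ?_) h3) (by norm_num)
    congr 1; ring
  · rw [Fn_of_one_le h1]
    have := Real.one_le_rpow h1 (show (0 : ℝ) ≤ 3 / 4 by norm_num)
    linarith [Real.log_two_lt_d9]

end XXAux

namespace XXAux
open MeasureTheory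

theorem integrable_x_exp {c : ℝ} (hc : 0 < c) :
    IntegrableOn (fun x : ℝ => x * Real.exp (-(c * x))) (Set.Ioi 0) := by
  have := integrableOn_rpow_mul_exp_neg_mul_rpow (s := 1) (p := 1) (b := c) (by norm_num)
    (by norm_num) hc
  simpa using this

theorem integral_x_exp {c : ℝ} (hc : 0 < c) :
    ∫ x in Set.Ioi (0 : ℝ), x * Real.exp (-(c * x)) = 1 / c ^ 2 := by
  have := Real.integral_rpow_mul_exp_neg_mul_Ioi (a := 2) (by norm_num) hc
  rw [show (2 : ℝ) - 1 = 1 by norm_num, Real.Gamma_two] at this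
  simpa using this

theorem bose_aux :
    IntegrableOn (fun x : ℝ => x / (Real.exp x - 1)) (Set.Ioi 0) ∧
    ∫ x in Set.Ioi (0 : ℝ), x / (Real.exp x - 1) = Real.pi ^ 2 / 6 := by
  have hInt : ∀ i : ℕ, Integrable (fun x : ℝ => x * Real.exp (-(((i : ℝ) + 1) * x)))
      (volume.restrict (Set.Ioi 0)) := fun i => integrable_x_exp (by positivity)
  have hval : ∀ i : ℕ, ∫ x in Set.Ioi (0 : ℝ), x * Real.exp (-(((i : ℝ) + 1) * x))
      = 1 / ((i : ℝ) + 1) ^ 2 := fun i => integral_x_exp (by positivity)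
  have hz : HasSum (fun i : ℕ => 1 / ((i : ℝ) + 1) ^ 2) (Real.pi ^ 2 / 6) := by
    have := (hasSum_nat_add_iff' 1).2 hasSum_zeta_two
    simpa using this
  have hnorm : ∀ i : ℕ, ∫ x in Set.Ioi (0 : ℝ), ‖x * Real.exp (-(((i : ℝ) + 1) * x))‖
      = 1 / ((i : ℝ) + 1) ^ 2 := fun i => by
    rw [← hval i]
    refine setIntegral_congr_fun measurableSet_Ioi fun x hx => ?_
    have hx : 0 < x := hx
    exact Real.norm_of_nonneg (by positivity)
  have hgeo : ∀ x ∈ Set.Ioi (0 : ℝ), HasSum (fun i : ℕ => x * Real.exp (-(((i : ℝ) + 1) * x)))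
      (x / (Real.exp x - 1)) := by
    intro x hx
    have hx : 0 < x := hx
    have h1 : Real.exp (-x) < 1 := by rw [Real.exp_lt_one_iff]; linarith
    have := (hasSum_geometric_of_lt_one (Real.exp_pos (-x)).le h1).mul_left (x * Real.exp (-x))
    convert! this using 1
    · ext i
      rw [mul_assoc, ← Real.exp_nat_mul, ← Real.exp_add]
      ring_nf
    · have h2 : 1 < Real.exp x := by rw [Real.one_lt_exp_iff]; linarith
      have h3 : Real.exp x - 1 ≠ 0 := by linarith
      rw [Real.exp_neg]
      have h4 : 1 - (Real.exp x)⁻¹ ≠ 0 := by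
        rw [← Real.exp_neg]; linarith
      field_simp
  have hsum : Summable fun i : ℕ =>
      ∫ x in Set.Ioi (0 : ℝ), ‖x * Real.exp (-(((i : ℝ) + 1) * x))‖ := by
    simp_rw [hnorm]; exact hz.summable
  have h1 := hasSum_integral_of_summable_integral_norm hInt hsum
  simp_rw [hval] at h1
  have h3 := h1.unique hz
  have hcongr : ∀ x ∈ Set.Ioi (0 : ℝ),
      ∑' i : ℕ, x * Real.exp (-(((i : ℝ) + 1) * x)) = x / (Real.exp x - 1) :=
    fun x hx => (hgeo x hx).tsum_eq
  have h4 : ∫ x in Set.Ioi (0 : ℝ), x / (Real.exp x - 1) = Real.pi ^ 2 / 6 := by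
    rw [← h3]
    exact setIntegral_congr_fun measurableSet_Ioi fun x hx => (hcongr x hx).symm
  refine ⟨Integrable.of_integral_ne_zero ?_, h4⟩
  rw [h4]
  have := Real.pi_pos
  positivity

theorem fermi_aux :
    IntegrableOn (fun x : ℝ => x / (Real.exp x + 1)) (Set.Ioi 0) ∧
    ∫ x in Set.Ioi (0 : ℝ), x / (Real.exp x + 1) = Real.pi ^ 2 / 12 := by
  obtain ⟨h1, h2⟩ := bose_aux
  have h3 : IntegrableOn (fun x : ℝ => (2 * x) / (Real.exp (2 * x) - 1)) (Set.Ioi 0) := by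
    have := (integrableOn_Ioi_comp_mul_left_iff (fun x : ℝ => x / (Real.exp x - 1)) 0
      (show (0 : ℝ) < 2 by norm_num)).2 (by simpa using h1)
    exact this
  have h4 : ∫ x in Set.Ioi (0 : ℝ), (2 * x) / (Real.exp (2 * x) - 1) = Real.pi ^ 2 / 12 := by
    have := integral_comp_mul_left_Ioi (fun x : ℝ => x / (Real.exp x - 1)) 0
      (show (0 : ℝ) < 2 by norm_num)
    rw [mul_zero, h2] at this
    rw [this]
    simp; ring
  have h5 : ∀ x ∈ Set.Ioi (0 : ℝ), x / (Real.exp x - 1) - (2 * x) / (Real.exp (2 * x) - 1)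
      = x / (Real.exp x + 1) := by
    intro x hx
    have hx : 0 < x := hx
    have h2 : 1 < Real.exp x := by rw [Real.one_lt_exp_iff]; linarith
    have e2 : Real.exp (2 * x) = Real.exp x ^ 2 := by rw [← Real.exp_nat_mul]; norm_num
    have h3 : Real.exp x - 1 ≠ 0 := by linarith
    have h4 : Real.exp x + 1 ≠ 0 := by linarith
    have h5 : Real.exp x ^ 2 - 1 = (Real.exp x - 1) * (Real.exp x + 1) := by ring
    rw [e2, h5]
    field_simp
    ring
  constructor
  · exact (h1.sub h3).congr
      ((ae_restrict_iff' measurableSet_Ioi).2 (Filter.Eventually.of_forall h5))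
  · rw [← setIntegral_congr_fun measurableSet_Ioi h5, integral_sub h1 h3, h2, h4]
    ring

theorem En_continuous : Continuous En :=
  continuous_iff_continuousAt.2 fun w => (hasDerivAt_En w).continuousAt

theorem sg_continuous : Continuous sg := by
  unfold sg
  exact continuous_const.div (Real.continuous_cosh.pow 2)
    (fun z => (pow_pos (Real.cosh_pos z) 2).ne')

theorem qc_measurable : Measurable qc := by
  have : Continuous Real.tanh :=
    continuous_iff_continuousAt.2 fun w => (hasDerivAt_tanh w).continuousAt
  exact measurable_id.div this.measurable

theorem integrable_exp_abs {c : ℝ} (hc : 0 < c) : Integrable fun z : ℝ => Real.exp (-(c * |z|)) := by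
  apply Integrable.of_integral_ne_zero
  rw [integral_comp_abs (f := fun z => Real.exp (-(c * z)))]
  have := Real.integral_rpow_mul_exp_neg_mul_Ioi (a := 1) (by norm_num) hc
  simp only [sub_self, Real.rpow_zero, one_mul, Real.rpow_one, Real.Gamma_one, mul_one] at this
  rw [this]
  positivity

theorem integrable_sq_exp_abs {c : ℝ} (hc : 0 < c) :
    Integrable fun z : ℝ => z ^ 2 * Real.exp (-(c * |z|)) := by
  have h := (integrable_exp_abs (c := c / 2) (by positivity)).const_mul (8 / c ^ 2)
  refine h.mono' (by fun_prop) (Filter.Eventually.of_forall fun z => ?_)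
  rw [Real.norm_of_nonneg (by positivity)]
  have h1 : Real.exp (-(c * |z|)) = Real.exp (-(c / 2 * |z|)) * Real.exp (-(c / 2 * |z|)) := by
    rw [← Real.exp_add]; ring_nf
  have h2 := Real.quadratic_le_exp_of_nonneg (show 0 ≤ c / 2 * |z| by positivity)
  have h3 : z ^ 2 * Real.exp (-(c / 2 * |z|)) ≤ 8 / c ^ 2 := by
    rw [Real.exp_neg, ← div_eq_mul_inv, div_le_iff₀ (Real.exp_pos _), div_mul_eq_mul_div,
      le_div_iff₀ (by positivity)]
    have : 0 ≤ c / 2 * |z| := by positivity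
    nlinarith [sq_abs z]
  rw [h1]
  have := Real.exp_pos (-(c / 2 * |z|))
  nlinarith

theorem En_integrable : Integrable En := by
  refine ((integrable_exp_abs (c := 3 / 2) (by norm_num)).const_mul 4).mono'
    En_continuous.aestronglyMeasurable (Filter.Eventually.of_forall fun z => ?_)
  rw [Real.norm_of_nonneg (En_nonneg z)]
  exact En_le z

theorem En_sq_integrable : Integrable (fun z => z ^ 2 * En z) := by
  refine ((integrable_sq_exp_abs (c := 3 / 2) (by norm_num)).const_mul 4).mono'
    ((continuous_pow 2).mul En_continuous).aestronglyMeasurable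
    (Filter.Eventually.of_forall fun z => ?_)
  rw [Real.norm_of_nonneg (mul_nonneg (sq_nonneg _) (En_nonneg z))]
  have := mul_le_mul_of_nonneg_left (En_le z) (sq_nonneg z)
  linarith

theorem En_integral : ∫ z, En z = Real.pi ^ 2 / 6 := by
  have h0 : ∫ z, En z = 2 * ∫ z in Set.Ioi (0 : ℝ), En z := by
    rw [← integral_comp_abs]
    simp_rw [En_abs]
  obtain ⟨h1, h2⟩ := fermi_aux
  have h3 : IntegrableOn (fun x : ℝ => 2 * ((2 * x) / (Real.exp (2 * x) + 1))) (Set.Ioi 0) := by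
    have := (integrableOn_Ioi_comp_mul_left_iff (fun x : ℝ => x / (Real.exp x + 1)) 0
      (show (0 : ℝ) < 2 by norm_num)).2 (by simpa using h1)
    exact this.const_mul 2
  have h4 : ∫ x in Set.Ioi (0 : ℝ), 2 * ((2 * x) / (Real.exp (2 * x) + 1)) = Real.pi ^ 2 / 12 := by
    have := integral_comp_mul_left_Ioi (fun x : ℝ => x / (Real.exp x + 1)) 0
      (show (0 : ℝ) < 2 by norm_num)
    rw [mul_zero, h2] at this
    rw [integral_const_mul, this]
    simp
  have hE : IntegrableOn En (Set.Ioi 0) := En_integrable.integrableOn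
  have hd : ∀ x : ℝ, HasDerivAt (fun z => z * Real.log (1 + Real.exp (-(2 * z))))
      (En x - 2 * ((2 * x) / (Real.exp (2 * x) + 1))) x := by
    intro x
    have ha : HasDerivAt (fun z : ℝ => -(2 * z)) (-(2 * 1)) x :=
      ((hasDerivAt_id x).const_mul 2).neg
    have := (hasDerivAt_id x).mul ((ha.exp.const_add 1).log (by positivity))
    refine this.congr_deriv ?_
    rw [En_eq, Real.exp_neg]
    have := Real.exp_pos (2 * x)
    simp only [id]
    field_simp
    ring
  have hlim : Filter.Tendsto (fun z => z * Real.log (1 + Real.exp (-(2 * z)))) Filter.atTop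
      (nhds 0) := by
    have hu : Filter.Tendsto (fun z : ℝ => z ^ 1 * Real.exp (-z)) Filter.atTop (nhds 0) :=
      Real.tendsto_pow_mul_exp_neg_atTop_nhds_zero 1
    refine squeeze_zero' ?_ ?_ hu
    · filter_upwards [Filter.eventually_ge_atTop 0] with z hz
      have := Real.exp_pos (-(2 * z))
      exact mul_nonneg hz (Real.log_nonneg (by linarith))
    · filter_upwards [Filter.eventually_ge_atTop 0] with z hz
      rw [pow_one]
      refine mul_le_mul_of_nonneg_left ?_ hz
      have := Real.log_le_sub_one_of_pos (show 0 < 1 + Real.exp (-(2 * z)) by positivity)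
      have := Real.exp_le_exp.2 (show -(2 * z) ≤ -z by linarith)
      linarith
  have h5 := integral_Ioi_of_hasDerivAt_of_tendsto (a := 0) (hd 0).continuousAt.continuousWithinAt
    (fun x _ => hd x) (hE.sub h3) hlim
  rw [integral_sub hE h3, h4] at h5
  rw [h0]
  simp at h5
  linarith

theorem integral_En_comp : ∫ k, En (2 * Real.pi ^ 2 * k) = 1 / 12 := by
  rw [MeasureTheory.Measure.integral_comp_mul_left, En_integral]
  have := Real.pi_pos
  rw [abs_of_pos (by positivity), smul_eq_mul]
  field_simp
  norm_num

theorem integrable_En_comp : Integrable fun k => En (2 * Real.pi ^ 2 * k) :=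
  En_integrable.comp_mul_left' (by have := Real.pi_pos; positivity)

theorem integrable_sq_En_comp : Integrable fun k => k ^ 2 * En (2 * Real.pi ^ 2 * k) := by
  have := Real.pi_pos
  have h := En_sq_integrable.comp_mul_left' (show 2 * Real.pi ^ 2 ≠ 0 by positivity)
  refine (h.const_mul (1 / (2 * Real.pi ^ 2) ^ 2)).congr (Filter.Eventually.of_forall fun k => ?_)
  simp only
  field_simp

end XXAux

namespace XXAux
open MeasureTheory

noncomputable def ka : ℝ := 2 * Real.pi ^ 2
noncomputable def psi (k : ℝ) : ℝ := qc (ka * k) / 2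
noncomputable def sk (k : ℝ) : ℝ := sg (ka * k)
noncomputable def Ek (k : ℝ) : ℝ := En (ka * k)

theorem ka_pos : 0 < ka := by unfold ka; have := Real.pi_pos; positivity

theorem Ek_integral : ∫ k, Ek k = 1 / 12 := integral_En_comp
theorem Ek_integrable : Integrable Ek := integrable_En_comp
theorem Ek_sq_integrable : Integrable fun k => k ^ 2 * Ek k := integrable_sq_En_comp
theorem Ek_nonneg (k : ℝ) : 0 ≤ Ek k := En_nonneg _
theorem psi_nonneg (k : ℝ) : 0 ≤ psi k := by unfold psi; have := qc_nonneg (ka * k); positivity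
theorem sk_pos (k : ℝ) : 0 < sk k := sg_pos _
theorem sk_le_one (k : ℝ) : sk k ≤ 1 := sg_le_one _
theorem psi_measurable : Measurable psi :=
  (qc_measurable.comp (measurable_const.mul measurable_id)).div_const 2
theorem sk_continuous : Continuous sk := sg_continuous.comp (continuous_const.mul continuous_id)
theorem Ek_continuous : Continuous Ek := En_continuous.comp (continuous_const.mul continuous_id)
theorem psi_neg (k : ℝ) : psi (-k) = psi k := by unfold psi; rw [mul_neg, qc_neg]
theorem sk_neg (k : ℝ) : sk (-k) = sk k := by unfold sk; rw [mul_neg, sg_neg]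

theorem psisk_le (k : ℝ) : psi k * sk k ≤ Ek k := qcsg_le

theorem psisk_integrable : Integrable fun k => psi k * sk k := by
  refine Ek_integrable.mono' (psi_measurable.mul sk_continuous.measurable).aestronglyMeasurable
    (Filter.Eventually.of_forall fun k => ?_)
  rw [Real.norm_of_nonneg (mul_nonneg (psi_nonneg k) (sk_pos k).le)]
  exact psisk_le k

theorem tangent_k {k x : ℝ} (hk : k ≠ 0) (hx : 0 ≤ x) :
    Fn x ≤ (Ek k - psi k * sk k) + psi k * x := by
  have := tangent (mul_ne_zero ka_pos.ne' hk) hx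
  unfold Ek psi sk
  linarith

theorem Fn_sk (k : ℝ) : Fn (sk k) = Ek k := Fn_sg _

theorem sg_le_exp (z : ℝ) : sg z ≤ 4 * Real.exp (-(2 * |z|)) := by
  rw [← sg_abs]
  have hz := abs_nonneg z
  generalize |z| = z at hz
  unfold sg
  have h : Real.exp z / 2 ≤ Real.cosh z := by
    rw [Real.cosh_eq]; have := Real.exp_pos (-z); linarith
  have := Real.exp_pos z
  calc 1 / Real.cosh z ^ 2 ≤ 1 / (Real.exp z / 2) ^ 2 := by gcongr
    _ = _ := by
      rw [Real.exp_neg, two_mul, Real.exp_add]; field_simp; norm_num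

theorem sg_integrable : Integrable sg := by
  refine ((integrable_exp_abs (c := 2) (by norm_num)).const_mul 4).mono'
    sg_continuous.aestronglyMeasurable (Filter.Eventually.of_forall fun z => ?_)
  rw [Real.norm_of_nonneg (sg_pos z).le]
  exact sg_le_exp z

theorem sk_integrable : Integrable sk := sg_integrable.comp_mul_left' ka_pos.ne'

theorem cosh_shift (z h : ℝ) : Real.cosh z ≤ Real.exp |h| * Real.cosh (z + h) := by
  rw [Real.cosh_eq, Real.cosh_eq]
  have h1 : Real.exp z ≤ Real.exp |h| * Real.exp (z + h) := by
    rw [← Real.exp_add]; apply Real.exp_le_exp.2; linarith [neg_abs_le h]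
  have h2 : Real.exp (-z) ≤ Real.exp |h| * Real.exp (-(z + h)) := by
    rw [← Real.exp_add]; apply Real.exp_le_exp.2; linarith [le_abs_self h]
  nlinarith

theorem sg_shift (z h : ℝ) : sg (z + h) ≤ Real.exp (2 * |h|) * sg z := by
  unfold sg
  have h1 := cosh_shift z h
  have c1 := Real.cosh_pos z
  have c2 := Real.cosh_pos (z + h)
  rw [two_mul, Real.exp_add, ← sq, mul_one_div, div_le_div_iff₀ (by positivity) (by positivity),
    ← mul_pow, one_mul]
  gcongr

theorem sg_diff (z h : ℝ) : |sg z - sg (z + h)| ≤ 8 * |h| * (sg z + sg (z + h)) := by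
  have p1 := sg_pos z
  have p2 := sg_pos (z + h)
  rcases le_total |h| 1 with h1 | h1
  · have e : Real.exp (2 * |h|) - 1 ≤ 8 * |h| := by
      have hq : Real.exp |h| ≤ 1 + 2 * |h| := by
        have := Real.abs_exp_sub_one_le (x := |h|) (by rwa [abs_abs])
        rw [abs_abs] at this
        linarith [le_abs_self (Real.exp |h| - 1)]
      have : Real.exp (2 * |h|) = Real.exp |h| ^ 2 := by rw [← Real.exp_nat_mul]; norm_num
      rw [this]
      have := Real.exp_pos |h|
      nlinarith [abs_nonneg h]
    have a1 := sg_shift z h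
    have a2 := sg_shift (z + h) (-h)
    rw [add_neg_cancel_right, abs_neg] at a2
    rw [abs_le]
    constructor <;> nlinarith [abs_nonneg h]
  · rw [abs_le]
    constructor <;> nlinarith

theorem psi_lip {k l : ℝ} (hk : k ≠ 0) (hl : l ≠ 0) : |psi k - psi l| ≤ ka / 2 * |k - l| := by
  have := qc_lip (mul_ne_zero ka_pos.ne' hl) (mul_ne_zero ka_pos.ne' hk)
  rw [← mul_sub, abs_mul, abs_of_pos ka_pos] at this
  unfold psi
  rw [← sub_div, abs_div, abs_of_pos (show (0 : ℝ) < 2 by norm_num)]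
  linarith

theorem ae_ne (c : ℝ) : ∀ᵐ k : ℝ, k ≠ c := by
  rw [ae_iff]; simp

theorem J_integrable (η : ℝ) : Integrable fun k => psi k * sk (k + η) := by
  have h1 := (psisk_integrable.comp_add_right η).add
    ((sk_integrable.comp_add_right η).const_mul (ka / 2 * |η|))
  refine h1.mono' (psi_measurable.mul
    (sk_continuous.comp (continuous_add_const η)).measurable).aestronglyMeasurable ?_
  filter_upwards [ae_ne 0, ae_ne (-η)] with k hk hk'
  rw [Real.norm_of_nonneg (mul_nonneg (psi_nonneg k) (sk_pos _).le)]
  have h2 := psi_lip hk (show k + η ≠ 0 from fun h => hk' (by linarith))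
  rw [show k - (k + η) = -η by ring, abs_neg] at h2
  have h3 := sk_pos (k + η)
  have h4 := (abs_le.1 h2).2
  simp only [Pi.add_apply]
  nlinarith

theorem J_bound : ∃ C : ℝ, 0 ≤ C ∧ ∀ η : ℝ,
    ∫ k, psi k * sk (k + η) ≤ (∫ k, psi k * sk k) + C * η ^ 2 := by
  refine ⟨4 * ka ^ 2 * ∫ k, sk k, by
    have : 0 ≤ ∫ k, sk k := integral_nonneg fun k => (sk_pos k).le
    positivity, fun η => ?_⟩
  have e1 : ∫ k, psi (k + η) * sk k = ∫ k, psi k * sk (k + η) := by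
    have h := integral_sub_left_eq_self (fun k => psi k * sk (k + η)) volume (-η)
    rw [← h]
    congr 1; ext k
    rw [show -η - k = -(k + η) by ring, psi_neg, show -(k + η) + η = -k by ring, sk_neg]
  have i1 : Integrable fun k => psi (k + η) * sk k := by
    have := (J_integrable (-η)).comp_add_right η
    simpa using this
  have e2 : ∫ k, psi (k + η) * sk (k + η) = ∫ k, psi k * sk k :=
    integral_add_right_eq_self (fun k => psi k * sk k) η
  have i2 := psisk_integrable.comp_add_right η
  have e3 : ∫ k, sk (k + η) = ∫ k, sk k := integral_add_right_eq_self sk η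
  have i3 := sk_integrable.comp_add_right η
  have hA : ∫ k, (psi k * sk (k + η) + psi (k + η) * sk k)
      = 2 * ∫ k, psi k * sk (k + η) := by
    rw [integral_add (J_integrable η) i1, e1]; ring
  have hB : ∫ k, ((psi k * sk k + psi (k + η) * sk (k + η))
      + 4 * ka ^ 2 * η ^ 2 * (sk k + sk (k + η)))
      = 2 * (∫ k, psi k * sk k) + 4 * ka ^ 2 * η ^ 2 * (2 * ∫ k, sk k) := by
    have a1 : Integrable fun k => psi k * sk k + psi (k + η) * sk (k + η) :=
      psisk_integrable.add i2
    have a2 : Integrable fun k => 4 * ka ^ 2 * η ^ 2 * (sk k + sk (k + η)) :=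
      (sk_integrable.add i3).const_mul _
    rw [integral_add a1 a2,
      integral_add psisk_integrable i2, integral_const_mul, integral_add sk_integrable i3, e2, e3]
    ring
  have hle : ∫ k, (psi k * sk (k + η) + psi (k + η) * sk k)
      ≤ ∫ k, ((psi k * sk k + psi (k + η) * sk (k + η))
      + 4 * ka ^ 2 * η ^ 2 * (sk k + sk (k + η))) := by
    apply integral_mono_ae ((J_integrable η).add i1)
      ((psisk_integrable.add i2).add ((sk_integrable.add i3).const_mul _))
    filter_upwards [ae_ne 0, ae_ne (-η)] with k hk hk'
    simp only [Pi.add_apply]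
    have h2 := psi_lip (show k + η ≠ 0 from fun h => hk' (by linarith)) hk
    rw [show k + η - k = η by ring] at h2
    have h3 : |sk k - sk (k + η)| ≤ 8 * (ka * |η|) * (sk k + sk (k + η)) := by
      have := sg_diff (ka * k) (ka * η)
      rw [abs_mul, abs_of_pos ka_pos, ← mul_add] at this
      exact this
    have h4 : (psi (k + η) - psi k) * (sk k - sk (k + η)) ≤
        (ka / 2 * |η|) * (8 * (ka * |η|) * (sk k + sk (k + η))) := by
      refine (le_abs_self _).trans ?_
      rw [abs_mul]
      have := ka_pos
      gcongr
    have h5 : (ka / 2 * |η|) * (8 * (ka * |η|) * (sk k + sk (k + η)))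
        = 4 * ka ^ 2 * η ^ 2 * (sk k + sk (k + η)) := by
      rw [← sq_abs η]; ring
    nlinarith
  rw [hA, hB] at hle
  linarith

end XXAux

namespace XXAux
open MeasureTheory
open scoped FourierTransform SchwartzMap

theorem fourier_ae_eq {f : ℝ → ℂ} (h1 : Integrable f) (h2 : MemLp f 2) :
    (𝓕 (h2.toLp f) : Lp (α := ℝ) ℂ 2 volume) =ᵐ[volume] 𝓕 f := by
  have hc : Continuous (𝓕 f) := VectorFourier.fourierIntegral_continuous
    Real.continuous_fourierChar (by exact continuous_inner) h1
  have hL : LocallyIntegrable (𝓕 (h2.toLp f) : Lp (α := ℝ) ℂ 2 volume) volume :=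
    (Lp.memLp _).locallyIntegrable (by norm_num)
  apply ae_eq_of_integral_contDiff_smul_eq hL hc.locallyIntegrable
  intro g g_smooth g_cpt
  have hg₁ : HasCompactSupport (Complex.ofRealCLM ∘ g) := g_cpt.comp_left rfl
  have hg₂ : ContDiff ℝ (⊤ : ℕ∞) (Complex.ofRealCLM ∘ g) := by fun_prop
  set G : 𝓢(ℝ, ℂ) := hg₁.toSchwartzMap hg₂ with hG
  have e1 : ∫ x, g x • (𝓕 (h2.toLp f) : Lp (α := ℝ) ℂ 2 volume) x
      = Lp.toTemperedDistribution (𝓕 (h2.toLp f) : Lp (α := ℝ) ℂ 2 volume) G := by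
    simp [hG]
  rw [e1, ← Lp.fourier_toTemperedDistribution_eq, TemperedDistribution.fourier_apply,
    Lp.toTemperedDistribution_apply]
  have e2 : ∫ x, (𝓕 G) x • (h2.toLp f) x = ∫ x, (𝓕 G) x • f x := by
    apply integral_congr_ae
    filter_upwards [h2.coeFn_toLp] with x hx
    rw [hx]
  rw [e2]
  have e3 := VectorFourier.integral_fourierIntegral_smul_eq_flip (L := innerₗ ℝ)
    (μ := (volume : Measure ℝ)) (ν := (volume : Measure ℝ)) (f := (G : ℝ → ℂ)) (g := f)
    Real.continuous_fourierChar continuous_inner G.integrable h1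
  rw [flip_innerₗ] at e3
  have e4 : ∫ x, (𝓕 G) x • f x = ∫ x, G x • 𝓕 f x := by
    rw [SchwartzMap.fourier_coe]
    exact e3
  rw [e4]
  simp [hG]

theorem plancherel {f : ℝ → ℂ} (h1 : Integrable f) (h2 : MemLp f 2) :
    Integrable (fun k => ‖𝓕 f k‖ ^ 2) ∧ ∫ k, ‖𝓕 f k‖ ^ 2 = ∫ u, ‖f u‖ ^ 2 := by
  have hae := fourier_ae_eq h1 h2
  have hm : MemLp (𝓕 f) 2 := (memLp_congr_ae hae).1 (Lp.memLp _)
  refine ⟨(memLp_two_iff_integrable_sq_norm hm.1).1 hm, ?_⟩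
  have key : ∀ F : Lp (α := ℝ) ℂ 2 volume, inner ℂ F F = ((∫ a, ‖F a‖ ^ 2 : ℝ) : ℂ) := by
    intro F
    rw [L2.inner_def, ← integral_complex_ofReal]
    congr 1; ext a
    rw [inner_self_eq_norm_sq_to_K]
    simp
  have e := Lp.inner_fourier_eq (h2.toLp f) (h2.toLp f)
  rw [key, key] at e
  have e' := Complex.ofReal_injective e
  have n1 : ∫ k, ‖𝓕 f k‖ ^ 2 = ∫ a, ‖(𝓕 (h2.toLp f) : Lp (α := ℝ) ℂ 2 volume) a‖ ^ 2 := by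
    apply integral_congr_ae
    filter_upwards [hae] with x hx
    rw [hx]
  have n2 : ∫ k, ‖f k‖ ^ 2 = ∫ a, ‖h2.toLp f a‖ ^ 2 := by
    apply integral_congr_ae
    filter_upwards [h2.coeFn_toLp] with x hx
    rw [hx]
  rw [n1, n2, e']

end XXAux

namespace XXAux
open MeasureTheory
open scoped FourierTransform SchwartzMap

/-- The convolution kernel. -/
noncomputable def ck (u : ℝ) : ℝ := 1 / (2 * Real.pi * Real.cosh (u / 2))

theorem ck_continuous : Continuous ck := by
  unfold ck
  refine Continuous.div continuous_const (by fun_prop) fun x => ?_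
  have := Real.cosh_pos (x/2); positivity

theorem ck_pos (u : ℝ) : 0 < ck u := by
  have := Real.cosh_pos (u/2); unfold ck; positivity

theorem ck_le (u : ℝ) : ck u ≤ Real.exp (-((1/2)*|u|)) := by
  unfold ck
  have h1 : Real.exp (1/2*|u|) ≤ 2 * Real.cosh (u/2) := by
    rw [Real.cosh_eq]
    rcases abs_cases u with ⟨h, _⟩ | ⟨h, _⟩ <;> rw [h]
    · have := Real.exp_pos (-(u/2)); rw [show 1/2*u = u/2 by ring]; linarith
    · have := Real.exp_pos (u/2); rw [show 1/2*(-u) = -(u/2) by ring]; linarith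
  rw [Real.exp_neg, ← one_div]
  apply one_div_le_one_div_of_le (Real.exp_pos _)
  refine h1.trans ?_
  have := Real.cosh_pos (u/2)
  nlinarith [Real.pi_gt_three]

theorem ck_integrable : Integrable ck := by
  refine (integrable_exp_abs (c := 1/2) (by norm_num)).mono' ck_continuous.aestronglyMeasurable ?_
  filter_upwards with u
  rw [Real.norm_eq_abs, abs_of_pos (ck_pos u)]; exact ck_le u

theorem ck_le_one (u : ℝ) : ck u ≤ 1 :=
  (ck_le u).trans (Real.exp_le_one_iff.mpr (by have := abs_nonneg u; linarith))

theorem sig_log (u : ℝ) : Real.log (Real.sigmoid u) = -Real.log (1 + Real.exp (-u)) := by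
  rw [Real.sigmoid_def, Real.log_inv]

theorem sig_log' (u : ℝ) : Real.log (1 - Real.sigmoid u) = -u - Real.log (1 + Real.exp (-u)) := by
  rw [← Real.sigmoid_neg, ← Real.sigmoid_mul_rexp_neg, Real.log_mul (Real.sigmoid_pos _).ne'
    (Real.exp_pos _).ne', sig_log, Real.log_exp]; ring

theorem fourier_ck (k : ℝ) : 𝓕 (fun u => (ck u : ℂ)) k = ((1 / Real.cosh (ka * k) : ℝ) : ℂ) := by
  set ω : ℝ := 2 * Real.pi * k with hω
  set s : ℂ := 1/2 - ω * Complex.I with hs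
  set t : ℂ := 1/2 + ω * Complex.I with ht
  have hst : s + t = 1 := by rw [hs, ht]; ring
  have hsr : 0 < s.re := by simp [hs]
  have htr : 0 < t.re := by simp [ht]
  have hB := Complex.Gamma_mul_Gamma_eq_betaIntegral hsr htr
  rw [hst, Complex.Gamma_one, one_mul, show t = 1 - s by rw [← hst]; ring,
    Complex.Gamma_mul_Gamma_one_sub] at hB
  have hsin : Complex.sin (Real.pi * s) = ((Real.cosh (ka * k) : ℝ) : ℂ) := by
    rw [hs, show (Real.pi : ℂ) * (1/2 - ω * Complex.I) = Real.pi/2 - (Real.pi * ω : ℂ) * Complex.I by ring,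
      Complex.sin_pi_div_two_sub, Complex.cos_mul_I, Complex.ofReal_cosh]
    congr 1
    rw [hω]; simp only [ka]; push_cast; ring
  rw [hsin] at hB
  rw [Complex.betaIntegral, intervalIntegral.integral_of_le zero_le_one,
    integral_Ioc_eq_integral_Ioo, ← Real.range_sigmoid, ← Set.image_univ,
    integral_image_eq_integral_abs_deriv_smul (f' := fun x => Real.sigmoid x * (1 - Real.sigmoid x))
      MeasurableSet.univ (fun x _ => (Real.hasDerivAt_sigmoid x).hasDerivWithinAt)
      (Real.sigmoid_injective.injOn), setIntegral_univ] at hB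
  rw [Real.fourier_real_eq_integral_exp_smul]
  have key : ∀ u : ℝ, Complex.exp (((-2 * Real.pi * u * k : ℝ) : ℂ) * Complex.I) • (ck u : ℂ)
      = (1 / Real.pi : ℂ) * (|Real.sigmoid u * (1 - Real.sigmoid u)| •
        (((Real.sigmoid u : ℝ) : ℂ) ^ (s - 1) * (1 - ((Real.sigmoid u : ℝ) : ℂ)) ^ (1 - s - 1))) := by
    intro u
    have h0 := Real.sigmoid_pos u
    have h1 : 0 < 1 - Real.sigmoid u := by have := Real.sigmoid_lt_one u; linarith
    rw [abs_of_pos (mul_pos h0 h1), Complex.real_smul, smul_eq_mul,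
      Complex.cpow_def_of_ne_zero (by exact_mod_cast h0.ne'),
      show (1 - ((Real.sigmoid u : ℝ) : ℂ)) = ((1 - Real.sigmoid u : ℝ) : ℂ) by push_cast; ring,
      Complex.cpow_def_of_ne_zero (by exact_mod_cast h1.ne'),
      ← Complex.ofReal_log h0.le, ← Complex.ofReal_log h1.le, ← Complex.exp_add]
    set ℓ := Real.log (1 + Real.exp (-u)) with hℓ
    have e1 : Real.sigmoid u * (1 - Real.sigmoid u) = Real.exp (-ℓ + (-u - ℓ)) := by
      rw [Real.exp_add, ← sig_log, ← sig_log', Real.exp_log h0, Real.exp_log h1]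
    have e2 : ck u = (1 / Real.pi) * Real.exp (-ℓ - u / 2) := by
      rw [Real.exp_sub, Real.exp_neg, Real.exp_log (by positivity), ck, Real.cosh_eq]
      have : 1 + Real.exp (-u) = (Real.exp (u/2) + Real.exp (-(u/2))) * Real.exp (-(u/2)) := by
        rw [add_mul, ← Real.exp_add, ← Real.exp_add]; ring_nf; simp [add_comm]
      rw [this, Real.exp_neg]
      have := Real.exp_pos (u/2)
      field_simp
    rw [sig_log, sig_log', e1, e2]
    push_cast
    rw [mul_left_comm, ← Complex.exp_add, ← Complex.exp_add]
    congr 2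
    rw [hs, hω]; push_cast; ring
  simp_rw [key]
  rw [integral_const_mul, ← hB]
  have hp : (Real.pi : ℂ) ≠ 0 := by exact_mod_cast Real.pi_ne_zero
  push_cast
  field_simp

theorem fourier_ck_sq (k : ℝ) : ‖𝓕 (fun u => (ck u : ℂ)) k‖ ^ 2 = sk k := by
  rw [fourier_ck, Complex.norm_real, Real.norm_eq_abs, sq_abs]
  simp [sk, sg]

end XXAux

namespace XXAux
open MeasureTheory
open scoped FourierTransform SchwartzMap

/-- Bounded integrable functions. -/
structure BI {E : Type*} [NormedAddCommGroup E] (f : ℝ → E) : Prop where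
  int : Integrable f
  bdd : ∃ C, ∀ u, ‖f u‖ ≤ C

theorem BI.memLp {E : Type*} [NormedAddCommGroup E] {f : ℝ → E} (h : BI f) : MemLp f 2 := by
  rw [memLp_two_iff_integrable_sq_norm h.int.aestronglyMeasurable]
  obtain ⟨C, hC⟩ := h.bdd
  simp_rw [sq]
  exact h.int.norm.bdd_mul (c := C) h.int.aestronglyMeasurable.norm
    (Filter.Eventually.of_forall fun u => by rw [norm_norm]; exact hC u)

theorem BI.mul {K : Type*} [RCLike K] {f g : ℝ → K} (hf : BI f) (hg : BI g) :
    BI (fun u => f u * g u) := by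
  obtain ⟨C, hC⟩ := hf.bdd
  obtain ⟨D, hD⟩ := hg.bdd
  refine ⟨hg.int.bdd_mul (c := C) hf.int.aestronglyMeasurable (Filter.Eventually.of_forall hC), C * D, fun u => ?_⟩
  rw [norm_mul]
  exact mul_le_mul (hC u) (hD u) (norm_nonneg _) ((norm_nonneg _).trans (hC u))

theorem BI.mul' {K : Type*} [RCLike K] {f g : ℝ → K} (hf : BI f) (hg : Continuous g)
    (hb : ∃ C, ∀ u, ‖g u‖ ≤ C) : BI (fun u => f u * g u) := by
  obtain ⟨C, hC⟩ := hf.bdd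
  obtain ⟨D, hD⟩ := hb
  refine ⟨hf.int.mul_bdd (c := D) hg.aestronglyMeasurable (Filter.Eventually.of_forall hD), C * D, fun u => ?_⟩
  rw [norm_mul]
  exact mul_le_mul (hC u) (hD u) (norm_nonneg _) ((norm_nonneg _).trans (hC u))

theorem BI.const_mul {K : Type*} [RCLike K] {f : ℝ → K} (hf : BI f) (c : K) :
    BI (fun u => c * f u) := by
  obtain ⟨C, hC⟩ := hf.bdd
  refine ⟨hf.int.const_mul c, ‖c‖ * C, fun u => ?_⟩
  rw [norm_mul]
  exact mul_le_mul_of_nonneg_left (hC u) (norm_nonneg _)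

theorem BI.sum {ι E : Type*} [NormedAddCommGroup E] {s : Finset ι} {f : ι → ℝ → E}
    (hf : ∀ i ∈ s, BI (f i)) : BI (fun u => ∑ i ∈ s, f i u) := by
  refine ⟨integrable_finsetSum _ fun i hi => (hf i hi).int, ?_⟩
  have : ∀ i, ∃ C, i ∈ s → ∀ u, ‖f i u‖ ≤ C := fun i => by
    by_cases hi : i ∈ s
    · obtain ⟨C, hC⟩ := (hf i hi).bdd
      exact ⟨C, fun _ => hC⟩
    · exact ⟨0, fun h => absurd h hi⟩
  choose C hC using this
  exact ⟨∑ i ∈ s, C i, fun u => (norm_sum_le _ _).trans (Finset.sum_le_sum fun i hi => hC i hi u)⟩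

theorem BI.ofReal {f : ℝ → ℝ} (hf : BI f) : BI (fun u => (f u : ℂ)) := by
  obtain ⟨C, hC⟩ := hf.bdd
  exact ⟨hf.int.ofReal, C, fun u => by simpa using hC u⟩

theorem BI.re {f : ℝ → ℂ} (hf : BI f) : BI (fun u => (f u).re) := by
  obtain ⟨C, hC⟩ := hf.bdd
  exact ⟨hf.int.re, C, fun u => (Complex.abs_re_le_norm _).trans (hC u)⟩

theorem BI.im {f : ℝ → ℂ} (hf : BI f) : BI (fun u => (f u).im) := by
  obtain ⟨C, hC⟩ := hf.bdd
  exact ⟨hf.int.im, C, fun u => (Complex.abs_im_le_norm _).trans (hC u)⟩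

theorem intC {f : ℝ → ℝ} (hf : Integrable f) : Integrable (fun u => (f u : ℂ)) := hf.ofReal

/-- Convolution with the kernel. -/
noncomputable def cv (f : ℝ → ℂ) (v : ℝ) : ℂ := ∫ u, f u * (ck (v - u) : ℂ)

/-- Real convolution with the kernel. -/
noncomputable def cvr (f : ℝ → ℝ) (v : ℝ) : ℝ := ∫ u, f u * ck (v - u)

theorem cv_ofReal (f : ℝ → ℝ) (v : ℝ) : cv (fun u => (f u : ℂ)) v = (cvr f v : ℂ) := by
  unfold cv cvr
  rw [← integral_complex_ofReal]; simp

theorem cv_eq_conv (f : ℝ → ℂ) :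
    cv f = MeasureTheory.convolution f (fun u => (ck u : ℂ)) (ContinuousLinearMap.mul ℂ ℂ) volume := by
  ext v; simp [cv, MeasureTheory.convolution]

theorem cv_BI {f : ℝ → ℂ} (hf : Integrable f) : BI (cv f) := by
  refine ⟨?_, ∫ u, ‖f u‖, fun v => ?_⟩
  · rw [cv_eq_conv]; exact hf.integrable_convolution _ (intC ck_integrable)
  · refine norm_integral_le_of_norm_le hf.norm (Filter.Eventually.of_forall fun u => ?_)
    rw [norm_mul, Complex.norm_real, Real.norm_eq_abs, abs_of_pos (ck_pos _)]
    exact mul_le_of_le_one_right (norm_nonneg _) (ck_le_one _)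

theorem cv_fourier {f : ℝ → ℂ} (hf : Integrable f) (k : ℝ) :
    ‖𝓕 (cv f) k‖ ^ 2 = ‖𝓕 f k‖ ^ 2 * sk k := by
  have h := Real.fourier_mul_convolution_eq hf (intC ck_integrable) k
  rw [cv_eq_conv, h, norm_mul, mul_pow]
  congr 1
  exact fourier_ck_sq k

theorem cv_norm {f : ℝ → ℂ} (hf : Integrable f) :
    Integrable (fun k => ‖𝓕 f k‖ ^ 2 * sk k) ∧
    ∫ v, ‖cv f v‖ ^ 2 = ∫ k, ‖𝓕 f k‖ ^ 2 * sk k := by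
  obtain ⟨h1, h2⟩ := plancherel (cv_BI hf).int (cv_BI hf).memLp
  simp_rw [cv_fourier hf] at h1 h2
  exact ⟨h1, h2.symm⟩

theorem cvr_BI {f : ℝ → ℝ} (hf : Integrable f) : BI (cvr f) := by
  have := (cv_BI (intC hf)).re
  convert! this using 2 with v
  rw [cv_ofReal]; simp

theorem cvr_norm {f : ℝ → ℝ} (hf : Integrable f) :
    ∫ v, (cvr f v) ^ 2 = ∫ k, ‖𝓕 (fun u => (f u : ℂ)) k‖ ^ 2 * sk k := by
  rw [← (cv_norm (intC hf)).2]
  congr 1; ext v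
  rw [cv_ofReal]; simp

theorem ck_neg (u : ℝ) : ck (-u) = ck u := by
  unfold ck; rw [neg_div, Real.cosh_neg]

theorem cv_adj {φ : ℝ → ℝ} (hφ : Integrable φ) {f : ℝ → ℂ} (hf : Integrable f) :
    ∫ v, (cvr φ v : ℂ) * f v = ∫ u, (φ u : ℂ) * cv f u := by
  have hInt : Integrable (Function.uncurry fun v u => (φ u : ℂ) * (ck (v - u) : ℂ) * f v)
      (volume.prod volume) := by
    have h0 := (hf.mul_prod (ν := volume) (intC hφ)).bdd_mul (c := 1)
      (f := fun z : ℝ × ℝ => (ck (z.1 - z.2) : ℂ))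
      (by
        apply Continuous.aestronglyMeasurable
        exact Complex.continuous_ofReal.comp (ck_continuous.comp (by fun_prop)))
      (Filter.Eventually.of_forall fun z => by
        rw [Complex.norm_real, Real.norm_eq_abs, abs_of_pos (ck_pos _)]; exact ck_le_one _)
    refine h0.congr (Filter.Eventually.of_forall fun z => ?_)
    simp [Function.uncurry]; ring
  have h1 := integral_integral_swap hInt
  simp_rw [← cv_ofReal, cv, ← integral_mul_const, ← integral_const_mul]
  rw [h1]
  congr 1; ext u; congr 1; ext v
  rw [show u - v = -(v - u) by ring, ck_neg]; ring

end XXAux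

namespace XXAux
open MeasureTheory
open scoped FourierTransform SchwartzMap

set_option linter.unusedSectionVars false
section
variable {ι : Type*} [Fintype ι] [DecidableEq ι]

/-- Weighted Gram matrix. -/
noncomputable def Gr {α : Type*} [MeasurableSpace α] (μ : Measure α) (w : α → ℝ)
    (ψ : ι → α → ℝ) : Matrix ι ι ℝ :=
  Matrix.of fun a b => ∫ u, w u * (ψ a u * ψ b u) ∂μ

theorem Gr_symm {α : Type*} [MeasurableSpace α] (μ : Measure α) (w : α → ℝ)
    (ψ : ι → α → ℝ) (a b : ι) : Gr μ w ψ a b = Gr μ w ψ b a := by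
  simp only [Gr, Matrix.of_apply]
  simp_rw [mul_comm (ψ a _)]

theorem Gr_qf {α : Type*} [MeasurableSpace α] (μ : Measure α) (w : α → ℝ)
    (ψ : ι → α → ℝ) (hi : ∀ a b, Integrable (fun u => w u * (ψ a u * ψ b u)) μ) (v : ι → ℝ) :
    Integrable (fun u => w u * (∑ a, v a * ψ a u) ^ 2) μ ∧
    qf (Gr μ w ψ) v = ∫ u, w u * (∑ a, v a * ψ a u) ^ 2 ∂μ := by
  have h : (fun u => w u * (∑ a, v a * ψ a u) ^ 2)
      = fun u => ∑ a, ∑ b, v a * v b * (w u * (ψ a u * ψ b u)) := by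
    ext u
    rw [sq, Finset.sum_mul_sum, Finset.mul_sum]
    refine Finset.sum_congr rfl fun a _ => ?_
    rw [Finset.mul_sum]
    exact Finset.sum_congr rfl fun b _ => by ring
  rw [h]
  refine ⟨integrable_finsetSum _ fun a _ => integrable_finsetSum _ fun b _ => (hi a b).const_mul _, ?_⟩
  rw [integral_finsetSum _ fun a _ => integrable_finsetSum _ fun b _ => (hi a b).const_mul _]
  unfold qf
  refine Finset.sum_congr rfl fun a _ => ?_
  rw [integral_finsetSum _ fun b _ => (hi a b).const_mul _]
  refine Finset.sum_congr rfl fun b _ => ?_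
  rw [integral_const_mul]; rfl

/-- Orthonormal families. -/
structure ON (φ : ι → ℝ → ℝ) : Prop where
  bi : ∀ a, BI (φ a)
  orth : ∀ a b, ∫ u, φ a u * φ b u = if a = b then 1 else 0

theorem comb_BI {φ : ι → ℝ → ℝ} (h : ∀ a, BI (φ a)) (v : ι → ℝ) : BI (fun u => ∑ a, v a * φ a u) :=
  BI.sum fun a _ => (h a).const_mul _

theorem ON.comb {φ : ι → ℝ → ℝ} (h : ON φ) (v : ι → ℝ) :
    ∫ u, (∑ a, v a * φ a u) ^ 2 = ∑ a, v a ^ 2 := by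
  have := (Gr_qf volume (fun _ => 1) φ (fun a b => by simpa using ((h.bi a).mul (h.bi b)).int) v).2
  simp only [one_mul] at this
  rw [← this]
  unfold qf Gr
  simp [h.orth, sq]

theorem bessel {φ : ι → ℝ → ℝ} (h : ON φ) {f : ℝ → ℝ} (hf : BI f) :
    ∑ a, (∫ u, φ a u * f u) ^ 2 ≤ ∫ u, f u ^ 2 := by
  set c : ι → ℝ := fun a => ∫ u, φ a u * f u with hc
  have hs := comb_BI h.bi c
  have h1 : ∫ u, (∑ a, c a * φ a u) * f u = ∑ a, c a ^ 2 := by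
    simp_rw [Finset.sum_mul]
    rw [integral_finsetSum _ fun a _ => (((h.bi a).const_mul (c a)).mul hf).int]
    refine Finset.sum_congr rfl fun a _ => ?_
    simp_rw [mul_assoc]
    rw [integral_const_mul, sq]
  have h2 := h.comb c
  have i1 : Integrable (fun u => f u ^ 2) := by simpa only [sq] using (hf.mul hf).int
  have i2 : Integrable (fun u => (∑ a, c a * φ a u) ^ 2) := by simpa only [sq] using (hs.mul hs).int
  have i3 : Integrable (fun u => 2 * ((∑ a, c a * φ a u) * f u)) := ((hs.mul hf).int).const_mul 2
  have h3 : 0 ≤ ∫ u, (f u - ∑ a, c a * φ a u) ^ 2 := integral_nonneg fun u => sq_nonneg _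
  have h4 : ∫ u, (f u - ∑ a, c a * φ a u) ^ 2
      = (∫ u, f u ^ 2) + (∫ u, (∑ a, c a * φ a u) ^ 2) - ∫ u, 2 * ((∑ a, c a * φ a u) * f u) := by
    rw [← integral_add i1 i2, ← integral_sub (by exact i1.add i2) i3]
    congr 1; ext u; ring
  rw [h4, h2, integral_const_mul, h1] at h3
  show ∑ a, c a ^ 2 ≤ _
  linarith

theorem re_int {φ : ℝ → ℝ} (hφ : BI φ) {f : ℝ → ℂ} (hf : BI f) :
    ‖∫ u, (φ u : ℂ) * f u‖ ^ 2 = (∫ u, φ u * (f u).re) ^ 2 + (∫ u, φ u * (f u).im) ^ 2 := by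
  have h := (hφ.ofReal.mul hf).int
  rw [Complex.sq_norm, Complex.normSq_apply]
  have h1 : (∫ u, (φ u : ℂ) * f u).re = ∫ u, φ u * (f u).re := by
    have := integral_re h
    rw [show (∫ u, (φ u : ℂ) * f u).re = RCLike.re (∫ u, (φ u : ℂ) * f u) from rfl, ← this]
    congr 1; ext u; simp
  have h2 : (∫ u, (φ u : ℂ) * f u).im = ∫ u, φ u * (f u).im := by
    have := integral_im h
    rw [show (∫ u, (φ u : ℂ) * f u).im = RCLike.im (∫ u, (φ u : ℂ) * f u) from rfl, ← this]
    congr 1; ext u; simp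
  rw [h1, h2]; ring

theorem besselC {φ : ι → ℝ → ℝ} (h : ON φ) {f : ℝ → ℂ} (hf : BI f) :
    ∑ a, ‖∫ u, (φ a u : ℂ) * f u‖ ^ 2 ≤ ∫ u, ‖f u‖ ^ 2 := by
  have : ∀ a, ‖∫ u, (φ a u : ℂ) * f u‖ ^ 2 = (∫ u, φ a u * (f u).re) ^ 2 + (∫ u, φ a u * (f u).im) ^ 2 :=
    fun a => re_int (h.bi a) hf
  simp_rw [this]
  rw [Finset.sum_add_distrib]
  have i1 : Integrable (fun u => (f u).re ^ 2) := by simpa only [sq] using (hf.re.mul hf.re).int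
  have i2 : Integrable (fun u => (f u).im ^ 2) := by simpa only [sq] using (hf.im.mul hf.im).int
  have e : ∫ u, ‖f u‖ ^ 2 = (∫ u, (f u).re ^ 2) + ∫ u, (f u).im ^ 2 := by
    rw [← integral_add i1 i2]
    congr 1; ext u; rw [Complex.sq_norm, Complex.normSq_apply]; ring
  rw [e]
  exact add_le_add (bessel h hf.re) (bessel h hf.im)

theorem parsevalC {X : Matrix ι ι ℝ} {x : ι → ℝ} {e : ι → ι → ℝ} (h : SD X x e) (z : ι → ℂ) :
    ∑ i, ‖∑ a, (e i a : ℂ) * z a‖ ^ 2 = ∑ a, ‖z a‖ ^ 2 := by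
  have h1 := h.parseval (fun a => (z a).re)
  have h2 := h.parseval (fun a => (z a).im)
  simp_rw [Complex.sq_norm, Complex.normSq_apply, ← sq, Complex.re_sum, Complex.im_sum,
    Finset.sum_add_distrib]
  simp only [Complex.re_ofReal_mul, Complex.im_ofReal_mul]
  rw [h1, h2]

/-- Fourier transform of a real function. -/
noncomputable def Fr (f : ℝ → ℝ) (k : ℝ) : ℂ := 𝓕 (fun u => (f u : ℂ)) k

/-- The plane wave. -/
noncomputable def ew (k u : ℝ) : ℂ := Complex.exp (((-2 * Real.pi * u * k : ℝ) : ℂ) * Complex.I)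

theorem ew_norm (k u : ℝ) : ‖ew k u‖ = 1 := Complex.norm_exp_ofReal_mul_I _

theorem ew_cont (k : ℝ) : Continuous (ew k) := by unfold ew; fun_prop

theorem Fr_eq (f : ℝ → ℝ) (k : ℝ) : Fr f k = ∫ u, (f u : ℂ) * ew k u := by
  rw [Fr, Real.fourier_real_eq_integral_exp_smul]
  congr 1; ext u; rw [smul_eq_mul, mul_comm]; rfl

theorem BI.ew {f : ℝ → ℂ} (hf : BI f) (k : ℝ) : BI (fun u => f u * ew k u) :=
  hf.mul' (ew_cont k) ⟨1, fun u => (ew_norm k u).le⟩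

theorem Fr_comb {φ : ι → ℝ → ℝ} (h : ∀ a, BI (φ a)) (v : ι → ℝ) (k : ℝ) :
    Fr (fun u => ∑ a, v a * φ a u) k = ∑ a, (v a : ℂ) * Fr (φ a) k := by
  simp_rw [Fr_eq]
  push_cast
  simp_rw [Finset.sum_mul]
  rw [integral_finsetSum]
  · refine Finset.sum_congr rfl fun a _ => ?_
    simp_rw [mul_assoc]; rw [integral_const_mul]
  · intro a _
    simp_rw [mul_assoc]
    exact (((h a).ofReal.ew k).const_mul _).int

theorem Fr_planch {f : ℝ → ℝ} (hf : BI f) :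
    Integrable (fun k => ‖Fr f k‖ ^ 2) ∧ ∫ k, ‖Fr f k‖ ^ 2 = ∫ u, f u ^ 2 := by
  obtain ⟨h1, h2⟩ := plancherel hf.ofReal.int hf.ofReal.memLp
  refine ⟨h1, ?_⟩
  simpa [Fr] using h2

theorem Fr_cont {f : ℝ → ℝ} (hf : BI f) : Continuous (Fr f) :=
  VectorFourier.fourierIntegral_continuous
    Real.continuous_fourierChar (by exact continuous_inner) hf.ofReal.int

theorem cvr_comb {φ : ι → ℝ → ℝ} (h : ∀ a, BI (φ a)) (v : ι → ℝ) (t : ℝ) :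
    cvr (fun u => ∑ a, v a * φ a u) t = ∑ a, v a * cvr (φ a) t := by
  unfold cvr
  simp_rw [Finset.sum_mul]
  have : ∀ a, Integrable (fun u => v a * (φ a u * ck (t - u))) := fun a => by
    refine (((h a).mul' (g := fun u => ck (t - u)) (ck_continuous.comp (by fun_prop)) ⟨1, fun u => ?_⟩).const_mul _).int
    rw [Real.norm_eq_abs, abs_of_pos (ck_pos _)]; exact ck_le_one _
  simp_rw [mul_assoc]
  rw [integral_finsetSum _ fun a _ => this a]
  simp_rw [integral_const_mul]

/-- The Gram matrix of the convolved family. -/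
noncomputable def Ga (φ : ι → ℝ → ℝ) : Matrix ι ι ℝ := Gr volume (fun _ => 1) (fun a => cvr (φ a))

theorem Ga_int {φ : ι → ℝ → ℝ} (h : ∀ a, BI (φ a)) (a b : ι) :
    Integrable (fun u => (fun _ : ℝ => (1:ℝ)) u * (cvr (φ a) u * cvr (φ b) u)) := by
  simpa using ((cvr_BI (h a).int).mul (cvr_BI (h b).int)).int

theorem Ga_qf {φ : ι → ℝ → ℝ} (h : ∀ a, BI (φ a)) (v : ι → ℝ) :
    qf (Ga φ) v = ∫ u, (∑ a, v a * cvr (φ a) u) ^ 2 := by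
  have := (Gr_qf volume (fun _ => 1) (fun a => cvr (φ a)) (Ga_int h) v).2
  simpa [Ga] using this

theorem Ga_nonneg {φ : ι → ℝ → ℝ} (h : ∀ a, BI (φ a)) (v : ι → ℝ) : 0 ≤ qf (Ga φ) v := by
  rw [Ga_qf h]; exact integral_nonneg fun u => sq_nonneg _

theorem Ga_eig {φ : ι → ℝ → ℝ} (h : ON φ) {x : ι → ℝ} {e : ι → ι → ℝ} (hs : SD (Ga φ) x e) (i : ι) :
    Integrable (fun k => ‖Fr (fun u => ∑ a, e i a * φ a u) k‖ ^ 2 * sk k) ∧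
    ∫ k, ‖Fr (fun u => ∑ a, e i a * φ a u) k‖ ^ 2 * sk k = x i ∧
    Integrable (fun k => ‖Fr (fun u => ∑ a, e i a * φ a u) k‖ ^ 2) ∧
    ∫ k, ‖Fr (fun u => ∑ a, e i a * φ a u) k‖ ^ 2 = 1 := by
  have hb := comb_BI h.bi (e i)
  refine ⟨(cv_norm hb.ofReal.int).1, ?_, (Fr_planch hb).1, ?_⟩
  · rw [← hs.eig i, Ga_qf h.bi]
    simp_rw [← cvr_comb h.bi]
    rw [cvr_norm hb.int]; rfl
  · rw [(Fr_planch hb).2, h.comb, hs.norm]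

theorem Ga_pos {φ : ι → ℝ → ℝ} (h : ON φ) {x : ι → ℝ} {e : ι → ι → ℝ} (hs : SD (Ga φ) x e) (i : ι) :
    0 < x i := by
  obtain ⟨h1, h2, h3, h4⟩ := Ga_eig h hs i
  refine lt_of_le_of_ne (hs.eig_nonneg (Ga_nonneg h.bi) i) fun h0 => ?_
  rw [← h0, integral_eq_zero_iff_of_nonneg (fun k => mul_nonneg (sq_nonneg _) (sk_pos k).le) h1] at h2
  have : ∫ k, ‖Fr (fun u => ∑ a, e i a * φ a u) k‖ ^ 2 = ∫ k : ℝ, (0:ℝ) := by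
    apply integral_congr_ae
    filter_upwards [h2] with k hk
    rcases mul_eq_zero.mp hk with h | h
    · exact h
    · exact absurd h (sk_pos k).ne'
  rw [h4] at this; simp at this

theorem lower_abs {φ : ι → ℝ → ℝ} (h : ON φ) {x : ι → ℝ} {e : ι → ι → ℝ} (hs : SD (Ga φ) x e) :
    ∫ k, Ek k * ∑ a, ‖Fr (φ a) k‖ ^ 2 ≤ ∑ i, Fn (x i) := by
  have hEb : ∀ k, ‖Ek k‖ ≤ Real.log 2 := fun k => by
    rw [Real.norm_eq_abs, abs_of_nonneg (Ek_nonneg k), ← Fn_sk]; exact Fn_le_log_two _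
  have hpt : ∀ k, Ek k * ∑ a, ‖Fr (φ a) k‖ ^ 2
      = ∑ i, Ek k * ‖Fr (fun u => ∑ a, e i a * φ a u) k‖ ^ 2 := by
    intro k
    rw [← Finset.mul_sum, ← parsevalC hs]
    simp_rw [Fr_comb h.bi]
  have hii : ∀ i, Integrable (fun k => Ek k * ‖Fr (fun u => ∑ a, e i a * φ a u) k‖ ^ 2) := fun i =>
    (Ga_eig h hs i).2.2.1.bdd_mul Ek_continuous.aestronglyMeasurable (Filter.Eventually.of_forall hEb)
  simp_rw [hpt]
  rw [integral_finsetSum _ fun i _ => hii i]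
  refine Finset.sum_le_sum fun i _ => ?_
  obtain ⟨h1, h2, h3, h4⟩ := Ga_eig h hs i
  obtain ⟨m, hm, ht⟩ := Fn_sup.tan (x i) (Ga_pos h hs i)
  set p := fun k => ‖Fr (fun u => ∑ a, e i a * φ a u) k‖ ^ 2 with hp
  have hInt : Integrable (fun k => (Fn (x i) - m * x i) * p k + m * (p k * sk k)) :=
    (h3.const_mul _).add (h1.const_mul _)
  calc ∫ k, Ek k * p k ≤ ∫ k, ((Fn (x i) - m * x i) * p k + m * (p k * sk k)) := by
        refine integral_mono (hii i) hInt fun k => ?_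
        have := ht (sk k) (sk_pos k).le
        rw [Fn_sk] at this
        have hp0 : 0 ≤ p k := sq_nonneg _
        have := mul_le_mul_of_nonneg_right this hp0
        show Ek k * p k ≤ _
        linarith
    _ = Fn (x i) := by
        rw [integral_add (h3.const_mul _) (h1.const_mul _), integral_const_mul, integral_const_mul]
        show (Fn (x i) - m * x i) * (∫ k, ‖Fr (fun u => ∑ a, e i a * φ a u) k‖ ^ 2) + m * (∫ k, ‖Fr (fun u => ∑ a, e i a * φ a u) k‖ ^ 2 * sk k) = _
        rw [h4, h2]; ring

end
end XXAux

namespace XXAux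
open MeasureTheory
open scoped FourierTransform SchwartzMap
set_option linter.unusedSectionVars false
section
variable {ι : Type*} [Fintype ι] [DecidableEq ι]

/-- The smeared symbol. -/
noncomputable def Qs (θ : ℝ → ℝ) (k : ℝ) : ℝ := ∫ η, ‖Fr θ η‖ ^ 2 * sk (k - η)

theorem ew_mul (k l u : ℝ) : ew k u * ew l u = ew (l + k) u := by
  unfold ew; rw [← Complex.exp_add]; congr 1; push_cast; ring

theorem fourier_mod (θ : ℝ → ℝ) (k l : ℝ) : 𝓕 (fun u => (θ u : ℂ) * ew k u) l = Fr θ (l + k) := by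
  rw [Fr_eq, Real.fourier_real_eq_integral_exp_smul]
  congr 1; ext u
  rw [smul_eq_mul, ← ew_mul]; simp only [ew]; ring

theorem cv_mod {θ : ℝ → ℝ} (hθ : BI θ) (k : ℝ) :
    ∫ v, ‖cv (fun u => (θ u : ℂ) * ew k u) v‖ ^ 2 = Qs θ k := by
  rw [(cv_norm (hθ.ofReal.ew k).int).2]
  simp_rw [fourier_mod]
  unfold Qs
  rw [← integral_add_right_eq_self (fun η => ‖Fr θ η‖ ^ 2 * sk (k - η)) k]
  congr 1; ext l
  rw [show k - (l + k) = -l by ring, sk_neg]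

theorem Qs_int {θ : ℝ → ℝ} (hθ : BI θ) {B : ℝ} (hi : Integrable (fun η => η ^ 2 * ‖Fr θ η‖ ^ 2))
    (hB : ∫ η, η ^ 2 * ‖Fr θ η‖ ^ 2 ≤ B) {C : ℝ} (hC0 : 0 ≤ C)
    (hC : ∀ η, ∫ k, psi k * sk (k + η) ≤ (∫ k, psi k * sk k) + C * η ^ 2) :
    Integrable (fun k => psi k * Qs θ k) ∧
    ∫ k, psi k * Qs θ k ≤ (∫ k, psi k * sk k) * (∫ u, θ u ^ 2) + C * B := by
  obtain ⟨ht, htn⟩ := Fr_planch hθ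
  have hcont := Fr_cont hθ
  set H : ℝ → ℝ → ℝ := fun k η => psi k * (‖Fr θ η‖ ^ 2 * sk (k - η)) with hH
  have hmeas : Measurable (Function.uncurry H) := by
    refine Measurable.mul (psi_measurable.comp measurable_fst) (Measurable.mul ?_ ?_)
    · exact ((hcont.norm.pow 2).measurable).comp measurable_snd
    · exact sk_continuous.measurable.comp (measurable_fst.sub measurable_snd)
  have hH0 : ∀ k η, 0 ≤ H k η := fun k η =>
    mul_nonneg (psi_nonneg k) (mul_nonneg (sq_nonneg _) (sk_pos _).le)
  have hin : ∀ η, ∫ k, H k η = ‖Fr θ η‖ ^ 2 * ∫ k, psi k * sk (k + -η) := fun η => by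
    rw [← integral_const_mul]; congr 1; ext k; simp only [hH, sub_eq_add_neg]; ring
  have hle : ∀ η, ∫ k, H k η ≤ (∫ k, psi k * sk k) * ‖Fr θ η‖ ^ 2 + C * (η ^ 2 * ‖Fr θ η‖ ^ 2) := fun η => by
    rw [hin]
    have := mul_le_mul_of_nonneg_left (hC (-η)) (sq_nonneg ‖Fr θ η‖)
    nlinarith
  have hbi : Integrable (fun η => (∫ k, psi k * sk k) * ‖Fr θ η‖ ^ 2 + C * (η ^ 2 * ‖Fr θ η‖ ^ 2)) :=
    (ht.const_mul _).add (hi.const_mul _)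
  have hHi : Integrable (Function.uncurry H) (volume.prod volume) := by
    rw [integrable_prod_iff' hmeas.aestronglyMeasurable]
    constructor
    · refine Filter.Eventually.of_forall fun η => ?_
      refine ((J_integrable (-η)).const_mul (‖Fr θ η‖ ^ 2)).congr (Filter.Eventually.of_forall fun k => ?_)
      simp only [Function.uncurry, hH, sub_eq_add_neg]; ring
    · refine hbi.mono' ?_ ?_
      · exact (hmeas.norm.aestronglyMeasurable (μ := volume.prod volume)).prod_swap.integral_prod_right'
      · refine Filter.Eventually.of_forall fun η => ?_
        have e : ∫ k, ‖Function.uncurry H (k, η)‖ = ∫ k, H k η := by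
          congr 1; ext k; rw [Real.norm_eq_abs]; exact abs_of_nonneg (hH0 k η)
        rw [Real.norm_eq_abs, e, abs_of_nonneg (integral_nonneg fun k => hH0 k η)]
        exact hle η
  have hQ : ∀ k, psi k * Qs θ k = ∫ η, H k η := fun k => by
    rw [Qs, ← integral_const_mul]
  simp_rw [hQ]
  refine ⟨hHi.integral_prod_left, ?_⟩
  rw [integral_integral_swap hHi]
  refine (integral_mono hHi.integral_prod_right hbi hle).trans ?_
  rw [integral_add (ht.const_mul _) (hi.const_mul _), integral_const_mul, integral_const_mul, htn]
  have := mul_le_mul_of_nonneg_left hB hC0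
  linarith

theorem upper_abs {φ : ι → ℝ → ℝ} (h : ON φ) {x : ι → ℝ} {e : ι → ι → ℝ} (hs : SD (Ga φ) x e)
    {θ : ℝ → ℝ} (hθ : BI θ) {B : ℝ} (hi : Integrable (fun η => η ^ 2 * ‖Fr θ η‖ ^ 2))
    (hB : ∫ η, η ^ 2 * ‖Fr θ η‖ ^ 2 ≤ B) {C : ℝ} (hC0 : 0 ≤ C)
    (hC : ∀ η, ∫ k, psi k * sk (k + η) ≤ (∫ k, psi k * sk k) + C * η ^ 2) :
    ∑ i, Fn (x i) / x i * (∫ u, θ u ^ 2 * (∑ a, e i a * cvr (φ a) u) ^ 2)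
      ≤ (∫ u, θ u ^ 2) / 12 + C * B := by
  have hx := Ga_pos h hs
  obtain ⟨hQi, hQ⟩ := Qs_int hθ hi hB hC0 hC
  set g : ι → ℝ → ℝ := fun a => cvr (φ a) with hg
  have hgb : ∀ a, BI (g a) := fun a => cvr_BI (h.bi a).int
  set f : ι → ℝ → ℝ := fun i u => (√(x i))⁻¹ * ∑ a, e i a * g a u with hf
  have hGb : ∀ i, BI (fun u => ∑ a, e i a * g a u) := fun i => comb_BI hgb (e i)
  have hfb : ∀ i, BI (f i) := fun i => (hGb i).const_mul _
  have hGij : ∀ i j, ∫ u, (∑ a, e i a * g a u) * (∑ b, e j b * g b u) = if i = j then x i else 0 := by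
    intro i j
    have e1 : ∫ u, (∑ a, e i a * g a u) * (∑ b, e j b * g b u) = ∑ a, ∑ b, e i a * e j b * Ga φ a b := by
      simp_rw [Finset.sum_mul_sum]
      have hI : ∀ a b, Integrable (fun u => e i a * g a u * (e j b * g b u)) := fun a b =>
        (((hgb a).const_mul _).mul ((hgb b).const_mul _)).int
      rw [integral_finsetSum _ fun a _ => integrable_finsetSum _ fun b _ => hI a b]
      refine Finset.sum_congr rfl fun a _ => ?_
      rw [integral_finsetSum _ fun b _ => hI a b]
      refine Finset.sum_congr rfl fun b _ => ?_
      simp only [Ga, Gr, Matrix.of_apply, one_mul]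
      rw [← integral_const_mul]
      congr 1; ext u; simp only [hg]; ring
    have e2 : ∑ a, ∑ b, e i a * e j b * Ga φ a b
        = ∑ l, x l * ((∑ a, e i a * e l a) * (∑ b, e j b * e l b)) := by
      simp_rw [hs.eq, Finset.sum_mul_sum, Finset.mul_sum]
      rw [Finset.sum_comm' (t' := Finset.univ) (s' := fun _ => Finset.univ) (by simp)]
      rw [Finset.sum_comm]
      conv_rhs => rw [Finset.sum_comm]
      refine Finset.sum_congr rfl fun a _ => ?_
      conv_rhs => rw [Finset.sum_comm]
      refine Finset.sum_congr rfl fun b _ => Finset.sum_congr rfl fun l _ => ?_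
      ring
    rw [e1, e2]
    simp_rw [hs.orth]
    by_cases hij : i = j
    · subst hij; simp
    · rw [if_neg hij]
      refine Finset.sum_eq_zero fun l _ => ?_
      by_cases hil : i = l
      · subst hil; simp [Ne.symm hij]
      · simp [hil]
  have hON : ON f := ⟨hfb, fun i j => by
    have : ∀ u, f i u * f j u = ((√(x i))⁻¹ * (√(x j))⁻¹) *
        ((∑ a, e i a * g a u) * (∑ b, e j b * g b u)) := fun u => by simp only [hf]; ring
    simp_rw [this]
    rw [integral_const_mul, hGij]
    split_ifs with hij
    · subst hij
      rw [← mul_inv, Real.mul_self_sqrt (hx i).le, inv_mul_cancel₀ (hx i).ne']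
    · simp⟩
  set p : ι → ℝ → ℝ := fun i k => ‖Fr (fun u => f i u * θ u) k‖ ^ 2 with hp
  have hp0 : ∀ i k, 0 ≤ p i k := fun i k => sq_nonneg _
  have hFi : ∀ i k, Fr (fun u => f i u * θ u) k = ∫ u, (f i u : ℂ) * ((θ u : ℂ) * ew k u) := fun i k => by
    rw [Fr_eq]; push_cast; simp_rw [mul_assoc]
  have hEb : ∀ k, BI (fun u => (θ u : ℂ) * ew k u) := fun k => hθ.ofReal.ew k
  have hp1 : ∀ k, ∑ i, p i k ≤ ∫ u, θ u ^ 2 := fun k => by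
    have := besselC hON (hEb k)
    simp_rw [← hFi] at this
    refine this.trans (le_of_eq ?_)
    congr 1; ext u; rw [norm_mul, ew_norm, mul_one, Complex.norm_real, Real.norm_eq_abs, sq_abs]
  have hp2 : ∀ k, ∑ i, x i * p i k ≤ Qs θ k := fun k => by
    have e1 : ∀ i, x i * p i k = ‖∑ a, (e i a : ℂ) * ∫ u, (φ a u : ℂ) * cv (fun u => (θ u : ℂ) * ew k u) u‖ ^ 2 := by
      intro i
      have e2 : Fr (fun u => f i u * θ u) k = (((√(x i))⁻¹ : ℝ) : ℂ) *
          ∑ a, (e i a : ℂ) * ∫ u, (φ a u : ℂ) * cv (fun u => (θ u : ℂ) * ew k u) u := by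
        simp_rw [hFi, ← cv_adj (h.bi _).int (hEb k).int]
        simp only [hf]
        push_cast
        simp_rw [mul_assoc]
        rw [integral_const_mul]
        congr 1
        simp_rw [Finset.sum_mul, mul_assoc]
        rw [integral_finsetSum]
        · simp_rw [integral_const_mul]; rfl
        · intro a _
          exact (((hgb a).ofReal.mul (hEb k)).const_mul _).int
      simp only [hp]
      rw [e2, norm_mul, mul_pow, Complex.norm_real, Real.norm_eq_abs, sq_abs, inv_pow,
        Real.sq_sqrt (hx i).le, ← mul_assoc, mul_inv_cancel₀ (hx i).ne', one_mul]
    simp_rw [e1]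
    rw [parsevalC hs, ← cv_mod hθ]
    exact besselC h (cv_BI (hEb k).int)
  have hpi : ∀ i, Integrable (p i) ∧ ∫ k, p i k = ∫ u, (f i u * θ u) ^ 2 := fun i =>
    Fr_planch ((hfb i).mul hθ)
  have hterm : ∀ i, Fn (x i) / x i * (∫ u, θ u ^ 2 * (∑ a, e i a * g a u) ^ 2) = ∫ k, Fn (x i) * p i k := by
    intro i
    rw [integral_const_mul, (hpi i).2, div_mul_eq_mul_div, mul_div_assoc]
    congr 1
    have : ∀ u, (f i u * θ u) ^ 2 = (x i)⁻¹ * (θ u ^ 2 * (∑ a, e i a * g a u) ^ 2) := fun u => by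
      simp only [hf]
      rw [mul_pow, mul_pow, inv_pow, Real.sq_sqrt (hx i).le]; ring
    simp_rw [this]
    rw [integral_const_mul]; field_simp
  rw [Finset.sum_congr rfl fun i _ => hterm i]
  rw [← integral_finsetSum _ fun i _ => (hpi i).1.const_mul _]
  have hInt : Integrable (fun k => (∫ u, θ u ^ 2) * (Ek k - psi k * sk k) + psi k * Qs θ k) :=
    ((Ek_integrable.sub psisk_integrable).const_mul _).add hQi
  have hmain : ∫ k, ∑ i, Fn (x i) * p i k ≤ ∫ k, ((∫ u, θ u ^ 2) * (Ek k - psi k * sk k) + psi k * Qs θ k) := by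
    refine integral_mono_ae (integrable_finsetSum _ fun i _ => (hpi i).1.const_mul _) hInt ?_
    filter_upwards [ae_ne 0] with k hk
    have h1 : ∀ i, Fn (x i) * p i k ≤ (Ek k - psi k * sk k) * p i k + psi k * (x i * p i k) := fun i => by
      have := mul_le_mul_of_nonneg_right (tangent_k hk (hx i).le) (hp0 i k)
      linarith
    refine (Finset.sum_le_sum fun i _ => h1 i).trans ?_
    rw [Finset.sum_add_distrib, ← Finset.mul_sum, ← Finset.mul_sum]
    have h2 := mul_le_mul_of_nonneg_left (hp1 k) (sub_nonneg.mpr (psisk_le k))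
    have h3 := mul_le_mul_of_nonneg_left (hp2 k) (psi_nonneg k)
    show _ ≤ (∫ u, θ u ^ 2) * (Ek k - psi k * sk k) + psi k * Qs θ k
    linarith
  refine hmain.trans ?_
  have hsub : Integrable (fun k => Ek k - psi k * sk k) := Ek_integrable.sub psisk_integrable
  rw [integral_add (hsub.const_mul _) hQi, integral_const_mul,
    integral_sub Ek_integrable psisk_integrable, Ek_integral]
  linarith

end
end XXAux

namespace XXAux
open MeasureTheory
open scoped FourierTransform SchwartzMap

/-- Smooth cutoff. -/
noncomputable def th (L u : ℝ) : ℝ := Real.sigmoid (2 * (u + L)) - Real.sigmoid (2 * (u - L))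

theorem sig_cont : Continuous Real.sigmoid := continuous_sigmoid

theorem th_cont (L : ℝ) : Continuous (th L) := by
  unfold th
  exact (sig_cont.comp (by fun_prop)).sub (sig_cont.comp (by fun_prop))

theorem th_nonneg {L : ℝ} (hL : 0 ≤ L) (u : ℝ) : 0 ≤ th L u := by
  unfold th; rw [sub_nonneg]; exact Real.sigmoid_le (by linarith)

theorem th_le_one (L u : ℝ) : th L u ≤ 1 := by
  unfold th
  linarith [Real.sigmoid_le_one (2 * (u + L)), Real.sigmoid_nonneg (2 * (u - L))]

theorem sig_le_exp (u : ℝ) : Real.sigmoid u ≤ Real.exp u := by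
  have h := Real.sigmoid_mul_rexp_neg (-u)
  rw [neg_neg] at h
  rw [← h]
  exact mul_le_of_le_one_left (Real.exp_pos _).le (Real.sigmoid_le_one _)

theorem th_le_exp (L u : ℝ) : th L u ≤ Real.exp (2 * L) * Real.exp (-(2 * |u|)) := by
  rw [← Real.exp_add]
  rcases abs_cases u with ⟨h, _⟩ | ⟨h, _⟩ <;> rw [h] <;> unfold th
  · have h1 := sig_le_exp (-(2 * (u - L)))
    rw [Real.sigmoid_neg] at h1
    have h2 := Real.sigmoid_le_one (2 * (u + L))
    rw [show 2 * L + -(2 * u) = -(2 * (u - L)) by ring]; linarith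
  · have h1 := sig_le_exp (2 * (u + L))
    have h2 := Real.sigmoid_nonneg (2 * (u - L))
    rw [show 2 * L + -(2 * -u) = (2 * (u + L)) by ring]; linarith

theorem th_int {L : ℝ} (hL : 0 ≤ L) : Integrable (th L) := by
  refine ((integrable_exp_abs (c := 2) (by norm_num)).const_mul (Real.exp (2 * L))).mono'
    (th_cont L).aestronglyMeasurable (Filter.Eventually.of_forall fun u => ?_)
  rw [Real.norm_eq_abs, abs_of_nonneg (th_nonneg hL u)]; exact th_le_exp L u

theorem th_BI {L : ℝ} (hL : 0 ≤ L) : BI (th L) := ⟨th_int hL, 1, fun u => by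
  rw [Real.norm_eq_abs, abs_of_nonneg (th_nonneg hL u)]; exact th_le_one L u⟩

theorem sig_eq (u : ℝ) : Real.sigmoid u = Real.exp u / (1 + Real.exp u) := by
  rw [Real.sigmoid_def, Real.exp_neg]
  have := Real.exp_pos u
  field_simp; ring

theorem th_integral {L : ℝ} (hL : 0 ≤ L) : ∫ u, th L u = 2 * L := by
  set f : ℝ → ℝ := fun u => (1/2) * (Real.log (1 + Real.exp (2 * (u + L))) - Real.log (1 + Real.exp (2 * (u - L)))) with hf
  have hd : ∀ u, HasDerivAt f (th L u) u := by
    intro u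
    have h1 : ∀ c : ℝ, HasDerivAt (fun u => Real.log (1 + Real.exp (2 * (u + c)))) (2 * Real.sigmoid (2 * (u + c))) u := by
      intro c
      have h2 : HasDerivAt (fun u => 1 + Real.exp (2 * (u + c))) (Real.exp (2 * (u + c)) * (2 * 1)) u :=
        (((hasDerivAt_id u).add_const c).const_mul 2).exp.const_add 1
      have h3 := h2.log (by positivity)
      convert! h3 using 1
      rw [sig_eq]; ring
    have h4 := ((h1 L).sub (h1 (-L))).const_mul (1/2)
    convert! h4 using 1
    unfold th; rw [← sub_eq_add_neg]; ring
  have hbot : Filter.Tendsto f Filter.atBot (nhds 0) := by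
    have h1 : ∀ c : ℝ, Filter.Tendsto (fun u => Real.log (1 + Real.exp (2 * (u + c)))) Filter.atBot (nhds 0) := by
      intro c
      have : Filter.Tendsto (fun u : ℝ => 1 + Real.exp (2 * (u + c))) Filter.atBot (nhds (1 + 0)) := by
        refine (Real.tendsto_exp_atBot.comp ?_).const_add 1
        exact Filter.Tendsto.const_mul_atBot (by norm_num) (Filter.tendsto_atBot_add_const_right _ _ Filter.tendsto_id)
      have h2 := this.log (by norm_num)
      simpa using h2
    have := ((h1 L).sub (h1 (-L))).const_mul (1/2)
    simpa [hf, sub_eq_add_neg] using this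
  have htop : Filter.Tendsto f Filter.atTop (nhds (2 * L)) := by
    have e1 : ∀ c u : ℝ, Real.log (1 + Real.exp (2 * (u + c))) = 2 * (u + c) + Real.log (1 + Real.exp (-(2 * (u + c)))) := by
      intro c u
      have : 1 + Real.exp (2 * (u + c)) = Real.exp (2 * (u + c)) * (1 + Real.exp (-(2 * (u + c)))) := by
        rw [mul_add (Real.exp _), ← Real.exp_add]; simp [add_comm]
      rw [this, Real.log_mul (Real.exp_pos _).ne' (by positivity), Real.log_exp]
    have h1 : ∀ c : ℝ, Filter.Tendsto (fun u => Real.log (1 + Real.exp (-(2 * (u + c))))) Filter.atTop (nhds 0) := by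
      intro c
      have : Filter.Tendsto (fun u : ℝ => 1 + Real.exp (-(2 * (u + c)))) Filter.atTop (nhds (1 + 0)) := by
        refine (Real.tendsto_exp_atBot.comp ?_).const_add 1
        refine Filter.tendsto_neg_atTop_atBot.comp ?_
        exact Filter.Tendsto.const_mul_atTop (by norm_num) (Filter.tendsto_atTop_add_const_right _ _ Filter.tendsto_id)
      have h2 := this.log (by norm_num)
      simpa using h2
    have h5 := (((h1 L).sub (h1 (-L))).const_mul (1/2)).const_add (2 * L)
    simp only [sub_zero, mul_zero, add_zero] at h5
    refine h5.congr fun u => ?_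
    simp only [hf]
    rw [sub_eq_add_neg u L, e1, e1]; ring
  have := integral_of_hasDerivAt_of_tendsto hd (th_int hL) hbot htop
  rw [this]; ring

theorem th_sq_integral {L : ℝ} (hL : 0 ≤ L) : ∫ u, th L u ^ 2 ≤ 2 * L := by
  rw [← th_integral hL]
  refine integral_mono (by simpa only [sq] using ((th_BI hL).mul (th_BI hL)).int) (th_int hL) fun u => ?_
  show th L u ^ 2 ≤ th L u
  nlinarith [th_nonneg hL u, th_le_one L u]

theorem sig_deriv (u : ℝ) : Real.sigmoid u * (1 - Real.sigmoid u) = sg (u/2) / 4 := by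
  unfold sg
  rw [sig_eq, Real.cosh_eq, Real.exp_neg]
  have h : Real.exp u = Real.exp (u/2) ^ 2 := by rw [← Real.exp_nat_mul]; ring_nf
  rw [h]
  have := Real.exp_pos (u/2)
  field_simp; ring

theorem th_deriv (L u : ℝ) : HasDerivAt (th L) ((sg (u + L) - sg (u - L)) / 2) u := by
  have h1 : ∀ c : ℝ, HasDerivAt (fun u => Real.sigmoid (2 * (u + c))) (sg (u + c) / 2) u := by
    intro c
    have h2 : HasDerivAt (fun u => (2 * (u + c))) (2 * 1) u := ((hasDerivAt_id u).add_const c).const_mul 2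
    have h3 := (Real.hasDerivAt_sigmoid (2 * (u + c))).comp u h2
    convert! h3 using 1
    rw [sig_deriv, mul_div_cancel_left₀ _ (by norm_num : (2:ℝ) ≠ 0)]; ring
  have := (h1 L).sub (h1 (-L))
  convert! this using 1
  rw [sub_eq_add_neg u L]; ring

/-- Constant bounding the Dirichlet energy of the cutoff. -/
noncomputable def thB : ℝ := ∫ u, sg u

theorem thB_nonneg : 0 ≤ thB := integral_nonneg fun u => (sg_pos u).le

theorem th_energy {L : ℝ} (hL : 0 ≤ L) : Integrable (fun η => η ^ 2 * ‖Fr (th L) η‖ ^ 2) ∧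
    ∫ η, η ^ 2 * ‖Fr (th L) η‖ ^ 2 ≤ thB := by
  set d : ℝ → ℝ := fun u => (sg (u + L) - sg (u - L)) / 2 with hd
  have i1 : ∀ c, Integrable (fun u => sg (u + c)) := fun c => sg_integrable.comp_add_right c
  have hdi : Integrable d := ((i1 L).sub (by simpa [sub_eq_add_neg] using i1 (-L))).div_const 2
  have hdb : ∀ u, |d u| ≤ 1 := fun u => by
    rw [abs_le]; simp only [hd]
    have := sg_le_one (u + L); have := sg_le_one (u - L); have := (sg_pos (u + L)).le; have := (sg_pos (u - L)).le
    constructor <;> linarith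
  have hdBI : BI d := ⟨hdi, 1, hdb⟩
  have hdc : ∀ u, HasDerivAt (fun u => (th L u : ℂ)) (d u : ℂ) u := fun u => (th_deriv L u).ofReal_comp
  have hde : deriv (fun u => (th L u : ℂ)) = fun u => (d u : ℂ) := funext fun u => (hdc u).deriv
  have hF := Real.fourier_deriv (f := fun u => (th L u : ℂ)) (th_BI hL).ofReal.int
    (fun u => (hdc u).differentiableAt) (by rw [hde]; exact hdBI.ofReal.int)
  rw [hde] at hF
  have hFr : ∀ η, η ^ 2 * ‖Fr (th L) η‖ ^ 2 = (1 / (2 * Real.pi)) ^ 2 * ‖Fr d η‖ ^ 2 := by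
    intro η
    have h1 : Fr d η = (2 * Real.pi * Complex.I * η) • Fr (th L) η := congrFun hF η
    rw [h1, norm_smul]
    have : ‖(2 * Real.pi * Complex.I * η : ℂ)‖ ^ 2 = (2 * Real.pi * η) ^ 2 := by
      simp [mul_pow, abs_of_pos Real.pi_pos]
    rw [mul_pow, this]
    have := Real.pi_pos
    field_simp
  simp_rw [hFr]
  obtain ⟨h1, h2⟩ := Fr_planch hdBI
  refine ⟨h1.const_mul _, ?_⟩
  rw [integral_const_mul, h2]
  have h3 : ∫ u, d u ^ 2 ≤ ∫ u, (sg (u + L) + sg (u + -L)) / 2 := by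
    refine integral_mono (by simpa only [sq] using (hdBI.mul hdBI).int) (((i1 L).add (i1 (-L))).div_const 2) fun u => ?_
    show d u ^ 2 ≤ (sg (u + L) + sg (u + -L)) / 2
    have h4 := hdb u
    have h5 : |d u| ≤ (sg (u + L) + sg (u + -L)) / 2 := by
      rw [abs_le]; simp only [hd, ← sub_eq_add_neg]
      have := (sg_pos (u + L)).le; have := (sg_pos (u - L)).le
      constructor <;> linarith
    rw [← sq_abs]; nlinarith [abs_nonneg (d u)]
  have h4 : ∫ u, (sg (u + L) + sg (u + -L)) / 2 = thB := by
    rw [integral_div, integral_add (i1 L) (i1 (-L)), integral_add_right_eq_self, integral_add_right_eq_self]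
    unfold thB; ring
  have h5 : (1 / (2 * Real.pi)) ^ 2 ≤ 1 := by
    have := Real.pi_gt_three
    rw [div_pow, div_le_one (by positivity)]; nlinarith
  have h6 : 0 ≤ ∫ u, d u ^ 2 := integral_nonneg fun u => sq_nonneg _
  nlinarith

/-- Constant for the tails. -/
noncomputable def thW : ℝ := 2 * ∫ s, Real.pi * ck (2 * s)

theorem ck2_int : Integrable (fun s => Real.pi * ck (2 * s)) :=
  (ck_integrable.comp_mul_left' (by norm_num : (2:ℝ) ≠ 0)).const_mul _

theorem sig_ck (s : ℝ) : Real.sigmoid (2 * s) * Real.exp (-s) = Real.pi * ck (2 * s) := by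
  rw [sig_eq, ck, Real.cosh_eq, mul_div_cancel_left₀ s (by norm_num : (2:ℝ) ≠ 0),
    Real.exp_neg, show 2 * s = s + s by ring, Real.exp_add]
  have := Real.exp_pos s; have := Real.pi_pos
  field_simp; ring

theorem th_tail {L : ℝ} (u : ℝ) :
    1 - th L u ^ 2 ≤ 2 * (Real.sigmoid (2 * (-u - L)) + Real.sigmoid (2 * (u - L))) := by
  have h1 := th_le_one L u
  have h2 : 1 - th L u = Real.sigmoid (2 * (-u - L)) + Real.sigmoid (2 * (u - L)) := by
    rw [th, show 2 * (-u - L) = -(2 * (u + L)) by ring, Real.sigmoid_neg]; ring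
  rw [← h2]; nlinarith

theorem tail1 (L : ℝ) : Integrable (fun u => Real.sigmoid (2 * (u - L)) * Real.exp (-u)) ∧
    ∫ u, 2 * (Real.sigmoid (2 * (u - L)) * Real.exp (-u)) = Real.exp (-L) * thW := by
  have e : ∀ u, Real.sigmoid (2 * (u - L)) * Real.exp (-u) = Real.exp (-L) * (Real.pi * ck (2 * (u - L))) := by
    intro u
    rw [← sig_ck, mul_left_comm, ← Real.exp_add]; ring_nf
  simp_rw [e]
  refine ⟨(ck2_int.comp_sub_right L).const_mul _, ?_⟩
  rw [integral_const_mul, integral_const_mul, integral_sub_right_eq_self (fun s => Real.pi * ck (2 * s)), thW]; ring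

theorem tail2 (L : ℝ) : Integrable (fun u => Real.sigmoid (2 * (-u - L)) * Real.exp u) ∧
    ∫ u, 2 * (Real.sigmoid (2 * (-u - L)) * Real.exp u) = Real.exp (-L) * thW := by
  have h := tail1 L
  constructor
  · simpa using h.1.comp_neg
  · rw [← h.2, ← integral_neg_eq_self]; simp

theorem thW_nonneg : 0 ≤ thW :=
  mul_nonneg (by norm_num) (integral_nonneg fun s => mul_nonneg Real.pi_pos.le (ck_pos _).le)

end XXAux

namespace XXAux
open MeasureTheory
open scoped FourierTransform SchwartzMap

/-- Cell endpoints. -/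
noncomputable def al (N p : ℝ) : ℝ := Real.log (p / (N - p))
/-- Square root of the density. -/
noncomputable def cf (N u : ℝ) : ℝ := √N / (2 * Real.cosh (u / 2))
/-- Cell function. -/
noncomputable def cell (N p q : ℝ) : ℝ → ℝ := (Set.Ioc (al N p) (al N q)).indicator (cf N)

theorem cf_cont (N : ℝ) : Continuous (cf N) := by
  unfold cf
  refine Continuous.div continuous_const (by fun_prop) fun x => ?_
  have := Real.cosh_pos (x/2); positivity

theorem cf_nonneg (N u : ℝ) : 0 ≤ cf N u := by
  have := Real.cosh_pos (u/2); unfold cf; positivity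

theorem sig_al {N p : ℝ} (hp : 0 < p) (hN : p < N) : Real.sigmoid (al N p) = p / N := by
  have h1 : 0 < N - p := by linarith
  have hN0 : N ≠ 0 := by linarith
  rw [sig_eq, al, Real.exp_log (by positivity)]
  have h2 : 1 + p / (N - p) = N / (N - p) := by field_simp; ring
  rw [h2]; field_simp

theorem al_mono {N p q : ℝ} (hp : 0 < p) (hpq : p ≤ q) (hN : q < N) : al N p ≤ al N q := by
  have h1 : 0 < N - q := by linarith
  have h2 : 0 < N - p := by linarith
  unfold al
  apply Real.log_le_log (by positivity)
  rw [div_le_div_iff₀ h2 h1]; nlinarith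

theorem cell_bdd {N p q : ℝ} (u : ℝ) : ‖cell N p q u‖ ≤ √N := by
  unfold cell
  refine (norm_indicator_le_norm_self _ _).trans ?_
  rw [Real.norm_eq_abs, abs_of_nonneg (cf_nonneg N u), cf]
  apply div_le_self (Real.sqrt_nonneg _)
  linarith [Real.one_le_cosh (u/2)]

theorem cell_BI (N p q : ℝ) : BI (cell N p q) := by
  refine ⟨?_, √N, cell_bdd⟩
  rw [cell, integrable_indicator_iff measurableSet_Ioc]
  exact ((cf_cont N).integrableOn_Icc).mono_set Set.Ioc_subset_Icc_self

theorem cell_nonneg (N p q u : ℝ) : 0 ≤ cell N p q u :=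
  Set.indicator_nonneg (fun u _ => cf_nonneg N u) u

theorem cell_int {N p q : ℝ} (h : al N p ≤ al N q) {E : Type*} [NormedAddCommGroup E] [NormedSpace ℝ E] (f : ℝ → E) :
    ∫ u, cell N p q u • f u = ∫ u in (al N p)..(al N q), cf N u • f u := by
  rw [intervalIntegral.integral_of_le h, ← integral_indicator measurableSet_Ioc]
  congr 1; ext u
  unfold cell
  by_cases hu : u ∈ Set.Ioc (al N p) (al N q) <;> simp [hu]

theorem cf_sq {N : ℝ} (hN : 0 ≤ N) (u : ℝ) : cf N u ^ 2 = N * (Real.sigmoid u * (1 - Real.sigmoid u)) := by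
  rw [sig_deriv, cf, div_pow, Real.sq_sqrt hN, sg]
  ring

theorem cell_norm {N p q : ℝ} (hp : 0 < p) (hpq : p ≤ q) (hN : q < N) :
    ∫ u, cell N p q u * cell N p q u = q - p := by
  have h1 := al_mono hp hpq hN
  have h2 := cell_int h1 (cell N p q)
  simp only [smul_eq_mul] at h2
  rw [h2]
  have h3 : ∫ u in (al N p)..(al N q), cf N u * cell N p q u
      = ∫ u in (al N p)..(al N q), N * (Real.sigmoid u * (1 - Real.sigmoid u)) := by
    rw [intervalIntegral.integral_of_le h1, intervalIntegral.integral_of_le h1]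
    refine setIntegral_congr_fun measurableSet_Ioc fun u hu => ?_
    simp only [cell, Set.indicator_of_mem hu]
    rw [← cf_sq (by linarith)]; ring
  rw [h3, intervalIntegral.integral_eq_sub_of_hasDerivAt (f := fun u => N * Real.sigmoid u)
    (fun u _ => (Real.hasDerivAt_sigmoid u).const_mul N)
    (Continuous.intervalIntegrable (by
      exact continuous_const.mul (sig_cont.mul (continuous_const.sub sig_cont))) _ _)]
  rw [sig_al hp (by linarith), sig_al (by linarith) hN]
  have : N ≠ 0 := by linarith
  field_simp

theorem cell_disj {N p q p' q' : ℝ} (h : al N q ≤ al N p') (u : ℝ) :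
    cell N p q u * cell N p' q' u = 0 := by
  unfold cell
  by_cases hu : u ∈ Set.Ioc (al N p) (al N q)
  · have : u ∉ Set.Ioc (al N p') (al N q') := fun h' => by
      have := hu.2; have := h'.1; linarith
    simp [this]
  · simp [hu]

/-- Exponential bound on the convolved cell. -/
theorem ck_le_exp (x : ℝ) : ck x ≤ (1 / Real.pi) * Real.exp (x / 2) := by
  unfold ck
  rw [Real.cosh_eq]
  have h1 := Real.exp_pos (x/2)
  have h2 := Real.exp_pos (-(x/2))
  have hp := Real.pi_pos
  rw [div_le_iff₀ (by positivity)]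
  have h3 : Real.exp (x/2) * Real.exp (-(x/2)) = 1 := by rw [← Real.exp_add]; simp
  have : 1 / Real.pi * Real.exp (x / 2) * (2 * Real.pi * ((Real.exp (x / 2) + Real.exp (-(x / 2))) / 2))
    = Real.exp (x/2) ^ 2 + Real.exp (x / 2) * Real.exp (-(x / 2)) := by field_simp
  rw [this, h3]; nlinarith

theorem cvr_cell_nonneg (N p q v : ℝ) : 0 ≤ cvr (cell N p q) v :=
  integral_nonneg fun u => mul_nonneg (cell_nonneg _ _ _ _) (ck_pos _).le

theorem cvr_cell_eq {N p q : ℝ} (h1 : al N p ≤ al N q) (v : ℝ) :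
    cvr (cell N p q) v = ∫ u in (al N p)..(al N q), cf N u * ck (v - u) := by
  have := cell_int h1 (fun u => ck (v - u))
  unfold cvr
  simpa only [smul_eq_mul] using this

theorem log_sig_deriv (u : ℝ) : HasDerivAt (fun u => Real.log (Real.sigmoid u)) (1 - Real.sigmoid u) u := by
  have := (Real.hasDerivAt_sigmoid u).log (Real.sigmoid_pos u).ne'
  convert! this using 1
  have := (Real.sigmoid_pos u).ne'
  field_simp

theorem cf_exp (N u : ℝ) : cf N u * Real.exp (-(u/2)) = √N * (1 - Real.sigmoid u) := by
  rw [cf, ← Real.sigmoid_neg, sig_eq, Real.cosh_eq, show Real.exp (-u) = Real.exp (-(u/2)) * Real.exp (-(u/2)) by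
    rw [← Real.exp_add]; ring_nf, Real.exp_neg]
  have := Real.exp_pos (u/2)
  field_simp

theorem cvr_cell_le {N p q : ℝ} (hp : 0 < p) (hpq : p ≤ q) (hN : q < N) (v : ℝ) :
    cvr (cell N p q) v ≤ (1 / Real.pi) * Real.exp (v / 2) * (√N * ((q - p) / p)) := by
  have h1 := al_mono hp hpq hN
  rw [cvr_cell_eq h1]
  have hc1 : Continuous (fun u => cf N u * ck (v - u)) := (cf_cont N).mul (ck_continuous.comp (by fun_prop))
  have hc2 : Continuous (fun u => (1 / Real.pi) * Real.exp (v / 2) * (√N * (1 - Real.sigmoid u))) :=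
    continuous_const.mul (continuous_const.mul (continuous_const.sub sig_cont))
  have h2 : ∫ u in (al N p)..(al N q), cf N u * ck (v - u)
      ≤ ∫ u in (al N p)..(al N q), (1 / Real.pi) * Real.exp (v / 2) * (√N * (1 - Real.sigmoid u)) := by
    refine intervalIntegral.integral_mono_on h1 (hc1.intervalIntegrable _ _) (hc2.intervalIntegrable _ _) fun u _ => ?_
    rw [← cf_exp]
    have := mul_le_mul_of_nonneg_left (ck_le_exp (v - u)) (cf_nonneg N u)
    rw [show (v - u) / 2 = v / 2 + -(u / 2) by ring, Real.exp_add] at this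
    linarith
  refine h2.trans ?_
  have h3 : ∫ u in (al N p)..(al N q), (1 - Real.sigmoid u) = Real.log (q / p) := by
    rw [intervalIntegral.integral_eq_sub_of_hasDerivAt (fun u _ => log_sig_deriv u)
      ((continuous_const.sub sig_cont).intervalIntegrable _ _), sig_al hp (by linarith), sig_al (by linarith) hN,
      ← Real.log_div (by apply ne_of_gt; apply div_pos <;> linarith) (by apply ne_of_gt; apply div_pos <;> linarith)]
    congr 1
    have : N ≠ 0 := by linarith
    field_simp
  rw [intervalIntegral.integral_const_mul, intervalIntegral.integral_const_mul, h3]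
  have h4 : Real.log (q / p) ≤ (q - p) / p := by
    have := Real.log_le_sub_one_of_pos (show 0 < q / p by apply div_pos <;> linarith)
    rw [sub_div, div_self hp.ne']; exact this
  have := Real.pi_pos
  gcongr

theorem al_refl {N p : ℝ} (hp : 0 < p) (hN : p < N) : al N (N - p) = -al N p := by
  unfold al
  rw [sub_sub_cancel, ← Real.log_inv, inv_div]

theorem cvr_cell_refl {N p q : ℝ} (hp : 0 < p) (hpq : p ≤ q) (hN : q < N) (v : ℝ) :
    cvr (cell N (N - q) (N - p)) v = cvr (cell N p q) (-v) := by
  rw [cvr_cell_eq (al_mono hp hpq hN), cvr_cell_eq (al_mono (by linarith) (by linarith) (by linarith)),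
    al_refl hp (by linarith), al_refl (by linarith) hN, ← intervalIntegral.integral_comp_neg]
  refine intervalIntegral.integral_congr fun u _ => ?_
  show cf N (-u) * ck (v - -u) = cf N u * ck (-v - u)
  rw [show v - -u = -(-v - u) by ring, ck_neg, cf, cf, neg_div, Real.cosh_neg]

/-- The map to the distance variable. -/
noncomputable def Rm (N v : ℝ) : ℝ := N / (Real.exp (-v) - 1)

theorem cvr_cell_formula {N p q : ℝ} (hp : 0 < p) (hpq : p ≤ q) (hN : q < N) {v : ℝ} (hv : v < 0) :
    cvr (cell N p q) v = (√N / (2 * Real.sinh (-v / 2))) *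
      ((1 / Real.pi) * (Real.log (q + Rm N v) - Real.log (p + Rm N v))) := by
  have h1 := al_mono hp hpq hN
  have hN0 : 0 < N := by linarith
  have hR : 0 < Rm N v := by
    have : 1 < Real.exp (-v) := Real.one_lt_exp_iff.mpr (by linarith)
    unfold Rm; apply div_pos hN0; linarith
  have hS : 0 < Real.sinh (-v/2) := Real.sinh_pos_iff.mpr (by linarith)
  rw [cvr_cell_eq h1]
  have hd : ∀ u, HasDerivAt (fun u => (√N / (2 * Real.sinh (-v / 2))) *
      ((1 / Real.pi) * Real.log (N * Real.sigmoid u + Rm N v))) (cf N u * ck (v - u)) u := by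
    intro u
    have hs := Real.sigmoid_pos u
    have h2 := ((((Real.hasDerivAt_sigmoid u).const_mul N).add_const (Rm N v)).log
      (by positivity)).const_mul (1 / Real.pi) |>.const_mul (√N / (2 * Real.sinh (-v / 2)))
    convert! h2 using 1
    have hc := Real.cosh_pos (u/2)
    have hc2 := Real.cosh_pos ((v-u)/2)
    have e1 : N * Real.sigmoid u + Rm N v = N * (2 * Real.cosh ((v - u)/2)) / (4 * Real.cosh (u/2) * Real.sinh (-v/2)) := by
      have hx := Real.exp_pos (u/2)
      have hy := Real.exp_pos (-v/2)
      have eu : Real.exp u = Real.exp (u/2) * Real.exp (u/2) := by rw [← Real.exp_add]; ring_nf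
      have ev : Real.exp (-v) = Real.exp (-v/2) * Real.exp (-v/2) := by rw [← Real.exp_add]; ring_nf
      have euv : Real.exp ((v - u)/2) = (Real.exp (u/2))⁻¹ * (Real.exp (-v/2))⁻¹ := by
        rw [← Real.exp_neg, ← Real.exp_neg, ← Real.exp_add]; ring_nf
      have hy1 : 1 < Real.exp (-v/2) := Real.one_lt_exp_iff.mpr (by linarith)
      have hd1 : Real.exp (-v/2) * Real.exp (-v/2) - 1 ≠ 0 := by nlinarith
      rw [Rm, sig_eq, eu, ev, Real.cosh_eq, Real.cosh_eq, Real.sinh_eq, Real.exp_neg, Real.exp_neg, Real.exp_neg, euv]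
      set X := Real.exp (u/2)
      set Y := Real.exp (-v/2)
      have hd2 : Y - Y⁻¹ ≠ 0 := by
        intro h; apply hd1; have : Y * (Y - Y⁻¹) = 0 := by rw [h]; ring
        rw [mul_sub, mul_inv_cancel₀ hy.ne'] at this; exact this
      have hd3 : Y^2 - 1 ≠ 0 := by rw [sq]; exact hd1
      field_simp
      ring
    rw [e1, sig_deriv, sg, cf, ck]
    have := Real.pi_pos
    have hS' := hS.ne'
    generalize Real.sinh (-v/2) = S at hS'
    have hsN := Real.mul_self_sqrt hN0.le
    field_simp
    try ring_nf
  rw [intervalIntegral.integral_eq_sub_of_hasDerivAt (fun u _ => hd u)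
    (Continuous.intervalIntegrable ((cf_cont N).mul (ck_continuous.comp (by fun_prop))) _ _)]
  rw [sig_al hp (by linarith), sig_al (by linarith) hN, mul_div_cancel₀ _ hN0.ne', mul_div_cancel₀ _ hN0.ne']
  ring

end XXAux

namespace XXAux
open MeasureTheory
open scoped FourierTransform SchwartzMap

/-- The model orthonormal family. -/
noncomputable def ph (m : ℕ) (a : Fin m) : ℝ → ℝ := cell ((m:ℝ) + 2) ((a:ℝ) + 1) ((a:ℝ) + 2)

theorem fin_le {m : ℕ} (a : Fin m) : (a:ℝ) + 1 ≤ m := by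
  have := a.2; exact_mod_cast this

theorem rev_cast {m : ℕ} (a : Fin m) : ((Fin.rev a : Fin m) : ℝ) = (m:ℝ) - 1 - a := by
  have := a.2
  rw [Fin.val_rev, Nat.cast_sub (by omega)]; push_cast; ring

theorem ph_ON (m : ℕ) : ON (ph m) := by
  refine ⟨fun a => cell_BI _ _ _, fun a b => ?_⟩
  have ha := fin_le a
  have hb := fin_le b
  have ha0 : (0:ℝ) ≤ a := Nat.cast_nonneg _
  have hb0 : (0:ℝ) ≤ b := Nat.cast_nonneg _
  rcases lt_trichotomy a b with h | h | h
  · rw [if_neg h.ne]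
    have h' : (a:ℝ) + 1 ≤ b := by exact_mod_cast h
    have : ∀ u, ph m a u * ph m b u = 0 := fun u =>
      cell_disj (al_mono (by linarith) (by linarith) (by linarith)) u
    simp [this]
  · subst h
    rw [if_pos rfl]
    have := cell_norm (N := (m:ℝ)+2) (p := (a:ℝ)+1) (q := (a:ℝ)+2) (by linarith) (by linarith) (by linarith)
    unfold ph; rw [this]; ring
  · rw [if_neg h.ne']
    have h' : (b:ℝ) + 1 ≤ a := by exact_mod_cast h
    have : ∀ u, ph m a u * ph m b u = 0 := fun u => by
      rw [mul_comm]
      exact cell_disj (al_mono (by linarith) (by linarith) (by linarith)) u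
    simp [this]

theorem cell_S {N p q : ℝ} (hp : 0 < p) (hpq : p ≤ q) (hN : q < N) :
    (q - p) * √(1 / q + 1 / (N - p)) ≤ ∫ u, cell N p q u := by
  have h1 := al_mono hp hpq hN
  have hN0 : 0 < N := by linarith
  rw [← cell_norm hp hpq hN, ← integral_mul_const]
  refine integral_mono (((cell_BI N p q).mul (cell_BI N p q)).int.mul_const _) (cell_BI N p q).int fun u => ?_
  show cell N p q u * cell N p q u * √(1 / q + 1 / (N - p)) ≤ cell N p q u
  by_cases hu : u ∈ Set.Ioc (al N p) (al N q)
  · have hc : cell N p q u = cf N u := by simp [cell, hu]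
    rw [hc]
    have h0 := cf_nonneg N u
    have hs := Real.sqrt_nonneg (1 / q + 1 / (N - p))
    have key : cf N u * √(1 / q + 1 / (N - p)) ≤ 1 := by
      have hq : 0 < q := by linarith
      have hNp : 0 < N - p := by linarith
      refine (sq_le_one_iff₀ (by positivity)).mp ?_
      rw [mul_pow, Real.sq_sqrt (by positivity), cf_sq hN0.le]
      have g1 := Real.sigmoid_monotone hu.2
      have g2 := Real.sigmoid_monotone hu.1.le
      rw [sig_al (by linarith) (by linarith)] at g1 g2
      rw [le_div_iff₀ hN0] at g1
      rw [div_le_iff₀ hN0] at g2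
      have s0 := Real.sigmoid_pos u
      have s1 := Real.sigmoid_lt_one u
      set s := Real.sigmoid u
      have e1 : s * N * (1 / q) ≤ 1 := by rw [mul_one_div, div_le_one hq]; exact g1
      have e2 : (1 - s) * N * (1 / (N - p)) ≤ 1 := by rw [mul_one_div, div_le_one hNp]; linarith
      nlinarith
    calc cf N u * cf N u * √(1 / q + 1 / (N - p)) = cf N u * (cf N u * √(1 / q + 1 / (N - p))) := by ring
      _ ≤ cf N u * 1 := by gcongr
      _ = _ := by ring
  · simp [cell, hu]

theorem cell_F {N p q : ℝ} (k : ℝ) :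
    (∫ u, cell N p q u) * (1 - (2 * Real.pi * k)^2 * (al N q - al N p)^2 / 2) ≤ ‖Fr (cell N p q) k‖ := by
  set A := al N p with hA
  set Bq := al N q with hB
  have h0 : ‖Fr (cell N p q) k‖ = ‖∫ u, (cell N p q u : ℂ) * ew k (u - A)‖ := by
    have : ∀ u, (cell N p q u : ℂ) * ew k (u - A) = ((cell N p q u : ℂ) * ew k u) * ew k (-A) := by
      intro u
      rw [mul_assoc]; congr 1
      unfold ew; rw [← Complex.exp_add]; congr 1; push_cast; ring
    simp_rw [this]
    rw [integral_mul_const, norm_mul, ew_norm, mul_one, ← Fr_eq]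
  rw [h0]
  refine le_trans ?_ (Complex.re_le_norm _)
  have hbi : Integrable (fun u => (cell N p q u : ℂ) * ew k (u - A)) := by
    refine ((cell_BI N p q).ofReal.int).mul_bdd (c := 1) ?_ ?_
    · exact ((ew_cont k).comp (continuous_id.sub continuous_const)).aestronglyMeasurable
    · exact Filter.Eventually.of_forall fun u => (ew_norm k _).le
  have hre : (∫ u, (cell N p q u : ℂ) * ew k (u - A)).re = ∫ u, ((cell N p q u : ℂ) * ew k (u - A)).re := by
    exact (integral_re hbi).symm
  rw [hre, ← integral_mul_const]
  refine integral_mono ((cell_BI N p q).int.mul_const _) hbi.re fun u => ?_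
  show cell N p q u * _ ≤ ((cell N p q u : ℂ) * ew k (u - A)).re
  rw [Complex.re_ofReal_mul]
  by_cases hu : u ∈ Set.Ioc (al N p) (al N q)
  · refine mul_le_mul_of_nonneg_left ?_ (cell_nonneg _ _ _ _)
    unfold ew
    rw [Complex.exp_ofReal_mul_I_re]
    refine le_trans ?_ (Real.one_sub_sq_div_two_le_cos)
    have h1 : 0 ≤ u - A := by linarith [hu.1]
    have h2 : u - A ≤ Bq - A := by linarith [hu.2]
    have h3 : (u - A)^2 ≤ (Bq - A)^2 := by gcongr
    have h4 : (2 * Real.pi * k)^2 * (u - A)^2 ≤ (2 * Real.pi * k)^2 * (Bq - A)^2 := by gcongr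
    nlinarith
  · simp [cell, hu]

theorem al_diff {N p q : ℝ} (hp : 0 < p) (hpq : p ≤ q) (hN : q < N) :
    al N q - al N p ≤ (q - p) / p + (q - p) / (N - q) := by
  have h1 : 0 < N - q := by linarith
  have h2 : 0 < N - p := by linarith
  have h3 : 0 < q := by linarith
  have e : al N q - al N p = Real.log (q / p) + Real.log ((N - p) / (N - q)) := by
    unfold al
    rw [Real.log_div h3.ne' h1.ne', Real.log_div hp.ne' h2.ne', Real.log_div h3.ne' hp.ne', Real.log_div h2.ne' h1.ne']
    ring
  rw [e]
  have := Real.log_le_sub_one_of_pos (show 0 < q / p by positivity)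
  have := Real.log_le_sub_one_of_pos (show 0 < (N - p) / (N - q) by positivity)
  have e1 : (q - p) / p = q / p - 1 := by field_simp
  have e2 : (q - p) / (N - q) = (N - p) / (N - q) - 1 := by field_simp; ring
  rw [e1, e2]; linarith

theorem ph_F (m : ℕ) (a : Fin m) (k : ℝ) :
    (1 / ((a:ℝ) + 2) + 1 / ((m:ℝ) + 1 - a)) -
      (2 * Real.pi * k)^2 * (1 / ((a:ℝ) + 1) + 1 / ((m:ℝ) - a))^3 ≤ ‖Fr (ph m a) k‖^2 := by
  have ha := fin_le a
  have ha0 : (0:ℝ) ≤ a := Nat.cast_nonneg _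
  have hS := cell_S (N := (m:ℝ)+2) (p := (a:ℝ)+1) (q := (a:ℝ)+2) (by linarith) (by linarith) (by linarith)
  have hF := cell_F (N := (m:ℝ)+2) (p := (a:ℝ)+1) (q := (a:ℝ)+2) k
  have hd := al_diff (N := (m:ℝ)+2) (p := (a:ℝ)+1) (q := (a:ℝ)+2) (by linarith) (by linarith) (by linarith)
  have hm := al_mono (N := (m:ℝ)+2) (p := (a:ℝ)+1) (q := (a:ℝ)+2) (by linarith) (by linarith) (by linarith)
  unfold ph
  rw [show (a:ℝ) + 2 - (a + 1) = 1 by ring, one_mul, show (m:ℝ) + 2 - (a + 1) = m + 1 - a by ring] at hS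
  rw [show (a:ℝ) + 2 - (a + 1) = 1 by ring, show (m:ℝ) + 2 - (a + 2) = m - a by ring] at hd
  set S := ∫ u, cell ((m:ℝ)+2) ((a:ℝ)+1) ((a:ℝ)+2) u
  set d := al ((m:ℝ)+2) ((a:ℝ)+2) - al ((m:ℝ)+2) ((a:ℝ)+1) with hdd
  have hd0 : 0 ≤ d := by rw [hdd]; linarith
  set f := ‖Fr (cell ((m:ℝ)+2) ((a:ℝ)+1) ((a:ℝ)+2)) k‖
  have hf0 : 0 ≤ f := norm_nonneg _
  set t := 1 / ((a:ℝ) + 1) + 1 / ((m:ℝ) - a) with ht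
  set s := 1 / ((a:ℝ) + 2) + 1 / ((m:ℝ) + 1 - a) with hs
  have hma : (0:ℝ) < m - a := by linarith
  have hma1 : (0:ℝ) < m + 1 - a := by linarith
  have hs0 : 0 ≤ s := by positivity
  have hst : s ≤ t := by rw [hs, ht]; gcongr <;> linarith
  have hSs : s ≤ S^2 := by
    have := Real.sqrt_nonneg s
    calc s = √s ^ 2 := (Real.sq_sqrt hs0).symm
      _ ≤ S^2 := by gcongr
  set x := (2 * Real.pi * k)^2 with hx
  have hx0 : 0 ≤ x := sq_nonneg _
  have hdt : d^2 ≤ t^2 := by gcongr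
  have h1 : s - x * t^3 ≤ s * (1 - x * d^2) := by
    have : s * (x * d^2) ≤ t * (x * t^2) := by gcongr
    nlinarith
  refine h1.trans ?_
  have hxd : 0 ≤ x * d^2 := by positivity
  by_cases hc : 1 - x * d^2 ≤ 0
  · have : s * (1 - x * d^2) ≤ 0 := mul_nonpos_of_nonneg_of_nonpos hs0 hc
    nlinarith [sq_nonneg f]
  · push Not at hc
    have hS0 : 0 ≤ S := (Real.sqrt_nonneg s).trans hS
    calc s * (1 - x * d^2) ≤ S^2 * (1 - x * d^2) := by gcongr
      _ ≤ S^2 * (1 - x * d^2 / 2)^2 := by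
        gcongr
        nlinarith [sq_nonneg (x*d^2)]
      _ = (S * (1 - x * d^2 / 2))^2 := by ring
      _ ≤ f^2 := by
        have : 0 ≤ S * (1 - x * d^2 / 2) := mul_nonneg hS0 (by linarith)
        gcongr

/-- The constant controlling the convergent sums. -/
noncomputable def Zc : ℝ := ∑' n : ℕ, 1 / ((n:ℝ) + 1) ^ (9/8 : ℝ)

theorem Zc_sum : Summable fun n : ℕ => 1 / ((n:ℝ) + 1) ^ (9/8 : ℝ) := by
  have h := (Real.summable_one_div_nat_rpow (p := 9/8)).mpr (by norm_num)
  have := (summable_nat_add_iff 1).mpr h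
  simpa using this

theorem Zc_nonneg : 0 ≤ Zc := tsum_nonneg fun n => by positivity

theorem sum_Z (m : ℕ) : ∑ a : Fin m, 1 / ((a:ℝ) + 1) ^ (9/8 : ℝ) ≤ Zc := by
  rw [Fin.sum_univ_eq_sum_range (fun n : ℕ => 1 / ((n:ℝ) + 1) ^ (9/8 : ℝ))]
  exact Zc_sum.sum_le_tsum _ fun n _ => by positivity

theorem sum_Z' (m : ℕ) : ∑ a : Fin m, 1 / ((m:ℝ) - a) ^ (9/8 : ℝ) ≤ Zc := by
  refine le_trans (le_of_eq ?_) (sum_Z m)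
  refine Fintype.sum_equiv Fin.revPerm _ _ fun a => ?_
  rw [Fin.revPerm_apply, rev_cast]; ring_nf

theorem sum_refl (m : ℕ) (f : ℝ → ℝ) : ∑ a : Fin m, f ((m:ℝ) - a) = ∑ a : Fin m, f ((a:ℝ) + 1) := by
  refine Fintype.sum_equiv Fin.revPerm _ _ fun a => ?_
  rw [Fin.revPerm_apply, rev_cast]; ring_nf

theorem rpow_cmp {x s : ℝ} (hx : 1 ≤ x) (hs : 9/8 ≤ s) : 1 / x ^ s ≤ 1 / x ^ (9/8 : ℝ) := by
  have : 0 < x := by linarith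
  have := Real.rpow_pos_of_pos this (9/8)
  gcongr

theorem harm_low (m : ℕ) : Real.log (m + 2) - 1 ≤ ∑ a : Fin m, 1 / ((a:ℝ) + 2) := by
  rw [Fin.sum_univ_eq_sum_range (fun n : ℕ => 1 / ((n:ℝ) + 2))]
  induction m with
  | zero => simp; have := Real.log_two_lt_d9; linarith
  | succ m ih =>
    rw [Finset.sum_range_succ]
    have hm : (0:ℝ) ≤ m := Nat.cast_nonneg _
    have := Real.log_le_sub_one_of_pos (show (0:ℝ) < ((m:ℝ) + 3) / (m + 2) by positivity)
    rw [Real.log_div (by positivity) (by positivity)] at this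
    have e : ((m:ℝ) + 3) / (m + 2) - 1 = 1 / (m + 2) := by field_simp; ring
    rw [e] at this
    push_cast
    rw [show (m:ℝ) + 1 + 2 = m + 3 by ring]
    linarith

theorem ph_sum (m : ℕ) (k : ℝ) :
    2 * Real.log (m + 2) - 2 - (2 * Real.pi * k)^2 * (8 * Zc) ≤ ∑ a, ‖Fr (ph m a) k‖^2 := by
  have h1 := Finset.sum_le_sum fun a (_ : a ∈ Finset.univ) => ph_F m a k
  refine le_trans ?_ h1
  rw [Finset.sum_sub_distrib, Finset.sum_add_distrib, ← Finset.mul_sum]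
  have e1 : ∑ a : Fin m, 1 / ((m:ℝ) + 1 - a) = ∑ a : Fin m, 1 / ((a:ℝ) + 2) := by
    have := sum_refl m (fun x => 1 / (x + 1))
    calc _ = ∑ a : Fin m, 1 / ((m:ℝ) - a + 1) := Finset.sum_congr rfl fun a _ => by ring_nf
      _ = _ := this
      _ = _ := Finset.sum_congr rfl fun a _ => by ring_nf
  rw [e1]
  have h2 := harm_low m
  have h3 : ∑ a : Fin m, (1 / ((a:ℝ) + 1) + 1 / ((m:ℝ) - a))^3 ≤ 8 * Zc := by
    calc _ ≤ ∑ a : Fin m, (4 * (1 / ((a:ℝ) + 1) ^ (9/8 : ℝ)) + 4 * (1 / ((m:ℝ) - a) ^ (9/8 : ℝ))) := by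
          refine Finset.sum_le_sum fun a _ => ?_
          have ha := fin_le a
          have ha0 : (0:ℝ) ≤ a := Nat.cast_nonneg _
          have g1 := rpow_cmp (x := (a:ℝ)+1) (s := 2) (by linarith) (by norm_num)
          have g2 := rpow_cmp (x := (m:ℝ)-a) (s := 2) (by linarith) (by norm_num)
          rw [Real.rpow_two] at g1 g2
          have i1 : 1 / ((a:ℝ)+1) ≤ 1 := by rw [div_le_one] <;> linarith
          have i2 : 1 / ((m:ℝ)-a) ≤ 1 := by rw [div_le_one] <;> linarith
          have j1 : 0 ≤ 1 / ((a:ℝ)+1) := by positivity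
          have j2 : 0 ≤ 1 / ((m:ℝ)-a) := by apply div_nonneg <;> linarith
          rw [← _root_.one_div_pow] at g1 g2
          set X := 1 / ((a:ℝ)+1)
          set Y := 1 / ((m:ℝ)-a)
          have : (X+Y)^3 ≤ 4 * X^2 + 4 * Y^2 := by
            have k1 : (X+Y)^2 ≤ 2*X^2+2*Y^2 := by nlinarith [sq_nonneg (X-Y)]
            have k2 : (X+Y)^2 * (X+Y) ≤ (2*X^2+2*Y^2) * 2 := by
              apply mul_le_mul k1 <;> first | linarith | positivity
            nlinarith
          linarith
      _ ≤ 8 * Zc := by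
          rw [Finset.sum_add_distrib, ← Finset.mul_sum, ← Finset.mul_sum]
          linarith [sum_Z m, sum_Z' m]
  have h4 : (2 * Real.pi * k)^2 * ∑ a : Fin m, (1 / ((a:ℝ) + 1) + 1 / ((m:ℝ) - a))^3 ≤ (2 * Real.pi * k)^2 * (8 * Zc) := by
    gcongr
  linarith

theorem lower_model : ∃ C, 0 ≤ C ∧ ∀ (m : ℕ) (x : Fin m → ℝ) (e : Fin m → Fin m → ℝ), SD (Ga (ph m)) x e →
    (1/6) * Real.log (m + 2) - C ≤ ∑ i, Fn (x i) := by
  set K := ∫ k, k^2 * Ek k with hK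
  have hK0 : 0 ≤ K := integral_nonneg fun k => mul_nonneg (sq_nonneg _) (Ek_nonneg k)
  refine ⟨1/6 + (2*Real.pi)^2 * (8*Zc) * K, by have := Zc_nonneg; positivity, fun m x e hs => ?_⟩
  refine le_trans ?_ (lower_abs (ph_ON m) hs)
  have h1 : ∀ k, (2 * Real.log (m + 2) - 2) * Ek k - (2*Real.pi)^2 * (8*Zc) * (k^2 * Ek k) ≤
      Ek k * ∑ a, ‖Fr (ph m a) k‖^2 := by
    intro k
    have := mul_le_mul_of_nonneg_left (ph_sum m k) (Ek_nonneg k)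
    refine le_trans (le_of_eq ?_) this
    ring
  have hi1 : Integrable fun k => (2 * Real.log (m + 2) - 2) * Ek k := Ek_integrable.const_mul _
  have hi2 : Integrable fun k => (2*Real.pi)^2 * (8*Zc) * (k^2 * Ek k) := Ek_sq_integrable.const_mul _
  have hi3 : Integrable fun k => Ek k * ∑ a, ‖Fr (ph m a) k‖^2 := by
    simp_rw [Finset.mul_sum]
    refine integrable_finsetSum _ fun a _ => ?_
    obtain ⟨M, hM⟩ : ∃ M, ∀ k, ‖Fr (ph m a) k‖ ≤ M := ⟨∫ u, ‖((ph m a u : ℝ) : ℂ)‖, fun k => by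
      rw [Fr_eq]
      refine (norm_integral_le_integral_norm _).trans (le_of_eq ?_)
      congr 1; ext u; rw [norm_mul, ew_norm, mul_one]⟩
    refine Ek_integrable.mul_bdd (c := M^2) ((Fr_cont ((ph_ON m).bi a)).norm.pow 2).aestronglyMeasurable
      (Filter.Eventually.of_forall fun k => ?_)
    rw [norm_pow, norm_norm]
    gcongr
    exact hM k
  have h2 := integral_mono (hi1.sub hi2) hi3 h1
  refine le_trans (le_of_eq ?_) h2
  have h3 : ∫ k, ((2 * Real.log (m + 2) - 2) * Ek k - (2*Real.pi)^2 * (8*Zc) * (k^2 * Ek k))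
    = (2 * Real.log (m + 2) - 2) * (1/12) - (2*Real.pi)^2 * (8*Zc) * K := by
    have := integral_sub hi1 hi2
    rw [this, integral_const_mul, integral_const_mul, Ek_integral]
  simp only [Pi.sub_apply]
  rw [h3]; ring

end XXAux

namespace XXAux
open MeasureTheory
open scoped FourierTransform SchwartzMap

theorem Fn_diag_sum {m : ℕ} {K : ℝ} (hK : 0 ≤ K) (d : Fin m → ℝ) (h0 : ∀ a, 0 ≤ d a)
    (h : ∀ a, d a ≤ K * (1 / ((a:ℝ) + 1) ^ (3/2 : ℝ) + 1 / ((m:ℝ) - a) ^ (3/2 : ℝ))) :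
    ∑ a, Fn (d a) ≤ 8 * K ^ (3/4 : ℝ) * Zc := by
  have hb : ∀ a, Fn (d a) ≤ 4 * K ^ (3/4 : ℝ) * (1 / ((a:ℝ) + 1) ^ (9/8 : ℝ)) +
      4 * K ^ (3/4 : ℝ) * (1 / ((m:ℝ) - a) ^ (9/8 : ℝ)) := by
    intro a
    have ha := fin_le a
    have ha0 : (0:ℝ) ≤ a := Nat.cast_nonneg _
    have hA : (0:ℝ) < a + 1 := by linarith
    have hB : (0:ℝ) < m - a := by linarith
    refine (Fn_rpow (h0 a)).trans ?_
    have h1 : d a ^ (3/4 : ℝ) ≤ (K * (1 / ((a:ℝ) + 1) ^ (3/2 : ℝ) + 1 / ((m:ℝ) - a) ^ (3/2 : ℝ))) ^ (3/4 : ℝ) :=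
      Real.rpow_le_rpow (h0 a) (h a) (by norm_num)
    rw [Real.mul_rpow hK (by positivity)] at h1
    have h2 := Real.rpow_add_le_add_rpow (show (0:ℝ) ≤ 1 / ((a:ℝ) + 1) ^ (3/2 : ℝ) by positivity)
      (show (0:ℝ) ≤ 1 / ((m:ℝ) - a) ^ (3/2 : ℝ) by positivity) (show (0:ℝ) ≤ 3/4 by norm_num) (by norm_num)
    have h3 : ∀ x : ℝ, 0 < x → (1 / x ^ (3/2 : ℝ)) ^ (3/4 : ℝ) = 1 / x ^ (9/8 : ℝ) := by
      intro x hx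
      rw [Real.div_rpow (by norm_num) (by positivity), Real.one_rpow, ← Real.rpow_mul hx.le]; norm_num
    rw [h3 _ hA, h3 _ hB] at h2
    have hK' : 0 ≤ K ^ (3/4 : ℝ) := by positivity
    have h4 := mul_le_mul_of_nonneg_left h2 hK'
    linarith
  refine (Finset.sum_le_sum fun a _ => hb a).trans ?_
  rw [Finset.sum_add_distrib, ← Finset.mul_sum, ← Finset.mul_sum]
  have hK' : 0 ≤ K ^ (3/4 : ℝ) := by positivity
  have h1 := mul_le_mul_of_nonneg_left (sum_Z m) hK'
  have h2 := mul_le_mul_of_nonneg_left (sum_Z' m) hK'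
  linarith

theorem rpow_cmp' {x s : ℝ} (hx : 1 ≤ x) (hs : 3/2 ≤ s) : 1 / x ^ s ≤ 1 / x ^ (3/2 : ℝ) := by
  have : 0 < x := by linarith
  have := Real.rpow_pos_of_pos this (3/2)
  gcongr

theorem cvr_ph_le {m : ℕ} (a : Fin m) (v : ℝ) :
    cvr (ph m a) v ^ 2 ≤ ((m:ℝ) + 2) / Real.pi^2 * (1 / ((a:ℝ) + 1) ^ 2) * Real.exp v := by
  have ha := fin_le a
  have ha0 : (0:ℝ) ≤ a := Nat.cast_nonneg _
  have h := cvr_cell_le (N := (m:ℝ)+2) (p := (a:ℝ)+1) (q := (a:ℝ)+2) (by linarith) (by linarith) (by linarith) v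
  have h0 := cvr_cell_nonneg ((m:ℝ)+2) ((a:ℝ)+1) ((a:ℝ)+2) v
  unfold ph
  refine (pow_le_pow_left₀ h0 h 2).trans (le_of_eq ?_)
  have e : Real.exp v = Real.exp (v/2) ^ 2 := by rw [sq, ← Real.exp_add]; ring_nf
  rw [e]
  have h2 : √((m:ℝ)+2) ^ 2 = m + 2 := Real.sq_sqrt (by positivity)
  rw [show (a:ℝ) + 2 - (a + 1) = 1 by ring]
  have := Real.pi_pos
  calc _ = (√((m:ℝ)+2) ^ 2) / Real.pi^2 * (1 / ((a:ℝ) + 1) ^ 2) * Real.exp (v/2) ^ 2 := by field_simp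
    _ = _ := by rw [h2]

theorem cvr_ph_rev {m : ℕ} (a : Fin m) (v : ℝ) : cvr (ph m a) v = cvr (ph m (Fin.rev a)) (-v) := by
  have ha := fin_le a
  have ha0 : (0:ℝ) ≤ a := Nat.cast_nonneg _
  have h := cvr_cell_refl (N := (m:ℝ)+2) (p := (m:ℝ) - a) (q := (m:ℝ)+1-a) (by linarith) (by linarith) (by linarith) v
  unfold ph
  rw [rev_cast]
  convert! h using 2
  · congr 1 <;> ring
  · congr 1 <;> ring

theorem cvr_ph_le' {m : ℕ} (a : Fin m) (v : ℝ) :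
    cvr (ph m a) v ^ 2 ≤ ((m:ℝ) + 2) / Real.pi^2 * (1 / ((m:ℝ) - a) ^ 2) * Real.exp (-v) := by
  have h := cvr_ph_le (Fin.rev a) (-v)
  rw [cvr_ph_rev, ]
  rw [rev_cast, show (m:ℝ) - 1 - a + 1 = m - a by ring] at h
  exact h

theorem upper_model : ∃ C, 0 ≤ C ∧ ∀ (m : ℕ) (x : Fin m → ℝ) (e : Fin m → Fin m → ℝ), SD (Ga (ph m)) x e →
    ∑ i, Fn (x i) ≤ (1/6) * Real.log (m + 2) + C := by
  obtain ⟨CJ, hCJ0, hCJ⟩ := J_bound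
  have hpi := Real.pi_pos
  have hW := thW_nonneg
  have hZ := Zc_nonneg
  refine ⟨CJ * thB + 8 * (thW / Real.pi^2) ^ (3/4 : ℝ) * Zc, by have := thB_nonneg; positivity, fun m x e hs => ?_⟩
  have hon := ph_ON m
  set L := Real.log ((m:ℝ) + 2) with hL
  have hm0 : (0:ℝ) ≤ m := Nat.cast_nonneg m
  have hL0 : 0 ≤ L := Real.log_nonneg (by linarith)
  have hup := upper_abs hon hs (th_BI hL0) (th_energy hL0).1 (th_energy hL0).2 hCJ0 hCJ
  have hsq := th_sq_integral hL0
  have hx := Ga_pos hon hs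
  set g : Fin m → ℝ → ℝ := fun a => cvr (ph m a) with hg
  have hgb : ∀ a, BI (g a) := fun a => cvr_BI (hon.bi a).int
  set w : ℝ → ℝ := fun u => 1 - th L u ^ 2 with hw
  have hw0 : ∀ u, 0 ≤ w u := fun u => by
    have := th_nonneg hL0 u; have := th_le_one L u; simp only [hw]; nlinarith
  have hw1 : ∀ u, w u ≤ 1 := fun u => by simp only [hw]; nlinarith [sq_nonneg (th L u)]
  have hwc : Continuous w := continuous_const.sub ((th_cont L).pow 2)
  have hwi : ∀ {f : ℝ → ℝ}, Integrable f → Integrable fun u => w u * f u := fun hf => by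
    refine hf.bdd_mul (c := 1) hwc.aestronglyMeasurable (Filter.Eventually.of_forall fun u => ?_)
    rw [Real.norm_eq_abs, abs_of_nonneg (hw0 u)]; exact hw1 u
  have hi : ∀ a b, Integrable (fun u => w u * (g a u * g b u)) := fun a b => hwi ((hgb a).mul (hgb b)).int
  set X := Gr volume w g with hX
  have hq := fun v => (Gr_qf volume w g hi v)
  have hXp : ∀ v, 0 ≤ qf X v := fun v => by
    rw [hX, (hq v).2]; exact integral_nonneg fun u => mul_nonneg (hw0 u) (sq_nonneg _)
  have hGi : ∀ v : Fin m → ℝ, Integrable (fun u => (∑ a, v a * g a u)^2) := fun v => by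
    have := ((comb_BI hgb v).mul (comb_BI hgb v)).int
    simpa only [sq] using this
  have hXle : ∀ v, qf X v ≤ qf (Ga (ph m)) v := fun v => by
    rw [hX, (hq v).2, Ga_qf hon.bi]
    refine integral_mono (hq v).1 (hGi v) fun u => ?_
    show w u * _ ≤ _
    exact mul_le_of_le_one_left (sq_nonneg _) (hw1 u)
  have hkey := trF_diag_key Fn_sup hs (Gr_symm volume w g) hXp hXle
  have hdiag : ∑ a, Fn (X a a) ≤ 8 * (thW / Real.pi^2) ^ (3/4 : ℝ) * Zc := by
    refine Fn_diag_sum (by positivity) _ (fun a => ?_) fun a => ?_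
    · show 0 ≤ ∫ u, w u * (g a u * g a u)
      exact integral_nonneg fun u => mul_nonneg (hw0 u) (mul_self_nonneg _)
    have ha := fin_le a
    have ha0 : (0:ℝ) ≤ a := Nat.cast_nonneg _
    have g1 := rpow_cmp' (x := (a:ℝ)+1) (s := 2) (by linarith) (by norm_num)
    have g2 := rpow_cmp' (x := (m:ℝ)-a) (s := 2) (by linarith) (by norm_num)
    rw [Real.rpow_two] at g1 g2
    set c1 := ((m:ℝ) + 2) / Real.pi^2 * (1 / ((a:ℝ) + 1) ^ 2) with hc1
    set c2 := ((m:ℝ) + 2) / Real.pi^2 * (1 / ((m:ℝ) - a) ^ 2) with hc2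
    have i1 : Integrable fun u => c1 * (2 * (Real.sigmoid (2 * (-u - L)) * Real.exp u)) :=
      ((tail2 L).1.const_mul 2).const_mul c1
    have i2 : Integrable fun u => c2 * (2 * (Real.sigmoid (2 * (u - L)) * Real.exp (-u))) :=
      ((tail1 L).1.const_mul 2).const_mul c2
    have hXa : X a a ≤ ∫ u, (c1 * (2 * (Real.sigmoid (2 * (-u - L)) * Real.exp u)) +
        c2 * (2 * (Real.sigmoid (2 * (u - L)) * Real.exp (-u)))) := by
      refine integral_mono (hi a a) (i1.add i2) fun u => ?_
      show w u * (g a u * g a u) ≤ c1 * (2 * (Real.sigmoid (2 * (-u - L)) * Real.exp u)) +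
        c2 * (2 * (Real.sigmoid (2 * (u - L)) * Real.exp (-u)))
      have k1 := cvr_ph_le a u
      have k2 := cvr_ph_le' a u
      have k3 := th_tail (L := L) u
      have s1 := Real.sigmoid_pos (2 * (-u - L))
      have s2 := Real.sigmoid_pos (2 * (u - L))
      have e1 : g a u * g a u = cvr (ph m a) u ^ 2 := by simp only [hg]; ring
      rw [e1]
      have k4 := mul_le_mul_of_nonneg_right k3 (sq_nonneg (cvr (ph m a) u))
      have k5 := mul_le_mul_of_nonneg_left k1 s1.le
      have k6 := mul_le_mul_of_nonneg_left k2 s2.le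
      simp only [hw]
      linarith
    rw [integral_add i1 i2, integral_const_mul, (tail2 L).2, integral_const_mul, (tail1 L).2,
      Real.exp_neg, hL, Real.exp_log (by linarith)] at hXa
    refine hXa.trans ?_
    have e3 : c1 * (((m:ℝ)+2)⁻¹ * thW) + c2 * (((m:ℝ)+2)⁻¹ * thW)
      = thW / Real.pi^2 * (1 / ((a:ℝ) + 1) ^ 2 + 1 / ((m:ℝ) - a) ^ 2) := by
      rw [hc1, hc2]
      have : (m:ℝ) + 2 ≠ 0 := by linarith
      generalize 1 / ((a:ℝ) + 1) ^ 2 = A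
      generalize 1 / ((m:ℝ) - a) ^ 2 = B
      field_simp
    rw [e3]
    gcongr
  have hsplit : ∀ i, Fn (x i) = Fn (x i) / x i * (∫ u, th L u ^ 2 * (∑ a, e i a * g a u) ^ 2) +
      Fn (x i) / x i * qf X (e i) := by
    intro i
    have h1 : x i = (∫ u, th L u ^ 2 * (∑ a, e i a * g a u) ^ 2) + qf X (e i) := by
      rw [hX, (hq (e i)).2]
      have hi1 : Integrable fun u => th L u ^ 2 * (∑ a, e i a * g a u) ^ 2 := by
        have := (hGi (e i)).sub (hq (e i)).1
        refine this.congr (Filter.Eventually.of_forall fun u => ?_)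
        simp only [hw, Pi.sub_apply]; ring
      rw [← integral_add hi1 (hq (e i)).1, ← hs.eig i, Ga_qf hon.bi]
      congr 1; ext u; simp only [hw, hg]; ring
    rw [← mul_add, ← h1, div_mul_cancel₀ _ (hx i).ne']
  rw [Finset.sum_congr rfl fun i _ => hsplit i, Finset.sum_add_distrib]
  linarith

end XXAux

namespace XXAux
open MeasureTheory
open scoped FourierTransform SchwartzMap

/-- Half line measure. -/
noncomputable def nu : Measure ℝ := volume.restrict (Set.Ioi (0:ℝ))

/-- Dominating density. -/
noncomputable def rho (r : ℝ) : ℝ := 1 / (1 + r) ^ (3/2 : ℝ)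

theorem rho_int : Integrable rho nu := by
  have h := integrableOn_add_rpow_Ioi_of_lt (a := -(3/2 : ℝ)) (c := (0:ℝ)) (m := 1) (by norm_num) (by norm_num)
  refine (integrable_congr ?_).mp h
  refine (ae_restrict_iff' measurableSet_Ioi).mpr (Filter.Eventually.of_forall fun r hr => ?_)
  have hr' : (0:ℝ) < r := hr
  show (r + 1) ^ (-(3/2 : ℝ)) = rho r
  rw [rho, Real.rpow_neg (by linarith), one_div, add_comm]

/-- Mass of the dominating density. -/
noncomputable def rhoI : ℝ := ∫ r, rho r ∂nu

theorem rhoI_nonneg : 0 ≤ rhoI := by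
  refine integral_nonneg_of_ae ((ae_restrict_iff' measurableSet_Ioi).mpr (Filter.Eventually.of_forall fun r hr => ?_))
  have hr' : (0:ℝ) < r := hr
  show 0 ≤ rho r
  unfold rho; positivity

theorem nu_ae {p : ℝ → Prop} (h : ∀ r, 0 < r → p r) : ∀ᵐ r ∂nu, p r :=
  (ae_restrict_iff' measurableSet_Ioi).mpr (Filter.Eventually.of_forall fun r hr => h r hr)

theorem rho_b1 {s r : ℝ} (hs : 1 ≤ s) (hr : 0 < r) :
    (1 / (1 + r)) * (1 / (s + r)) ^ 2 ≤ 1 / s ^ (3/2 : ℝ) * rho r := by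
  unfold rho
  rw [_root_.one_div_pow, one_div_mul_one_div, one_div_mul_one_div]
  have h1 : 0 < s + r := by linarith
  have h2 : 0 < 1 + r := by linarith
  have h3 : 0 < s := by linarith
  apply one_div_le_one_div_of_le (by positivity)
  have e1 : (s + r) ^ 2 = (s + r) ^ (3/2 : ℝ) * (s + r) ^ (1/2 : ℝ) := by
    rw [← Real.rpow_add h1, ← Real.rpow_two]; norm_num
  have e2 : (1 + r) ^ (3/2 : ℝ) = (1 + r) ^ (1/2 : ℝ) * (1 + r) := by
    nth_rw 3 [← Real.rpow_one (1 + r)]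
    rw [← Real.rpow_add h2]; norm_num
  rw [e1, e2]
  have f1 : s ^ (3/2 : ℝ) ≤ (s + r) ^ (3/2 : ℝ) := by gcongr; linarith
  have f2 : (1 + r) ^ (1/2 : ℝ) ≤ (s + r) ^ (1/2 : ℝ) := by gcongr
  calc s ^ (3/2 : ℝ) * ((1 + r) ^ (1/2 : ℝ) * (1 + r)) ≤ (s + r) ^ (3/2 : ℝ) * ((s + r) ^ (1/2 : ℝ) * (1 + r)) := by gcongr
    _ = _ := by ring

theorem rho_b2 {s r : ℝ} (hs : 1 ≤ s) (hr : 0 < r) :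
    (2 + r) * ((1 / (s + r)) ^ 2) ^ 2 ≤ 2 * (1 / s ^ (3/2 : ℝ) * rho r) := by
  have h1 : 0 < s + r := by linarith
  have h2 : 0 < 1 + r := by linarith
  have h3 : 0 < s := by linarith
  have e : (2 + r) * (1 / (s + r)) ^ 2 ≤ 2 * (1 / (1 + r)) := by
    rw [_root_.one_div_pow, mul_one_div, mul_one_div, div_le_div_iff₀ (by positivity) h2]
    nlinarith
  calc (2 + r) * ((1 / (s + r)) ^ 2) ^ 2 = (2 + r) * (1 / (s + r)) ^ 2 * (1 / (s + r)) ^ 2 := by ring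
    _ ≤ 2 * (1 / (1 + r)) * (1 / (s + r)) ^ 2 := by gcongr
    _ ≤ _ := by
      have := rho_b1 hs hr
      linarith

theorem rho_b3 {r : ℝ} (hr : 0 < r) : (1 / (1 + r)) ^ 2 ≤ rho r := by
  have h2 : 0 < 1 + r := by linarith
  unfold rho
  rw [_root_.one_div_pow, ← Real.rpow_two]
  apply one_div_le_one_div_of_le (by positivity)
  apply Real.rpow_le_rpow_of_exponent_le <;> linarith

/-- Domination by the scale `s`. -/
structure Dom {m : ℕ} (s : Fin m → ℝ) (P Q : Fin m → ℝ → ℝ) (K : ℝ) : Prop where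
  one : ∀ a, 1 ≤ s a
  K0 : 0 ≤ K
  mP : ∀ a, Measurable (P a)
  mQ : ∀ a, Measurable (Q a)
  bP : ∀ a r, 0 < r → |P a r| ≤ K * (1 / (s a + r))
  bQ : ∀ a r, 0 < r → |Q a r| ≤ K * (1 / (s a + r))
  bE : ∀ a r, 0 < r → |Q a r - P a r| ≤ K * (1 / (s a + r)) ^ 2

variable {m : ℕ}

theorem Dom.symm {s : Fin m → ℝ} {P Q : Fin m → ℝ → ℝ} {K : ℝ} (h : Dom s P Q K) : Dom s Q P K :=
  ⟨h.one, h.K0, h.mQ, h.mP, h.bQ, h.bP, fun a r hr => by rw [abs_sub_comm]; exact h.bE a r hr⟩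

theorem Dom.intP {s : Fin m → ℝ} {P Q : Fin m → ℝ → ℝ} {K : ℝ} (h : Dom s P Q K) (a b : Fin m) :
    Integrable (fun r => (fun _ : ℝ => (1:ℝ)) r * (P a r * P b r)) nu := by
  refine (rho_int.const_mul (K^2)).mono' ?_ (nu_ae fun r hr => ?_)
  · exact (measurable_const.mul ((h.mP a).mul (h.mP b))).aestronglyMeasurable
  · rw [one_mul, Real.norm_eq_abs, abs_mul]
    have ha := h.one a
    have hb := h.one b
    have hK := h.K0
    have h1 : 1 / (s a + r) ≤ 1 / (1 + r) := by gcongr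
    have h2 : 1 / (s b + r) ≤ 1 / (1 + r) := by gcongr
    calc |P a r| * |P b r| ≤ (K * (1 / (1 + r))) * (K * (1 / (1 + r))) := by
          apply mul_le_mul _ _ (abs_nonneg _) (by positivity)
          · exact (h.bP a r hr).trans (by gcongr)
          · exact (h.bP b r hr).trans (by gcongr)
      _ = K^2 * (1 / (1 + r))^2 := by ring
      _ ≤ K^2 * rho r := by gcongr; exact rho_b3 hr

theorem Dom.intW {s : Fin m → ℝ} {P Q : Fin m → ℝ → ℝ} {K : ℝ} (h : Dom s P Q K) (a b : Fin m) :
    Integrable (fun r => (fun r : ℝ => 1 / (1 + r)) r * (P a r * P b r)) nu := by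
  refine (h.intP a b).mono ?_ (nu_ae fun r hr => ?_)
  · exact ((measurable_const.div (measurable_const.add measurable_id)).mul ((h.mP a).mul (h.mP b))).aestronglyMeasurable
  · simp only [norm_mul]
    gcongr
    rw [Real.norm_eq_abs, norm_one, abs_of_pos (by positivity), div_le_one (by linarith)]
    linarith

theorem Dom.intE {s : Fin m → ℝ} {P Q : Fin m → ℝ → ℝ} {K : ℝ} (h : Dom s P Q K) (a b : Fin m) :
    Integrable (fun r => (fun r : ℝ => 2 + r) r * ((Q a r - P a r) * (Q b r - P b r))) nu := by
  refine (rho_int.const_mul (2*K^2)).mono' ?_ (nu_ae fun r hr => ?_)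
  · exact ((measurable_const.add measurable_id).mul (((h.mQ a).sub (h.mP a)).mul ((h.mQ b).sub (h.mP b)))).aestronglyMeasurable
  · rw [Real.norm_eq_abs, abs_mul, abs_mul, abs_of_pos (by linarith : 0 < 2 + r)]
    have ha := h.one a
    have hb := h.one b
    have hK := h.K0
    have h1 : 1 / (s a + r) ≤ 1 / (1 + r) := by gcongr
    have h2 : 1 / (s b + r) ≤ 1 / (1 + r) := by gcongr
    have ha0 : 0 ≤ 1 / (s a + r) := by apply div_nonneg <;> linarith
    have hb0 : 0 ≤ 1 / (s b + r) := by apply div_nonneg <;> linarith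
    calc (2 + r) * (|Q a r - P a r| * |Q b r - P b r|)
        ≤ (2 + r) * ((K * (1 / (1 + r))^2) * (K * (1 / (1 + r))^2)) := by
          gcongr
          · exact (h.bE a r hr).trans (by gcongr)
          · exact (h.bE b r hr).trans (by gcongr)
      _ = K^2 * ((2 + r) * ((1 / (1 + r))^2)^2) := by ring
      _ ≤ K^2 * (2 * (1 / 1 ^ (3/2:ℝ) * rho r)) := 
          mul_le_mul_of_nonneg_left (rho_b2 le_rfl hr) (sq_nonneg K)
      _ = _ := by rw [Real.one_rpow]; ring

theorem Dom.cmp {s : Fin m → ℝ} {P Q : Fin m → ℝ → ℝ} {K : ℝ} (h : Dom s P Q K) :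
    ∃ D : Matrix (Fin m) (Fin m) ℝ, (∀ a b, D a b = D b a) ∧ (∀ v, 0 ≤ qf D v) ∧
      (∀ v, qf (Gr nu (fun _ => 1) Q) v ≤ qf (Gr nu (fun _ => 1) P) v + qf D v) ∧
      ∀ a, 0 ≤ D a a ∧ D a a ≤ 3 * K^2 * rhoI * (1 / s a ^ (3/2:ℝ)) := by
  set E : Fin m → ℝ → ℝ := fun a r => Q a r - P a r with hE
  have qP := Gr_qf nu (fun _ => 1) P h.intP
  have qQ := Gr_qf nu (fun _ => 1) Q h.symm.intP
  have qW := Gr_qf nu (fun r => 1 / (1 + r)) P h.intW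
  have qE := Gr_qf nu (fun r => 2 + r) E h.intE
  refine ⟨Gr nu (fun r => 1 / (1 + r)) P + Gr nu (fun r => 2 + r) E, fun a b => ?_, fun v => ?_, fun v => ?_, fun a => ?_⟩
  · simp only [Matrix.add_apply]
    rw [Gr_symm _ _ P a b, Gr_symm _ _ E a b]
  · rw [qf_add, (qW v).2, (qE v).2]
    apply add_nonneg
    · exact integral_nonneg_of_ae (nu_ae fun r hr => by
        show 0 ≤ 1 / (1 + r) * (∑ a, v a * P a r) ^ 2
        positivity)
    · exact integral_nonneg_of_ae (nu_ae fun r hr => by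
        show 0 ≤ (2 + r) * (∑ a, v a * E a r) ^ 2
        positivity)
  · rw [qf_add, (qW v).2, (qE v).2, (qP v).2, (qQ v).2, ← integral_add (qW v).1 (qE v).1]
    have hadd : Integrable (fun r => 1 / (1 + r) * (∑ a, v a * P a r) ^ 2 + (2 + r) * (∑ a, v a * E a r) ^ 2) nu :=
      (qW v).1.add (qE v).1
    rw [← integral_add (qP v).1 hadd]
    refine integral_mono_ae (qQ v).1 ((qP v).1.add ((qW v).1.add (qE v).1)) (nu_ae fun r hr => ?_)
    show 1 * (∑ a, v a * Q a r) ^ 2 ≤ 1 * (∑ a, v a * P a r) ^ 2 +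
      (1 / (1 + r) * (∑ a, v a * P a r) ^ 2 + (2 + r) * (∑ a, v a * E a r) ^ 2)
    have e : ∑ a, v a * Q a r = (∑ a, v a * P a r) + ∑ a, v a * E a r := by
      rw [← Finset.sum_add_distrib]
      refine Finset.sum_congr rfl fun a _ => ?_
      simp only [hE]; ring
    rw [e]
    set A := ∑ a, v a * P a r
    set B := ∑ a, v a * E a r
    have h1 : 0 < 1 + r := by linarith
    have h2 : 1 / (1 + r) * A^2 + (1 + r) * B^2 - 2 * A * B = (A - (1 + r) * B)^2 / (1 + r) := by
      field_simp; ring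
    have h3 : 0 ≤ (A - (1 + r) * B)^2 / (1 + r) := by positivity
    nlinarith
  · have ha := h.one a
    have iW := h.intW a a
    have iE := h.intE a a
    have e : (Gr nu (fun r => 1 / (1 + r)) P + Gr nu (fun r => 2 + r) E) a a
      = ∫ r, ((1 / (1 + r)) * (P a r * P a r) + (2 + r) * (E a r * E a r)) ∂nu :=
      (integral_add iW iE).symm
    rw [e]
    constructor
    · exact integral_nonneg_of_ae (nu_ae fun r hr => by
        show 0 ≤ (1 / (1 + r)) * (P a r * P a r) + (2 + r) * (E a r * E a r)
        have := mul_self_nonneg (P a r)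
        have := mul_self_nonneg (E a r)
        positivity)
    · have e2 : 3 * K^2 * rhoI * (1 / s a ^ (3/2:ℝ)) = ∫ r, 3 * K^2 * (1 / s a ^ (3/2:ℝ)) * rho r ∂nu := by
        rw [integral_const_mul, ← rhoI]; ring
      rw [e2]
      refine integral_mono_ae (iW.add iE) (rho_int.const_mul _) (nu_ae fun r hr => ?_)
      show (1 / (1 + r)) * (P a r * P a r) + (2 + r) * (E a r * E a r) ≤ 3 * K^2 * (1 / s a ^ (3/2:ℝ)) * rho r
      have b1 : P a r * P a r ≤ K^2 * (1 / (s a + r))^2 := by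
        have := pow_le_pow_left₀ (abs_nonneg _) (h.bP a r hr) 2
        rw [sq_abs] at this; linarith
      have b2 : E a r * E a r ≤ K^2 * ((1 / (s a + r))^2)^2 := by
        have := pow_le_pow_left₀ (abs_nonneg _) (h.bE a r hr) 2
        rw [sq_abs] at this; simp only [hE]; linarith
      have c1 := mul_le_mul_of_nonneg_left b1 (show 0 ≤ 1 / (1 + r) by positivity)
      have c2 := mul_le_mul_of_nonneg_left b2 (show 0 ≤ 2 + r by positivity)
      have d1 := mul_le_mul_of_nonneg_left (rho_b1 ha hr) (sq_nonneg K)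
      have d2 := mul_le_mul_of_nonneg_left (rho_b2 ha hr) (sq_nonneg K)
      linarith

/-- Two-sided model comparison, one direction. -/
theorem cmp_two {P Q P' Q' : Fin m → ℝ → ℝ} {K : ℝ} (h : Dom (fun a => (a:ℝ) + 1) P Q K)
    (h' : Dom (fun a => (m:ℝ) - a) P' Q' K) {x y : Fin m → ℝ} {e f : Fin m → Fin m → ℝ}
    (hx : SD (Gr nu (fun _ => 1) P + Gr nu (fun _ => 1) P') x e)
    (hy : SD (Gr nu (fun _ => 1) Q + Gr nu (fun _ => 1) Q') y f) :
    ∑ i, Fn (y i) ≤ ∑ i, Fn (x i) + 8 * (3 * K^2 * rhoI) ^ (3/4 : ℝ) * Zc := by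
  have pos : ∀ {s : Fin m → ℝ} {P Q : Fin m → ℝ → ℝ}, Dom s P Q K → ∀ v, 0 ≤ qf (Gr nu (fun _ => 1) P) v := by
    intro s P Q hd v
    rw [(Gr_qf nu (fun _ => 1) P hd.intP v).2]
    exact integral_nonneg fun r => by
      show 0 ≤ 1 * (∑ a, v a * P a r) ^ 2
      positivity
  obtain ⟨D, d1, d2, d3, d4⟩ := h.cmp
  obtain ⟨D', d1', d2', d3', d4'⟩ := h'.cmp
  have hrho := rhoI_nonneg
  have := trF_compare Fn_sup hy (fun v => by rw [qf_add]; exact add_nonneg (pos h.symm v) (pos h'.symm v))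
    hx (fun v => by rw [qf_add]; exact add_nonneg (pos h v) (pos h' v)) (D := D + D')
    (fun a b => by simp only [Matrix.add_apply]; rw [d1 a b, d1' a b])
    (fun v => by rw [qf_add]; exact add_nonneg (d2 v) (d2' v))
    (fun v => by rw [qf_add, qf_add, qf_add]; linarith [d3 v, d3' v])
  refine this.trans ?_
  gcongr
  refine Fn_diag_sum (by positivity) _ (fun a => ?_) fun a => ?_
  · exact add_nonneg (d4 a).1 (d4' a).1
  · rw [Matrix.add_apply, mul_add]
    exact add_le_add (d4 a).2 (d4' a).2

end XXAux

namespace XXAux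
open MeasureTheory
open scoped FourierTransform SchwartzMap

/-- Continuum distance functions. -/
noncomputable def gs (s r : ℝ) : ℝ := (1 / Real.pi) * (Real.log (s + 1 + r) - Real.log (s + r))
/-- Lattice distance functions. -/
noncomputable def hs (θ s r : ℝ) : ℝ := (1 / Real.pi) * (1 / (s - 1 + (⌊r⌋₊ : ℝ) + θ))

theorem gs_meas (s : ℝ) : Measurable (gs s) := by
  unfold gs; fun_prop

theorem hs_meas (θ s : ℝ) : Measurable (hs θ s) := by
  unfold hs
  have h : Measurable fun r : ℝ => (⌊r⌋₊ : ℝ) := measurable_from_nat.comp Nat.measurable_floor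
  fun_prop

theorem log_b {x : ℝ} (hx : 0 < x) : 1 / (x + 1) ≤ Real.log (x + 1) - Real.log x ∧
    Real.log (x + 1) - Real.log x ≤ 1 / x := by
  have h1 : 0 < x + 1 := by linarith
  rw [← Real.log_div h1.ne' hx.ne']
  constructor
  · have := Real.one_sub_inv_le_log_of_pos (show 0 < (x+1)/x by positivity)
    refine le_trans (le_of_eq ?_) this
    field_simp; ring
  · refine (Real.log_le_sub_one_of_pos (show 0 < (x+1)/x by positivity)).trans (le_of_eq ?_)
    field_simp; ring

theorem pi_inv_le : 1 / Real.pi ≤ 1 := by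
  rw [div_le_one Real.pi_pos]; linarith [Real.pi_gt_three]

theorem hg_bounds {θ s r : ℝ} (h1 : 1/2 ≤ θ) (h2 : θ ≤ 3/2) (hs1 : 1 ≤ s) (hr : 0 < r) :
    |hs θ s r| ≤ 7 * (1 / (s + r)) ∧ |gs s r| ≤ 7 * (1 / (s + r)) ∧
    |hs θ s r - gs s r| ≤ 7 * (1 / (s + r)) ^ 2 := by
  have hx : 0 < s + r := by linarith
  obtain ⟨l1, l2⟩ := log_b hx
  have f1 := Nat.floor_le hr.le
  have f2 := Nat.lt_floor_add_one r
  have f0 : (0:ℝ) ≤ (⌊r⌋₊ : ℝ) := Nat.cast_nonneg _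
  have hpi : 0 < 1 / Real.pi := by have := Real.pi_pos; positivity
  have hpi1 := pi_inv_le
  rw [show s + r + 1 = s + 1 + r by ring] at l1 l2
  set l := Real.log (s + 1 + r) - Real.log (s + r) with hl
  set y := s - 1 + (⌊r⌋₊ : ℝ) + θ with hy
  have hy0 : (s + r) / 4 ≤ y := by rw [hy]; linarith
  have hyp : 0 < y := by linarith
  have hX0 : 0 < 1 / (s + r) := by positivity
  have hl0 : 0 ≤ l := le_trans (by apply div_nonneg <;> linarith) l1
  have i1 : 1 / y ≤ 4 * (1 / (s + r)) := by
    rw [mul_one_div, div_le_div_iff₀ hyp hx]; linarith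
  have e1 : hs θ s r = 1 / Real.pi * (1 / y) := rfl
  have e2 : gs s r = 1 / Real.pi * l := rfl
  have hY0 : 0 < 1 / y := by positivity
  have red : ∀ t B : ℝ, 0 ≤ B → |t| ≤ B → |1 / Real.pi * t| ≤ B := fun t B hB h => by
    rw [abs_mul, abs_of_pos hpi]; nlinarith [abs_nonneg t]
  refine ⟨?_, ?_, ?_⟩
  · rw [e1]; apply red _ _ (by positivity); rw [abs_of_pos hY0]; linarith
  · rw [e2]; apply red _ _ (by positivity); rw [abs_of_nonneg hl0]; linarith
  · rw [e1, e2, ← mul_sub]; apply red _ _ (by positivity)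
    have d1 : |1 / y - 1 / (s + r)| ≤ 6 * (1 / (s + r))^2 := by
      have : 1 / y - 1 / (s + r) = (s + r - y) * ((1 / y) * (1 / (s + r))) := by field_simp
      rw [this, abs_mul, abs_of_pos (by positivity : 0 < 1 / y * (1 / (s + r)))]
      have d2 : |s + r - y| ≤ 3/2 := by
        rw [abs_le, hy]; constructor <;> linarith
      calc |s + r - y| * (1 / y * (1 / (s + r))) ≤ 3/2 * (4 * (1 / (s + r)) * (1 / (s + r))) := by gcongr
        _ = _ := by ring
    have d3 : |1 / (s + r) - l| ≤ (1 / (s + r))^2 := by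
      rw [abs_of_nonneg (by linarith)]
      have : 1 / (s + r) - 1 / (s + 1 + r) ≤ (1 / (s + r))^2 := by
        have h3 : 0 < s + 1 + r := by linarith
        have : 1 / (s + r) - 1 / (s + 1 + r) = 1 / (s + r) * (1 / (s + 1 + r)) := by field_simp; ring
        rw [this, sq]
        gcongr
        linarith
      linarith
    calc |1 / y - l| = |(1 / y - 1 / (s + r)) + (1 / (s + r) - l)| := by congr 1; ring
      _ ≤ _ := abs_add_le _ _
      _ ≤ _ := by linarith

theorem dom_hg {m : ℕ} {s : Fin m → ℝ} (hs1 : ∀ a, 1 ≤ s a) {θ : ℝ} (h1 : 1/2 ≤ θ) (h2 : θ ≤ 3/2) :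
    Dom s (fun a => gs (s a)) (fun a => hs θ (s a)) 7 where
  one := hs1
  K0 := by norm_num
  mP a := gs_meas _
  mQ a := hs_meas _ _
  bP a r hr := (hg_bounds h1 h2 (hs1 a) hr).2.1
  bQ a r hr := (hg_bounds h1 h2 (hs1 a) hr).1
  bE a r hr := (hg_bounds h1 h2 (hs1 a) hr).2.2

/-- Change of variables. -/
theorem Rm_cov {N : ℝ} (hN : 0 < N) (f : ℝ → ℝ) :
    ∫ v in Set.Iio (0:ℝ), (N / (4 * Real.sinh (-v/2)^2)) * f (Rm N v) = ∫ r, f r ∂nu := by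
  have hE : ∀ {v : ℝ}, v < 0 → 1 < Real.exp (-v) := fun hv => Real.one_lt_exp_iff.mpr (by linarith)
  have him : Set.image (Rm N) (Set.Iio 0) = Set.Ioi 0 := by
    ext r
    constructor
    · rintro ⟨v, hv, rfl⟩
      have := hE hv
      exact div_pos hN (by linarith)
    · intro hr
      have hr' : 0 < r := hr
      have hq : 0 < N / r := by positivity
      refine ⟨-Real.log (1 + N / r), ?_, ?_⟩
      · have := Real.log_pos (show 1 < 1 + N / r by linarith)
        simp only [Set.mem_Iio]; linarith
      · rw [Rm, neg_neg, Real.exp_log (by linarith)]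
        field_simp
        ring_nf
        try field_simp
  have hinj : Set.InjOn (Rm N) (Set.Iio 0) := by
    intro v hv w hw h
    have h1 := hE hv
    have h2 := hE hw
    unfold Rm at h
    have h3 : Real.exp (-v) - 1 ≠ 0 := by linarith
    have h4 : Real.exp (-w) - 1 ≠ 0 := by linarith
    rw [div_eq_div_iff h3 h4] at h
    have h5 := mul_left_cancel₀ hN.ne' h
    have h6 : Real.exp (-w) = Real.exp (-v) := by linarith
    have := Real.exp_injective h6
    linarith
  have hd : ∀ v ∈ Set.Iio (0:ℝ), HasDerivWithinAt (Rm N) (N / (4 * Real.sinh (-v/2)^2)) (Set.Iio 0) v := by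
    intro v hv
    have h1 := hE hv
    have h2 : HasDerivAt (fun v => Real.exp (-v) - 1) (Real.exp (-v) * -1) v := ((hasDerivAt_neg v).exp).sub_const 1
    have h3 := (hasDerivAt_const v N).div h2 (by linarith)
    refine HasDerivAt.hasDerivWithinAt ?_
    convert! h3 using 1
    have hy : 1 < Real.exp (-v/2) := Real.one_lt_exp_iff.mpr (by have : v < 0 := hv; linarith)
    have ev : Real.exp (-v) = Real.exp (-v/2) * Real.exp (-v/2) := by rw [← Real.exp_add]; ring_nf
    rw [Real.sinh_eq, Real.exp_neg, ev]
    set Y := Real.exp (-v/2)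
    have hd1 : Y * Y - 1 ≠ 0 := by nlinarith
    have hd3 : Y^2 - 1 ≠ 0 := by rw [sq]; exact hd1
    have hY0 : Y ≠ 0 := by linarith
    have e : Y - Y⁻¹ = (Y^2 - 1) / Y := by field_simp
    rw [e, show Y * Y = Y^2 by ring]
    field_simp
    try ring
  have := integral_image_eq_integral_abs_deriv_smul measurableSet_Iio hd hinj f
  rw [him] at this
  rw [nu, this]
  refine setIntegral_congr_fun measurableSet_Iio fun v _ => ?_
  simp only [smul_eq_mul]
  rw [abs_of_nonneg (by positivity)]

theorem Ga_half {m : ℕ} (a b : Fin m) :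
    ∫ v in Set.Iio (0:ℝ), cvr (ph m a) v * cvr (ph m b) v = Gr nu (fun _ => 1) (fun a : Fin m => gs ((a:ℝ)+1)) a b := by
  have hm0 : (0:ℝ) ≤ m := Nat.cast_nonneg m
  have h1 := Rm_cov (N := (m:ℝ) + 2) (by linarith) (fun r => 1 * (gs ((a:ℝ)+1) r * gs ((b:ℝ)+1) r))
  show _ = ∫ r, 1 * (gs ((a:ℝ)+1) r * gs ((b:ℝ)+1) r) ∂nu
  rw [← h1]
  refine setIntegral_congr_fun measurableSet_Iio fun v hv => ?_
  have hv' : v < 0 := hv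
  have key : ∀ c : Fin m, cvr (ph m c) v = (√((m:ℝ)+2) / (2 * Real.sinh (-v / 2))) * gs ((c:ℝ)+1) (Rm ((m:ℝ)+2) v) := by
    intro c
    have hc := fin_le c
    have hc0 : (0:ℝ) ≤ c := Nat.cast_nonneg _
    have := cvr_cell_formula (N := (m:ℝ)+2) (p := (c:ℝ)+1) (q := (c:ℝ)+2) (by linarith) (by linarith) (by linarith) hv'
    unfold ph gs
    rw [this, show (c:ℝ) + 1 + 1 = c + 2 by ring]
  simp only [key]
  have h2 : √((m:ℝ)+2) * √((m:ℝ)+2) = m + 2 := Real.mul_self_sqrt (by linarith)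
  have hS : Real.sinh (-v/2) ≠ 0 := (Real.sinh_pos_iff.mpr (by linarith)).ne'
  calc _ = (√((m:ℝ)+2) * √((m:ℝ)+2)) / (4 * Real.sinh (-v/2)^2) * (1 * (gs ((a:ℝ)+1) (Rm ((m:ℝ)+2) v) * gs ((b:ℝ)+1) (Rm ((m:ℝ)+2) v))) := by
        field_simp; ring
    _ = _ := by rw [h2]

theorem Ga_split (m : ℕ) : Ga (ph m) = Gr nu (fun _ => 1) (fun a : Fin m => gs ((a:ℝ)+1)) +
    Gr nu (fun _ => 1) (fun a : Fin m => gs ((m:ℝ) - a)) := by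
  ext a b
  rw [Matrix.add_apply, ← Ga_half]
  have h2 : Gr nu (fun _ => 1) (fun a : Fin m => gs ((m:ℝ) - a)) a b
    = Gr nu (fun _ => 1) (fun a : Fin m => gs ((a:ℝ)+1)) (Fin.rev a) (Fin.rev b) := by
    simp only [Gr, Matrix.of_apply, rev_cast]
    ring_nf
  rw [h2, ← Ga_half]
  have hi := Ga_int (ph_ON m).bi a b
  simp only [one_mul] at hi
  have h3 : Ga (ph m) a b = ∫ v, cvr (ph m a) v * cvr (ph m b) v := by
    simp [Ga, Gr]
  rw [h3, ← intervalIntegral.integral_Iic_add_Ioi hi.integrableOn hi.integrableOn (b := 0), integral_Iic_eq_integral_Iio]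
  congr 1
  have := integral_comp_neg_Iic (0:ℝ) (fun v => cvr (ph m a) v * cvr (ph m b) v)
  rw [neg_zero] at this
  rw [← this, integral_Iic_eq_integral_Iio]
  refine setIntegral_congr_fun measurableSet_Iio fun v _ => ?_
  show cvr (ph m a) (-v) * cvr (ph m b) (-v) = _
  rw [cvr_ph_rev a, cvr_ph_rev b, neg_neg]

/-- The one-parity lattice model. -/
noncomputable def Ym (m : ℕ) (θ θ' : ℝ) : Matrix (Fin m) (Fin m) ℝ :=
  Gr nu (fun _ => 1) (fun a : Fin m => hs θ ((a:ℝ)+1)) + Gr nu (fun _ => 1) (fun a : Fin m => hs θ' ((m:ℝ) - a))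

theorem Ym_model : ∃ C, 0 ≤ C ∧ ∀ (m : ℕ) (θ θ' : ℝ), 1/2 ≤ θ → θ ≤ 3/2 → 1/2 ≤ θ' → θ' ≤ 3/2 →
    ∀ (x : Fin m → ℝ) (e : Fin m → Fin m → ℝ), SD (Ym m θ θ') x e →
    |∑ i, Fn (x i) - (1/6) * Real.log (m + 2)| ≤ C := by
  obtain ⟨C1, h1, hC1⟩ := lower_model
  obtain ⟨C2, h2, hC2⟩ := upper_model
  set K := 8 * (3 * (7:ℝ)^2 * rhoI) ^ (3/4 : ℝ) * Zc with hKd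
  have hK : 0 ≤ K := by have := Zc_nonneg; have := rhoI_nonneg; positivity
  refine ⟨C1 + C2 + K, by positivity, fun m θ θ' t1 t2 t3 t4 x e hx => ?_⟩
  have hone : ∀ a : Fin m, 1 ≤ (a:ℝ) + 1 := fun a => by have : (0:ℝ) ≤ a := Nat.cast_nonneg _; linarith
  have hone' : ∀ a : Fin m, 1 ≤ (m:ℝ) - a := fun a => by have := fin_le a; linarith
  have d1 := dom_hg hone t1 t2
  have d2 := dom_hg hone' t3 t4
  obtain ⟨y, f, hgs⟩ : ∃ y f, SD (Ga (ph m)) y f := ⟨_, _, exists_SD (Ga (ph m)) (isHerm_of_symm _ (Gr_symm volume (fun _ => 1) (fun a => cvr (ph m a))))⟩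
  have l := hC1 m _ _ hgs
  have u := hC2 m _ _ hgs
  have hgs' := hgs
  rw [Ga_split] at hgs'
  have c1 := cmp_two d1 d2 hgs' hx
  have c2 := cmp_two d1.symm d2.symm hx hgs'
  rw [← hKd] at c1 c2
  rw [abs_le]
  constructor <;> linarith

theorem Ym_nonneg {m : ℕ} {θ θ' : ℝ} (t1 : 1/2 ≤ θ) (t2 : θ ≤ 3/2) (t3 : 1/2 ≤ θ') (t4 : θ' ≤ 3/2) (v : Fin m → ℝ) :
    0 ≤ qf (Ym m θ θ') v := by
  have hone : ∀ a : Fin m, 1 ≤ (a:ℝ) + 1 := fun a => by have : (0:ℝ) ≤ a := Nat.cast_nonneg _; linarith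
  have hone' : ∀ a : Fin m, 1 ≤ (m:ℝ) - a := fun a => by have := fin_le a; linarith
  rw [Ym, qf_add, (Gr_qf nu (fun _ => 1) _ (dom_hg hone t1 t2).symm.intP v).2,
    (Gr_qf nu (fun _ => 1) _ (dom_hg hone' t3 t4).symm.intP v).2]
  apply add_nonneg <;> exact integral_nonneg fun r => mul_nonneg zero_le_one (sq_nonneg _)

end XXAux

namespace XXAux
open MeasureTheory

/-- Half-integer reciprocals. -/
noncomputable def uh (c : ℤ) : ℝ := 1 / ((c:ℝ) + 1/2)

theorem half_ne (c : ℤ) : (c:ℝ) + 1/2 ≠ 0 := by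
  intro h
  have h1 : (2 * (c:ℝ) + 1) = 0 := by linarith
  have h2 : 2 * c + 1 = 0 := by exact_mod_cast h1
  omega

theorem uh_neg (c : ℤ) : uh (-(c + 1)) = - uh c := by
  unfold uh
  have h1 := half_ne c
  have h2 := half_ne (-(c+1))
  push_cast at h2 ⊢
  rw [show (-((c:ℝ) + 1) + 1/2) = -((c:ℝ) + 1/2) by ring, div_neg]

theorem odd_sq : HasSum (fun k : ℕ => uh k ^ 2) (Real.pi ^ 2 / 2) := by
  have h := hasSum_zeta_two
  have he : HasSum (fun k : ℕ => 1 / (((2 * k : ℕ) : ℝ)) ^ 2) (Real.pi ^ 2 / 24) := by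
    have := h.mul_left (1/4)
    convert! this using 1
    · ext k
      push_cast
      rw [mul_pow, one_div_mul_one_div]; norm_num
    · ring
  have hs : Summable (fun k : ℕ => 1 / (((2 * k + 1 : ℕ) : ℝ)) ^ 2) :=
    h.summable.comp_injective (i := fun k : ℕ => 2 * k + 1) (fun a b hab => by simp only at hab; omega)
  have ho := hs.hasSum
  have heo := HasSum.even_add_odd (f := fun n : ℕ => 1 / (n:ℝ) ^ 2) he ho
  have hu := heo.unique h
  have hv : ∑' k : ℕ, 1 / (((2 * k + 1 : ℕ) : ℝ)) ^ 2 = Real.pi ^ 2 / 8 := by linarith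
  rw [hv] at ho
  have := ho.mul_left 4
  convert! this using 1
  · ext k
    unfold uh
    push_cast
    have : (2 * (k:ℝ) + 1) ≠ 0 := by positivity
    have : ((k:ℝ) + 1/2) ≠ 0 := by positivity
    rw [show (2 * (k:ℝ) + 1) = 2 * (k + 1/2) by ring]
    field_simp; norm_num
  · ring

theorem int_sq : HasSum (fun c : ℤ => uh c ^ 2) (Real.pi ^ 2) := by
  have := HasSum.of_nat_of_neg_add_one (f := fun c : ℤ => uh c ^ 2) odd_sq (by
    simp_rw [uh_neg, neg_sq]
    exact odd_sq)
  convert! this using 1; ring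

theorem tel_nat : HasSum (fun k : ℕ => uh ((k:ℤ)) - uh (k + 1)) 2 := by
  have hs : Summable (fun k : ℕ => uh ((k:ℤ)) - uh (k + 1)) := by
    refine Summable.of_nonneg_of_le (fun k => ?_) (fun k => ?_) odd_sq.summable
    · unfold uh; push_cast; rw [sub_nonneg]; gcongr; linarith
    · unfold uh; push_cast
      have h1 : (0:ℝ) < k + 1/2 := by positivity
      have h2 : (0:ℝ) < k + 1 + 1/2 := by positivity
      rw [div_sub_div _ _ h1.ne' h2.ne', div_pow, div_le_div_iff₀ (by positivity) (by positivity)]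
      nlinarith [mul_pos h1 h2, mul_pos h1 h1]
  rw [hs.hasSum_iff_tendsto_nat]
  have e : ∀ n : ℕ, ∑ k ∈ Finset.range n, (uh ((k:ℤ)) - uh (k + 1)) = 2 - uh n := by
    intro n
    have := Finset.sum_range_sub' (fun k : ℕ => uh (k:ℤ)) n
    simp only [Nat.cast_add, Nat.cast_one] at this
    rw [this]; congr 1; simp [uh]
  simp_rw [e]
  have h0 : Filter.Tendsto (fun n : ℕ => uh (n:ℤ)) Filter.atTop (nhds 0) := by
    have := odd_sq.summable.tendsto_atTop_zero
    have h2 := this.sqrt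
    rw [Real.sqrt_zero] at h2
    refine h2.congr fun n => ?_
    apply Real.sqrt_sq
    unfold uh; positivity
  simpa using tendsto_const_nhds.sub h0

theorem tel_one : HasSum (fun c : ℤ => uh (c - 1) - uh c) 0 := by
  have h1 : HasSum (fun k : ℕ => uh ((k:ℤ) - 1) - uh k) (-4 + 2 - 2 + 2) := by
    rw [show (-4 + 2 - 2 + 2 : ℝ) = -4 + 2 by norm_num]
    have h := tel_nat
    have := (hasSum_nat_add_iff' (f := fun k : ℕ => uh ((k:ℤ) - 1) - uh k) 1 (g := -4 + 2)).mp
    apply this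
    simp only [Finset.range_one, Finset.sum_singleton]
    have e : (-4 + 2 - (uh (((0:ℕ):ℤ) - 1) - uh ((0:ℕ):ℤ)) : ℝ) = 2 := by
      unfold uh; norm_num
    rw [e]
    convert! h using 1
    ext k; push_cast; rw [add_sub_cancel_right]
  have h2 : HasSum (fun k : ℕ => uh (-((k:ℤ) + 1) - 1) - uh (-((k:ℤ) + 1))) 2 := by
    convert! tel_nat using 1
    ext k
    rw [show (-((k:ℤ) + 1) - 1) = -((k + 1) + 1) by ring, uh_neg, uh_neg]; ring
  have := HasSum.of_nat_of_neg_add_one (f := fun c : ℤ => uh (c - 1) - uh c) h1 h2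
  convert! this using 1; norm_num

theorem tel_d (d : ℕ) : HasSum (fun c : ℤ => uh (c - d) - uh c) 0 := by
  induction d with
  | zero => simpa using hasSum_zero
  | succ d ih =>
    have h1 : HasSum (fun c : ℤ => uh (c - 1 - d) - uh (c - 1)) 0 :=
      ((Equiv.subRight (1:ℤ)).hasSum_iff (f := fun c : ℤ => uh (c - d) - uh c)).mpr ih
    have := h1.add tel_one
    rw [add_zero] at this
    convert! this using 1
    ext c
    push_cast
    rw [show c - ((d:ℤ) + 1) = c - 1 - d by ring]; ring

theorem orth_nat (d : ℕ) : HasSum (fun c : ℤ => uh (c - d) * uh c) (if d = 0 then Real.pi ^ 2 else 0) := by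
  rcases Nat.eq_zero_or_pos d with h | h
  · subst h; simpa [sq] using int_sq
  · rw [if_neg h.ne']
    have := (tel_d d).mul_left (1 / (d:ℝ))
    rw [mul_zero] at this
    convert! this using 1
    ext c
    have h1 := half_ne c
    have h2 := half_ne (c - d)
    have h3 : (d:ℝ) ≠ 0 := by positivity
    unfold uh
    push_cast at h2 ⊢
    rw [div_sub_div _ _ h2 h1]
    field_simp
    ring

theorem orth_int (a b : ℤ) : HasSum (fun c : ℤ => uh (c - a) * uh (c - b)) (if a = b then Real.pi ^ 2 else 0) := by
  have key : ∀ a b : ℤ, b ≤ a → HasSum (fun c : ℤ => uh (c - a) * uh (c - b)) (if a = b then Real.pi ^ 2 else 0) := by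
    intro a b hab
    obtain ⟨d, hd⟩ := Int.le.dest hab
    have := ((Equiv.subRight b).hasSum_iff (f := fun c : ℤ => uh (c - d) * uh c)).mpr (orth_nat d)
    convert! this using 1
    · ext c
      simp only [Function.comp, Equiv.subRight_apply]
      rw [show c - b - d = c - a by omega]
    · by_cases h : d = 0
      · subst h; simp at hd; simp [hd]
      · rw [if_neg h, if_neg (by omega)]
  rcases le_total b a with h | h
  · exact key a b h
  · have := key b a h
    simp_rw [mul_comm] at this
    convert! this using 2
    exact eq_comm

/-- Sum over the lattice as an integral. -/
theorem floor_int (q : ℕ → ℝ) (hi : Integrable (fun r : ℝ => q ⌊r⌋₊) nu) :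
    HasSum q (∫ r, q ⌊r⌋₊ ∂nu) := by
  have hU : (⋃ n : ℕ, Set.Ico (n:ℝ) (n + 1)) = Set.Ici 0 := by
    ext r
    simp only [Set.mem_iUnion, Set.mem_Ico, Set.mem_Ici]
    constructor
    · rintro ⟨n, h1, _⟩; exact (Nat.cast_nonneg n).trans h1
    · intro h; exact ⟨⌊r⌋₊, Nat.floor_le h, Nat.lt_floor_add_one r⟩
  have hfl : ∀ (n : ℕ) (r : ℝ), r ∈ Set.Ico (n:ℝ) (n + 1) → ⌊r⌋₊ = n := fun n r hr =>
    (Nat.floor_eq_iff ((Nat.cast_nonneg n).trans hr.1)).mpr hr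
  have hd : Pairwise (Function.onFun Disjoint fun n : ℕ => Set.Ico (n:ℝ) (n + 1)) := by
    intro i j hij
    rw [Function.onFun, Set.disjoint_left]
    intro r h1 h2
    exact hij ((hfl i r h1).symm.trans (hfl j r h2))
  have hi' : IntegrableOn (fun r : ℝ => q ⌊r⌋₊) (⋃ n : ℕ, Set.Ico (n:ℝ) (n + 1)) := by
    rw [hU, integrableOn_Ici_iff_integrableOn_Ioi]; exact hi
  have h := hasSum_integral_iUnion (fun n : ℕ => measurableSet_Ico) hd hi'
  rw [hU, integral_Ici_eq_integral_Ioi] at h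
  convert! h using 1
  ext n
  have : ∫ r in Set.Ico (n:ℝ) (n + 1), q ⌊r⌋₊ = ∫ r in Set.Ico (n:ℝ) (n + 1), q n :=
    setIntegral_congr_fun measurableSet_Ico fun r hr => by simp only [hfl n r hr]
  rw [this]
  simp

/-- Entries of the model as finite sums. -/
theorem Ym_entry {m M : ℕ} (τ : ℤ) {θ θ' : ℝ} (hθ : θ = 1 - (τ + 1/2)) (hθ' : θ' = M + (τ + 1/2) + 1 - m)
    (t1 : 1/2 ≤ θ) (t2 : θ ≤ 3/2) (t3 : 1/2 ≤ θ') (t4 : θ' ≤ 3/2) (a b : Fin m) :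
    Ym m θ θ' a b = (if a = b then 1 else 0) -
      ∑ c : Fin M, (1 / Real.pi * uh ((c:ℕ) + τ - (a:ℕ))) * (1 / Real.pi * uh ((c:ℕ) + τ - (b:ℕ))) := by
  have hone : ∀ a : Fin m, 1 ≤ (a:ℝ) + 1 := fun a => by have : (0:ℝ) ≤ a := Nat.cast_nonneg _; linarith
  have hone' : ∀ a : Fin m, 1 ≤ (m:ℝ) - a := fun a => by have := fin_le a; linarith
  have i1 := (dom_hg hone t1 t2).symm.intP a b
  have i2 := (dom_hg hone' t3 t4).symm.intP a b
  set f : ℤ → ℝ := fun c => (1 / Real.pi * uh (c + τ - (a:ℕ))) * (1 / Real.pi * uh (c + τ - (b:ℕ))) with hf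
  have hp : Real.pi ≠ 0 := Real.pi_ne_zero
  have hF : HasSum f (if a = b then 1 else 0) := by
    have h := ((Equiv.addRight τ).hasSum_iff (f := fun c : ℤ => uh (c - (a:ℕ)) * uh (c - (b:ℕ)))).mpr (orth_int (a:ℕ) (b:ℕ))
    have := h.mul_left (1 / Real.pi^2)
    convert! this using 1
    · ext c; simp only [hf, Function.comp, Equiv.coe_addRight]; ring
    · by_cases hab : a = b
      · subst hab; simp [hp]
      · have : ((a:ℕ):ℤ) ≠ (b:ℕ) := by
          intro h; apply hab; apply Fin.ext; exact_mod_cast h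
        rw [if_neg hab, if_neg this]; simp
  have hA : HasSum (fun k : ℕ => f (-((k:ℤ) + 1))) (Gr nu (fun _ => 1) (fun a : Fin m => hs θ ((a:ℝ)+1)) a b) := by
    have h := floor_int (fun k : ℕ => 1 * (1 / Real.pi * (1 / ((a:ℝ) + 1 - 1 + (k:ℝ) + θ)) * (1 / Real.pi * (1 / ((b:ℝ) + 1 - 1 + (k:ℝ) + θ))))) i1
    convert! h using 1
    ext k
    have e : ∀ a : Fin m, uh (-((k:ℤ) + 1) + τ - (a:ℕ)) = -(1 / ((a:ℝ) + 1 - 1 + (k:ℝ) + θ)) := by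
      intro a
      unfold uh
      rw [← div_neg, hθ]; push_cast; congr 1; ring
    simp only [hf, e]; ring
  have hB : HasSum (fun k : ℕ => f ((k + M : ℕ):ℤ)) (Gr nu (fun _ => 1) (fun a : Fin m => hs θ' ((m:ℝ) - a)) a b) := by
    have h := floor_int (fun k : ℕ => 1 * (1 / Real.pi * (1 / ((m:ℝ) - a - 1 + (k:ℝ) + θ')) * (1 / Real.pi * (1 / ((m:ℝ) - b - 1 + (k:ℝ) + θ'))))) i2
    convert! h using 1
    ext k
    have e : ∀ a : Fin m, uh (((k + M : ℕ):ℤ) + τ - (a:ℕ)) = (1 / ((m:ℝ) - a - 1 + (k:ℝ) + θ')) := by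
      intro a
      unfold uh
      rw [hθ']; push_cast; congr 1; ring
    simp only [hf, e]; ring
  have hC := (hasSum_nat_add_iff (f := fun k : ℕ => f (k:ℤ)) M).mp hB
  have hT := (HasSum.of_nat_of_neg_add_one hC hA).unique hF
  have hsum : ∑ c : Fin M, f ((c:ℕ):ℤ) = ∑ k ∈ Finset.range M, f (k:ℤ) :=
    Fin.sum_univ_eq_sum_range (fun k : ℕ => f (k:ℤ)) M
  rw [Ym, Matrix.add_apply]
  rw [← hsum] at hT
  linarith

end XXAux

namespace XXAux
open MeasureTheory

theorem SD.fromBlocks {ι κ : Type*} [Fintype ι] [DecidableEq ι] [Fintype κ] [DecidableEq κ]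
    {A : Matrix ι ι ℝ} {x : ι → ℝ} {e : ι → ι → ℝ} (hA : SD A x e)
    {B : Matrix κ κ ℝ} {y : κ → ℝ} {f : κ → κ → ℝ} (hB : SD B y f) :
    SD (Matrix.fromBlocks A 0 0 B) (Sum.elim x y)
      (Sum.elim (fun i => Sum.elim (e i) (fun _ => 0)) (fun j => Sum.elim (fun _ => 0) (f j))) := by
  refine ⟨?_, ?_, ?_⟩
  · rintro (i | i) (j | j) <;> simp [Fintype.sum_sum_type, hA.orth, hB.orth]
  · rintro (i | i) (j | j) <;> simp [Fintype.sum_sum_type, hA.comp, hB.comp]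
  · rintro (i | i) (j | j) <;> simp [Fintype.sum_sum_type, hA.eq, hB.eq]

theorem SD.reindex_sign {ι κ : Type*} [Fintype ι] [DecidableEq ι] [Fintype κ] [DecidableEq κ]
    {A : Matrix ι ι ℝ} {x : ι → ℝ} {e : ι → ι → ℝ} (hA : SD A x e) (σ : κ ≃ ι) (s : κ → ℝ)
    (hs : ∀ a, s a * s a = 1) :
    SD (Matrix.of fun a b => s a * s b * A (σ a) (σ b)) (fun i => x (σ i))
      (fun i a => s a * e (σ i) (σ a)) := by
  refine ⟨fun i j => ?_, fun a b => ?_, fun a b => ?_⟩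
  · have h1 : ∀ a, s a * e (σ i) (σ a) * (s a * e (σ j) (σ a)) = e (σ i) (σ a) * e (σ j) (σ a) :=
      fun a => by linear_combination (e (σ i) (σ a) * e (σ j) (σ a)) * hs a
    rw [Finset.sum_congr rfl fun a _ => h1 a, Equiv.sum_comp σ (fun a => e (σ i) a * e (σ j) a),
      hA.orth]
    simp
  · have h1 : ∀ i, s a * e (σ i) (σ a) * (s b * e (σ i) (σ b))
        = (s a * s b) * (e (σ i) (σ a) * e (σ i) (σ b)) := fun i => by ring
    rw [Finset.sum_congr rfl fun i _ => h1 i, ← Finset.mul_sum,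
      Equiv.sum_comp σ (fun i => e i (σ a) * e i (σ b)), hA.comp]
    by_cases h : a = b
    · subst h; simp [hs]
    · simp [h]
  · have h1 : ∀ i, x (σ i) * (s a * e (σ i) (σ a) * (s b * e (σ i) (σ b)))
        = (s a * s b) * (x (σ i) * (e (σ i) (σ a) * e (σ i) (σ b))) := fun i => by ring
    rw [Finset.sum_congr rfl fun i _ => h1 i, ← Finset.mul_sum,
      Equiv.sum_comp σ (fun i => x i * (e i (σ a) * e i (σ b))), ← hA.eq]
    rfl

theorem SD.one_sub_sq {ι : Type*} [Fintype ι] [DecidableEq ι]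
    {A : Matrix ι ι ℝ} {x : ι → ℝ} {e : ι → ι → ℝ} (hA : SD A x e) :
    SD (1 - A * A) (fun i => 1 - x i ^ 2) e := by
  refine ⟨hA.orth, hA.comp, fun a b => ?_⟩
  have h1 : ∀ i, (1 - x i ^ 2) * (e i a * e i b) = e i a * e i b - x i ^ 2 * (e i a * e i b) :=
    fun i => by ring
  rw [Finset.sum_congr rfl fun i _ => h1 i, Finset.sum_sub_distrib, hA.comp, Matrix.sub_apply,
    Matrix.one_apply, Matrix.mul_apply]
  congr 1
  have h2 : ∀ c, A a c * A c b = ∑ i, ∑ j, x i * x j * (e i a * e j b) * (e i c * e j c) := fun c => by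
    rw [hA.eq, hA.eq, Finset.sum_mul_sum]
    exact Finset.sum_congr rfl fun i _ => Finset.sum_congr rfl fun j _ => by ring
  rw [Finset.sum_congr rfl fun c _ => h2 c, Finset.sum_comm]
  refine Finset.sum_congr rfl fun i _ => ?_
  rw [Finset.sum_comm]
  have h3 : ∀ j, ∑ c, x i * x j * (e i a * e j b) * (e i c * e j c)
      = x i * x j * (e i a * e j b) * (if i = j then 1 else 0) := fun j => by
    rw [← Finset.mul_sum, hA.orth]
  rw [Finset.sum_congr rfl fun j _ => h3 j]
  simp only [mul_ite, mul_one, mul_zero, Finset.sum_ite_eq, Finset.mem_univ, if_true]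
  ring

theorem T_symm (n : ℕ) (j k : Fin n) : xxToeplitz n j k = xxToeplitz n k j := by
  unfold xxToeplitz
  simp only [Matrix.of_apply]
  by_cases h : j = k
  · subst h; rfl
  · rw [if_neg h, if_neg (Ne.symm h)]
    have h1 : (k:ℝ) - j = -((j:ℝ) - k) := by ring
    rw [h1, mul_neg, neg_div, Real.sin_neg, div_neg]
    ring

theorem T_same {n : ℕ} (j k : Fin n) (d : ℤ) (h : ((j:ℕ):ℤ) - (k:ℕ) = 2 * d) : xxToeplitz n j k = 0 := by
  unfold xxToeplitz
  simp only [Matrix.of_apply]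
  split_ifs
  · rfl
  have h1 : (j:ℝ) - k = 2 * d := by exact_mod_cast h
  rw [h1, show Real.pi * (2 * (d:ℝ)) / 2 = d * Real.pi by ring, Real.sin_int_mul_pi, mul_zero]

theorem T_diff {n : ℕ} (j k : Fin n) (a c : ℕ) (hj : (j:ℕ) = 2 * a) (hk : (k:ℕ) = 2 * c + 1) :
    xxToeplitz n j k = (-1)^a * (-1)^c * (1 / Real.pi * uh (c - a)) := by
  unfold xxToeplitz uh
  simp only [Matrix.of_apply]
  rw [if_neg (by intro h; rw [h] at hj; omega), hj, hk]
  push_cast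
  have h1 : Real.pi * (2 * (a:ℝ) - (2 * c + 1)) / 2 = (a * Real.pi - c * Real.pi) - Real.pi / 2 := by ring
  rw [h1, Real.sin_sub_pi_div_two, Real.cos_sub, Real.cos_nat_mul_pi, Real.cos_nat_mul_pi,
    Real.sin_nat_mul_pi]
  have h2 : (c:ℝ) - a + 1/2 ≠ 0 := by have := half_ne ((c:ℤ) - a); push_cast at this; exact this
  have h3 : 2 * (a:ℝ) - (2 * c + 1) ≠ 0 := fun h => h2 (by linarith)
  have hp := Real.pi_ne_zero
  have h4 : 2 / (Real.pi * (2 * (a:ℝ) - (2 * c + 1))) = - (1 / Real.pi * (1 / ((c:ℝ) - a + 1/2))) := by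
    rw [show 2 * (a:ℝ) - (2 * c + 1) = -2 * ((c:ℝ) - a + 1/2) by ring]
    field_simp
  rw [h4]
  ring

/-- Even/odd splitting of the sites. -/
def splitFun (n : ℕ) : Fin ((n + 1) / 2) ⊕ Fin (n / 2) → Fin n :=
  Sum.elim (fun a => ⟨2 * a, by omega⟩) (fun c => ⟨2 * c + 1, by omega⟩)

theorem splitFun_bij (n : ℕ) : Function.Bijective (splitFun n) := by
  constructor
  · rintro (a | a) (b | b) h <;> simp [splitFun, Fin.ext_iff] at h ⊢ <;> omega
  · intro j
    rcases Nat.even_or_odd' (j:ℕ) with ⟨c, hc | hc⟩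
    · exact ⟨Sum.inl ⟨c, by omega⟩, by simp [splitFun, Fin.ext_iff, hc]⟩
    · exact ⟨Sum.inr ⟨c, by omega⟩, by simp [splitFun, Fin.ext_iff, hc]⟩

/-- Even/odd splitting as an equivalence. -/
noncomputable def sp (n : ℕ) : Fin ((n + 1) / 2) ⊕ Fin (n / 2) ≃ Fin n :=
  Equiv.ofBijective _ (splitFun_bij n)

/-- Signs. -/
def sn (n : ℕ) : Fin ((n + 1) / 2) ⊕ Fin (n / 2) → ℝ :=
  Sum.elim (fun a => (-1)^(a:ℕ)) (fun c => (-1)^(c:ℕ))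

theorem pm (a : ℕ) : (-1:ℝ)^a * (-1)^a = 1 := by rw [← mul_pow]; simp

theorem sn_sq (n : ℕ) (a) : sn n a * sn n a = 1 := by
  rcases a with a | a <;> simp only [sn, Sum.elim_inl, Sum.elim_inr] <;> exact pm _

theorem T_ee {n : ℕ} (a b) : xxToeplitz n (sp n (Sum.inl a)) (sp n (Sum.inl b)) = 0 :=
  T_same _ _ ((a:ℕ) - (b:ℕ)) (by simp [sp, splitFun]; ring)

theorem T_oo {n : ℕ} (a b) : xxToeplitz n (sp n (Sum.inr a)) (sp n (Sum.inr b)) = 0 :=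
  T_same _ _ ((a:ℕ) - (b:ℕ)) (by simp [sp, splitFun]; ring)

theorem T_eo {n : ℕ} (a c) : xxToeplitz n (sp n (Sum.inl a)) (sp n (Sum.inr c)) =
    (-1)^(a:ℕ) * (-1)^(c:ℕ) * (1 / Real.pi * uh ((c:ℕ) - (a:ℕ))) :=
  T_diff _ _ _ _ (by simp [sp, splitFun]) (by simp [sp, splitFun])

theorem T_oe {n : ℕ} (a c) : xxToeplitz n (sp n (Sum.inr c)) (sp n (Sum.inl a)) =
    (-1)^(a:ℕ) * (-1)^(c:ℕ) * (1 / Real.pi * uh ((c:ℕ) - (a:ℕ))) := by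
  rw [T_symm, T_eo]

/-- Even block. -/
noncomputable def Ye (n : ℕ) := Ym ((n+1)/2) (1/2) (((n/2 : ℕ):ℝ) + ((0:ℤ) + 1/2) + 1 - ((n+1)/2 : ℕ))
/-- Odd block. -/
noncomputable def Yo (n : ℕ) := Ym (n/2) (3/2) ((((n+1)/2 : ℕ):ℝ) + ((-1:ℤ) + 1/2) + 1 - (n/2 : ℕ))

theorem par (n : ℕ) : (((n+1)/2 : ℕ):ℝ) = ((n/2 : ℕ):ℝ) ∨ (((n+1)/2 : ℕ):ℝ) = ((n/2 : ℕ):ℝ) + 1 := by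
  have : (n+1)/2 = n/2 ∨ (n+1)/2 = n/2 + 1 := by omega
  exact_mod_cast this

theorem Ye_b (n : ℕ) : 1/2 ≤ (((n/2 : ℕ):ℝ) + ((0:ℤ) + 1/2) + 1 - ((n+1)/2 : ℕ)) ∧
   (((n/2 : ℕ):ℝ) + ((0:ℤ) + 1/2) + 1 - ((n+1)/2 : ℕ)) ≤ 3/2 := by
  push_cast [-Nat.cast_div_charZero]
  rcases par n with h | h <;> constructor <;> linarith

theorem Yo_b (n : ℕ) : 1/2 ≤ ((((n+1)/2 : ℕ):ℝ) + ((-1:ℤ) + 1/2) + 1 - (n/2 : ℕ)) ∧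
   ((((n+1)/2 : ℕ):ℝ) + ((-1:ℤ) + 1/2) + 1 - (n/2 : ℕ)) ≤ 3/2 := by
  push_cast [-Nat.cast_div_charZero]
  rcases par n with h | h <;> constructor <;> linarith

theorem block_eq (n : ℕ) : (Matrix.of fun a b => sn n a * sn n b * (1 - xxToeplitz n * xxToeplitz n) (sp n a) (sp n b))
    = Matrix.fromBlocks (Ye n) 0 0 (Yo n) := by
  have hm : ∀ a b, (xxToeplitz n * xxToeplitz n) (sp n a) (sp n b) =
      ∑ c, xxToeplitz n (sp n a) (sp n c) * xxToeplitz n (sp n c) (sp n b) := fun a b => by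
    rw [Matrix.mul_apply, Equiv.sum_comp (sp n) (fun c => xxToeplitz n (sp n a) c * xxToeplitz n c (sp n b))]
  ext a b
  rw [Matrix.of_apply, Matrix.sub_apply, hm, Fintype.sum_sum_type, Matrix.one_apply]
  rcases a with a | a <;> rcases b with b | b
  · simp only [T_ee, T_eo, T_oe, mul_zero, Finset.sum_const_zero, zero_add, fromBlocks_apply₁₁, sn, Sum.elim_inl,
      EmbeddingLike.apply_eq_iff_eq, Sum.inl.injEq, zero_mul]
    rw [Ye, Ym_entry 0 (by norm_num) rfl (by norm_num) (by norm_num) (Ye_b n).1 (Ye_b n).2, mul_sub, Finset.mul_sum]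
    congr 1
    · by_cases h : a = b
      · subst h; simp [pm]
      · simp [h]
    · refine Finset.sum_congr rfl fun c _ => ?_
      simp only [add_zero]
      linear_combination ((1 / Real.pi * uh ((c:ℕ) - (a:ℕ))) * (1 / Real.pi * uh ((c:ℕ) - (b:ℕ)))) *
        ((-1)^(b:ℕ) * (-1)^(b:ℕ) * ((-1)^(c:ℕ) * (-1)^(c:ℕ)) * pm a + ((-1)^(c:ℕ) * (-1)^(c:ℕ)) * pm b + pm c)
  · simp [T_ee, T_oo]
  · simp [T_ee, T_oo]
  · simp only [T_oo, T_eo, T_oe, mul_zero, Finset.sum_const_zero, add_zero, fromBlocks_apply₂₂, sn, Sum.elim_inr,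
      EmbeddingLike.apply_eq_iff_eq, Sum.inr.injEq, zero_mul]
    rw [Yo, Ym_entry (-1) (by norm_num) rfl (by norm_num) (by norm_num) (Yo_b n).1 (Yo_b n).2, mul_sub, Finset.mul_sum]
    congr 1
    · by_cases h : a = b
      · subst h; simp [pm]
      · simp [h]
    · refine Finset.sum_congr rfl fun c _ => ?_
      have hu : ∀ d : ℕ, uh ((c:ℕ) + (-1) - (d:ℤ)) = - uh ((d:ℤ) - (c:ℕ)) := fun d => by
        rw [← uh_neg]; congr 1; ring
      rw [hu, hu]
      linear_combination ((1 / Real.pi * uh ((a:ℕ) - (c:ℕ))) * (1 / Real.pi * uh ((b:ℕ) - (c:ℕ)))) *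
        ((-1)^(b:ℕ) * (-1)^(b:ℕ) * ((-1)^(c:ℕ) * (-1)^(c:ℕ)) * pm a + ((-1)^(c:ℕ) * (-1)^(c:ℕ)) * pm b + pm c)

theorem Ym_symm (m : ℕ) (θ θ' : ℝ) (a b) : Ym m θ θ' a b = Ym m θ θ' b a := by
  unfold Ym
  rw [Matrix.add_apply, Matrix.add_apply, Gr_symm nu _ _ a b, Gr_symm nu _ _ a b]

theorem Fn_fermi (t : ℝ) : Fn (1 - t ^ 2) = Real.log 2 * fermiEntropy t := by
  rw [Fn_sq, Real.binEntropy, fermiEntropy, Real.logb, Real.logb, Real.log_inv, Real.log_inv,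
    show 1 - (1 - t) / 2 = (1 + t) / 2 by ring]
  have : Real.log 2 ≠ 0 := (Real.log_pos one_lt_two).ne'
  field_simp
  ring

theorem main_sum (n : ℕ) {x : Fin n → ℝ} {e : Fin n → Fin n → ℝ} (h : SD (xxToeplitz n) x e) :
    (∀ i, 0 ≤ 1 - x i ^ 2) ∧ ∃ y f z g, SD (Ye n) y f ∧ SD (Yo n) z g ∧
      ∑ i, Fn (1 - x i ^ 2) = ∑ i, Fn (y i) + ∑ i, Fn (z i) := by
  have hy := exists_SD (Ye n) (isHerm_of_symm _ (Ym_symm _ _ _))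
  have hz := exists_SD (Yo n) (isHerm_of_symm _ (Ym_symm _ _ _))
  have hb := hy.fromBlocks hz
  have hs := h.one_sub_sq.reindex_sign (sp n) (sn n) (sn_sq n)
  rw [block_eq] at hs
  have hy0 := hy.eig_nonneg (Ym_nonneg (by norm_num) (by norm_num) (Ye_b n).1 (Ye_b n).2)
  have hz0 := hz.eig_nonneg (Ym_nonneg (by norm_num) (by norm_num) (Yo_b n).1 (Yo_b n).2)
  have hq : ∀ v, 0 ≤ qf (Matrix.fromBlocks (Ye n) 0 0 (Yo n)) v := fun v => by
    rw [hb.qf_eq]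
    refine Finset.sum_nonneg fun i _ => mul_nonneg ?_ (sq_nonneg _)
    rcases i with i | i
    · exact hy0 i
    · exact hz0 i
  refine ⟨fun i => ?_, _, _, _, _, hy, hz, ?_⟩
  · have := hs.eig_nonneg hq ((sp n).symm i)
    simpa using this
  · have := trF_unique Fn_sup hs hq hb
    rw [Fintype.sum_sum_type (f := fun i => Fn (Sum.elim _ _ i)), Equiv.sum_comp (sp n) (fun i => Fn (1 - x i ^ 2))] at this
    exact this

theorem log_close {M n : ℕ} (hn : 2 ≤ n) (h1 : n ≤ 2 * (M + 2)) (h2 : M + 2 ≤ 2 * n) :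
    |Real.log (M + 2) - Real.log n| ≤ Real.log 2 := by
  have hn0 : (0:ℝ) < n := by exact_mod_cast (by omega : 0 < n)
  have hM : (0:ℝ) < (M:ℝ) + 2 := by positivity
  have h1' : (n:ℝ) ≤ 2 * (M + 2) := by exact_mod_cast h1
  have h2' : (M:ℝ) + 2 ≤ 2 * n := by exact_mod_cast h2
  have a1 := Real.log_le_log hn0 h1'
  have a2 := Real.log_le_log hM h2'
  rw [Real.log_mul (by norm_num) (by positivity)] at a1 a2
  rw [abs_le]; constructor <;> linarith

theorem main_bound : ∃ C : ℝ, 0 < C ∧ ∀ n, 2 ≤ n → ∀ h : (xxToeplitz n).IsHermitian,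
      |(∑ k, fermiEntropy (h.eigenvalues k)) - (1 / 3) * Real.logb 2 n| ≤ C := by
  obtain ⟨C, hC, hm⟩ := Ym_model
  have hl : 0 < Real.log 2 := Real.log_pos one_lt_two
  refine ⟨(2 * C + Real.log 2) / Real.log 2, by positivity, fun n hn h => ?_⟩
  obtain ⟨-, y, f, z, g, hy, hz, hs⟩ := main_sum n (exists_SD _ h)
  have b1 := hm _ _ _ (by norm_num) (by norm_num) (Ye_b n).1 (Ye_b n).2 y f hy
  have b2 := hm _ _ _ (by norm_num) (by norm_num) (Yo_b n).1 (Yo_b n).2 z g hz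
  have c1 := log_close (M := (n+1)/2) hn (by omega) (by omega)
  have c2 := log_close (M := n/2) hn (by omega) (by omega)
  rw [Finset.sum_congr rfl fun i _ => Fn_fermi (h.eigenvalues i), ← Finset.mul_sum] at hs
  rw [le_div_iff₀ hl, ← abs_of_pos hl, ← abs_mul, abs_of_pos hl, sub_mul, mul_comm _ (Real.log 2), hs,
    Real.logb, mul_assoc, div_mul_cancel₀ _ hl.ne']
  rw [abs_le] at *
  constructor <;> linarith [b1.1, b1.2, b2.1, b2.2, c1.1, c1.2, c2.1, c2.2]

end XXAux

/-- **Logarithmic scaling of the block entropy of the critical XX chain (Jin–Korepin).**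
The matrices `T_n` are symmetric, all their eigenvalues lie in `[−1, 1]`, and the block
entropy `S_n = ∑ₖ f(λₖ(T_n))` satisfies `|S_n − (1/3)·log₂ n| ≤ C` for all `n ≥ 2`, i.e.
`S_n = (1/3)·log₂ n + O(1)`. -/
theorem xx_block_entropy_log_scaling :
    (∀ n, (xxToeplitz n).IsHermitian) ∧
    (∀ n (h : (xxToeplitz n).IsHermitian) (k : Fin n),
      h.eigenvalues k ∈ Set.Icc (-1 : ℝ) 1) ∧
    ∃ C : ℝ, 0 < C ∧ ∀ n, 2 ≤ n → ∀ h : (xxToeplitz n).IsHermitian,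
      |(∑ k, fermiEntropy (h.eigenvalues k)) - (1 / 3) * Real.logb 2 n| ≤ C := by
  refine ⟨fun n => XXAux.isHerm_of_symm _ (XXAux.T_symm n), fun n h k => ?_, XXAux.main_bound⟩
  have := (XXAux.main_sum n (XXAux.exists_SD _ h)).1 k
  rw [Set.mem_Icc]
  constructor <;> nlinarith
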